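/- arXiv:2105.14084 — 2 statements merged into one kernel-verified Lean document; each statement's English description precedes it below -/
import Mathlib

section
/- There is a universal constant c > 0 such that the following holds. Let (X, y) be a λ-anisotropic subgaussian sample of size n in dimension d and let (x′, y′) be a λ-anisotropic subgaussian sample of size 1 in dimension d, independent of (X, y). Then for any δ ∈ (0, 1/2), with probability at least 1 − δ, (1/‖λ‖₁) |yᵀ X x′| ≤ c ( √(n log(1/δ) / d₂) + √n · log(1/δ) / d_∞ ). -/
open MeasureTheory ProbabilityTheory Matrix

noncomputable section

/-- `(X, y)` (with underlying matrix `Z` of independent, mean-zero, unit-variance,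
1-subgaussian entries) is a `lam`-anisotropic subgaussian sample: `X = Z diag(lam)^{1/2}`. -/
structure IsAnisoSample {Ω : Type*} [MeasurableSpace Ω] (μ : Measure Ω)
    {n d : ℕ} (lam : Fin d → ℝ)
    (Z X : Ω → Matrix (Fin n) (Fin d) ℝ) (y : Fin n → ℝ) : Prop where
  lam_pos : ∀ j, 0 < lam j
  labels : ∀ i, y i = 1 ∨ y i = -1
  meas : ∀ i j, Measurable fun ω => Z ω i j
  indep : iIndepFun (fun (p : Fin n × Fin d) ω => Z ω p.1 p.2) μ
  mean_zero : ∀ i j, ∫ ω, Z ω i j ∂μ = 0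
  var_one : ∀ i j, ∫ ω, (Z ω i j) ^ 2 ∂μ = 1
  subg_int : ∀ i j (t : ℝ), Integrable (fun ω => Real.exp (t * Z ω i j)) μ
  subg : ∀ i j (t : ℝ), ∫ ω, Real.exp (t * Z ω i j) ∂μ ≤ Real.exp (t ^ 2 / 2)
  X_eq : ∀ ω i j, X ω i j = Real.sqrt (lam j) * Z ω i j

/-- ℓ₂ dimension proxy `d₂ = ‖λ‖₁²/‖λ‖₂²`. -/
def dim2 {d : ℕ} (lam : Fin d → ℝ) : ℝ := (∑ j, lam j) ^ 2 / ∑ j, (lam j) ^ 2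

/-- ℓ∞ dimension proxy `d∞ = ‖λ‖₁/‖λ‖∞`. -/
def dimInf {d : ℕ} (lam : Fin d → ℝ) : ℝ := (∑ j, lam j) / ⨆ j, lam j

/-!
The form `yᵀ X x′ = ∑ j, (∑ i, y i * X i j) * x′ j` is a sum over columns
of independent terms, each a product of two independent sub-Gaussian variables with proxies
`n * lam j` and `lam j`. Conditioning on one factor bounds the moment generating function of such a
product by `𝔼 exp (s * Y ^ 2)`, with `Y` the other factor, so the product is sub-exponential with
variance proxy of order `n * lam j ^ 2` and scale of order `√n * lam j`. In the sum, the variance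
proxies add up to order `n * ‖lam‖₂ ^ 2` while the scale is the largest one, `√n * ‖lam‖_∞`.
Bernstein's tail bound, divided by `‖lam‖₁`, turns the former into `d₂` and the latter into `d_∞`.
-/

open Real
open scoped NNReal ENNReal

section Gaussian

lemma lintegral_exp_mul_gaussianReal (v : ℝ≥0) (t : ℝ) :
    ∫⁻ x, ENNReal.ofReal (exp (t * x)) ∂gaussianReal 0 v =
      ENNReal.ofReal (exp (v * t ^ 2 / 2)) := by
  rw [← ofReal_integral_eq_lintegral_ofReal (integrable_exp_mul_gaussianReal t)
    (ae_of_all _ fun _ ↦ by positivity)]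
  have h_mgf := congrFun (mgf_fun_id_gaussianReal (μ := 0) (v := v)) t
  simp only [mgf, zero_mul, zero_add] at h_mgf
  rw [h_mgf]

lemma lintegral_exp_mul_sq_gaussianReal {v : ℝ≥0} {s : ℝ} (hs : 2 * v * s < 1) :
    ∫⁻ x, ENNReal.ofReal (exp (s * x ^ 2)) ∂gaussianReal 0 v =
      ENNReal.ofReal (√(1 - 2 * v * s))⁻¹ := by
  rcases eq_or_ne v 0 with rfl | hv
  · simp
  have h_rate : 0 < (1 - 2 * v * s) / (2 * v) := div_pos (by linarith) (by positivity)
  have h_density (x : ℝ) : (gaussianPDF 0 v * fun x ↦ ENNReal.ofReal (exp (s * x ^ 2))) x =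
      ENNReal.ofReal ((√(2 * π * v))⁻¹ * exp (-((1 - 2 * v * s) / (2 * v)) * x ^ 2)) := by
    rw [Pi.mul_apply, gaussianPDF, gaussianPDFReal, ← ENNReal.ofReal_mul (by positivity),
      mul_assoc, ← exp_add]
    congr 3
    field_simp
    ring
  rw [gaussianReal_of_var_ne_zero _ hv,
    lintegral_withDensity_eq_lintegral_mul _ (measurable_gaussianPDF _ _) (by fun_prop)]
  simp_rw [h_density]
  rw [← ofReal_integral_eq_lintegral_ofReal ((integrable_exp_neg_mul_sq h_rate).const_mul _)
      (ae_of_all _ fun _ ↦ by positivity),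
    integral_const_mul, integral_gaussian, ← sqrt_inv, ← sqrt_mul (by positivity), ← sqrt_inv]
  congr 2
  field_simp

lemma inv_sqrt_one_sub_le_exp {u : ℝ} (hu : 0 ≤ u) (hu' : u ≤ 1 / 2) :
    (√(1 - u))⁻¹ ≤ exp u := by
  have h_exp : 1 + 2 * u ≤ exp u ^ 2 := by
    rw [← exp_nat_mul, add_comm]
    exact_mod_cast add_one_le_exp (2 * u)
  rw [← sqrt_inv]
  refine sqrt_le_iff.2 ⟨(exp_pos u).le, le_trans ?_ h_exp⟩
  rw [inv_le_iff_one_le_mul₀ (by linarith)]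
  nlinarith

end Gaussian

section Subgaussian

variable {Ω : Type*} {mΩ : MeasurableSpace Ω} {μ : Measure Ω} {X Y : Ω → ℝ} {c : ℝ≥0}

lemma lintegral_exp_mul_le_of_hasSubgaussianMGF (hX : HasSubgaussianMGF X c μ) (t : ℝ) :
    ∫⁻ ω, ENNReal.ofReal (exp (t * X ω)) ∂μ ≤ ENNReal.ofReal (exp (c * t ^ 2 / 2)) := by
  rw [← ofReal_integral_eq_lintegral_ofReal (hX.integrable_exp_mul t)
    (ae_of_all _ fun _ ↦ by positivity)]
  exact ENNReal.ofReal_le_ofReal (hX.mgf_le t)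

-- Gaussian linearization: `exp (s * X ^ 2)` is the moment generating function of `N(0, 2 * s)`
-- at `X`, so after Tonelli only exponentials linear in `X` have to be integrated.
lemma lintegral_exp_mul_sq_le_of_hasSubgaussianMGF [SFinite μ] (hX : HasSubgaussianMGF X c μ)
    {s : ℝ} (hs : 0 ≤ s) (hcs : 2 * c * s < 1) :
    ∫⁻ ω, ENNReal.ofReal (exp (s * X ω ^ 2)) ∂μ ≤ ENNReal.ofReal (√(1 - 2 * c * s))⁻¹ := by
  have hX_meas := hX.aemeasurable
  lift s to ℝ≥0 using hs
  calc ∫⁻ ω, ENNReal.ofReal (exp (s * X ω ^ 2)) ∂μ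
      = ∫⁻ ω, ∫⁻ x, ENNReal.ofReal (exp (X ω * x)) ∂gaussianReal 0 (2 * s) ∂μ := by
        simp_rw [lintegral_exp_mul_gaussianReal]
        congr! 4
        push_cast
        ring
    _ = ∫⁻ x, ∫⁻ ω, ENNReal.ofReal (exp (x * X ω)) ∂μ ∂gaussianReal 0 (2 * s) := by
        simp_rw [mul_comm (X _)]
        refine lintegral_lintegral_swap ?_
        fun_prop
    _ ≤ ∫⁻ x, ENNReal.ofReal (exp (c / 2 * x ^ 2)) ∂gaussianReal 0 (2 * s) := by
        refine lintegral_mono fun x ↦ ?_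
        rw [div_mul_eq_mul_div]
        exact lintegral_exp_mul_le_of_hasSubgaussianMGF hX x
    _ = ENNReal.ofReal (√(1 - 2 * c * s))⁻¹ := by
        have h_eq : 2 * ↑(2 * s) * ((c : ℝ) / 2) = 2 * c * s := by push_cast; ring
        rw [lintegral_exp_mul_sq_gaussianReal (h_eq ▸ hcs), h_eq]

lemma lintegral_exp_mul_mul_le_of_indepFun [IsFiniteMeasure μ] (hX : HasSubgaussianMGF X c μ)
    (hY : AEMeasurable Y μ) (hXY : IndepFun X Y μ) (t : ℝ) :
    ∫⁻ ω, ENNReal.ofReal (exp (t * (X ω * Y ω))) ∂μ ≤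
      ∫⁻ ω, ENNReal.ofReal (exp (c * t ^ 2 / 2 * Y ω ^ 2)) ∂μ := by
  have hX_meas := hX.aemeasurable
  have hX_map := (HasSubgaussianMGF.id_map_iff hX_meas).2 hX
  calc ∫⁻ ω, ENNReal.ofReal (exp (t * (X ω * Y ω))) ∂μ
      = ∫⁻ p, ENNReal.ofReal (exp (t * (p.1 * p.2))) ∂μ.map fun ω ↦ (X ω, Y ω) := by
        rw [lintegral_map' (by fun_prop) (by fun_prop)]
    _ = ∫⁻ y, ∫⁻ x, ENNReal.ofReal (exp (t * y * id x)) ∂μ.map X ∂μ.map Y := by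
        rw [hXY.map_prod_eq_prod_map_map hX_meas hY, lintegral_prod_symm' _ (by fun_prop)]
        simp_rw [id, mul_assoc, mul_comm]
    _ ≤ ∫⁻ y, ENNReal.ofReal (exp (c * (t * y) ^ 2 / 2)) ∂μ.map Y :=
        lintegral_mono fun y ↦ lintegral_exp_mul_le_of_hasSubgaussianMGF hX_map (t * y)
    _ = ∫⁻ ω, ENNReal.ofReal (exp (c * t ^ 2 / 2 * Y ω ^ 2)) ∂μ := by
        rw [lintegral_map' (by fun_prop) hY]
        congr! 4
        ring

lemma hasSubgaussianMGF_sum_mul {ι : Type*} {X : ι → Ω → ℝ} (hX_indep : iIndepFun X μ)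
    {c : ι → ℝ≥0} {s : Finset ι} (hX : ∀ i ∈ s, HasSubgaussianMGF (X i) (c i) μ) (a : ι → ℝ) :
    HasSubgaussianMGF (fun ω ↦ ∑ i ∈ s, a i * X i ω) (∑ i ∈ s, .mk (a i ^ 2) (sq_nonneg _) * c i)
      μ :=
  HasSubgaussianMGF.sum_of_iIndepFun (hX_indep.comp (fun i x ↦ a i * x) fun i ↦ by fun_prop)
    fun i hi ↦ (hX i hi).const_mul (a i)

end Subgaussian

/-- `X` is sub-exponential with variance proxy `v` and scale `b`: its moment generating function
at `t` is at most `exp (v * t ^ 2 / 2)` on the range `|t| ≤ 1 / b`, which is written as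
`|t| * b ≤ 1` so that `b = 0` recovers the sub-Gaussian condition at every `t`. -/
structure HasSubexponentialMGF {Ω : Type*} {mΩ : MeasurableSpace Ω} (X : Ω → ℝ) (v b : ℝ)
    (μ : Measure Ω) : Prop where
  integrable_exp_mul : ∀ t : ℝ, |t| * b ≤ 1 → Integrable (fun ω ↦ exp (t * X ω)) μ
  mgf_le : ∀ t : ℝ, |t| * b ≤ 1 → mgf X μ t ≤ exp (v * t ^ 2 / 2)

namespace HasSubexponentialMGF

variable {Ω : Type*} {mΩ : MeasurableSpace Ω} {μ : Measure Ω} {X Y : Ω → ℝ} {v b : ℝ}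

lemma of_lintegral_le (hX : AEMeasurable X μ)
    (h : ∀ t : ℝ, |t| * b ≤ 1 →
      ∫⁻ ω, ENNReal.ofReal (exp (t * X ω)) ∂μ ≤ ENNReal.ofReal (exp (v * t ^ 2 / 2))) :
    HasSubexponentialMGF X v b μ := by
  have h_int (t : ℝ) (ht : |t| * b ≤ 1) : Integrable (fun ω ↦ exp (t * X ω)) μ := by
    rw [← lintegral_ofReal_ne_top_iff_integrable (by fun_prop) (ae_of_all _ fun _ ↦ by positivity)]
    exact ne_top_of_le_ne_top ENNReal.ofReal_ne_top (h t ht)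
  refine ⟨h_int, fun t ht ↦ ?_⟩
  have h_le := h t ht
  rwa [← ofReal_integral_eq_lintegral_ofReal (h_int t ht) (ae_of_all _ fun _ ↦ by positivity),
    ENNReal.ofReal_le_ofReal_iff (by positivity)] at h_le

lemma mul_of_indepFun [IsFiniteMeasure μ] {c c' : ℝ≥0} (hX : HasSubgaussianMGF X c μ)
    (hY : HasSubgaussianMGF Y c' μ) (hXY : IndepFun X Y μ) (hb_nonneg : 0 ≤ b)
    (hb : 2 * (c * c') ≤ b ^ 2) :
    HasSubexponentialMGF (fun ω ↦ X ω * Y ω) (2 * (c * c')) b μ := by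
  refine of_lintegral_le (hX.aemeasurable.mul hY.aemeasurable) fun t ht ↦ ?_
  have h_range : c * c' * t ^ 2 ≤ 1 / 2 := by
    have h_sq : b ^ 2 * t ^ 2 ≤ 1 := by
      rw [← sq_abs t, ← mul_pow, mul_comm]
      exact pow_le_one₀ (by positivity) ht
    linarith [mul_le_mul_of_nonneg_right hb (sq_nonneg t)]
  have h_eq : 2 * c' * (c * t ^ 2 / 2) = c * c' * t ^ 2 := by ring
  calc ∫⁻ ω, ENNReal.ofReal (exp (t * (X ω * Y ω))) ∂μ
      ≤ ∫⁻ ω, ENNReal.ofReal (exp (c * t ^ 2 / 2 * Y ω ^ 2)) ∂μ :=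
        lintegral_exp_mul_mul_le_of_indepFun hX hY.aemeasurable hXY t
    _ ≤ ENNReal.ofReal (√(1 - c * c' * t ^ 2))⁻¹ := by
        rw [← h_eq]
        exact lintegral_exp_mul_sq_le_of_hasSubgaussianMGF hY (by positivity) (by linarith)
    _ ≤ ENNReal.ofReal (exp (2 * (c * c') * t ^ 2 / 2)) := by
        rw [mul_assoc 2, mul_div_cancel_left₀ _ two_ne_zero]
        exact ENNReal.ofReal_le_ofReal (inv_sqrt_one_sub_le_exp (by positivity) h_range)

lemma neg (hX : HasSubexponentialMGF X v b μ) : HasSubexponentialMGF (-X) v b μ where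
  integrable_exp_mul t ht := by simpa using hX.integrable_exp_mul (-t) (by simpa using ht)
  mgf_le t ht := by simpa [mgf_neg] using hX.mgf_le (-t) (by simpa using ht)

lemma add_of_indepFun {v' : ℝ} (hX : HasSubexponentialMGF X v b μ)
    (hY : HasSubexponentialMGF Y v' b μ) (hXY : IndepFun X Y μ) :
    HasSubexponentialMGF (X + Y) (v + v') b μ where
  integrable_exp_mul t ht :=
    hXY.integrable_exp_mul_add (hX.integrable_exp_mul t ht) (hY.integrable_exp_mul t ht)
  mgf_le t ht := by
    rw [hXY.mgf_add (hX.integrable_exp_mul t ht).1 (hY.integrable_exp_mul t ht).1, add_mul, add_div,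
      exp_add]
    exact mul_le_mul (hX.mgf_le t ht) (hY.mgf_le t ht) mgf_nonneg (exp_pos _).le

lemma sum_of_iIndepFun {ι : Type*} {X : ι → Ω → ℝ} (hX_indep : iIndepFun X μ)
    (hX_meas : ∀ i, AEMeasurable (X i) μ) {v : ι → ℝ} {s : Finset ι}
    (hX : ∀ i ∈ s, HasSubexponentialMGF (X i) (v i) b μ) :
    HasSubexponentialMGF (∑ i ∈ s, X i) (∑ i ∈ s, v i) b μ := by
  have := hX_indep.isProbabilityMeasure
  classical
  induction s using Finset.induction_on with
  | empty => exact ⟨by simp, by simp⟩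
  | insert i s his ih =>
    rw [Finset.sum_insert his, Finset.sum_insert his]
    exact (hX i (Finset.mem_insert_self i s)).add_of_indepFun
      (ih fun j hj ↦ hX j (Finset.mem_insert_of_mem hj))
      (hX_indep.indepFun_finsetSum_of_notMem₀ hX_meas his).symm

lemma measure_ge_le [IsFiniteMeasure μ] (hX : HasSubexponentialMGF X v b μ)
    (hb : 0 < b) {L : ℝ} (hL : 0 < L) :
    μ.real {ω | √(2 * v * L) + 2 * b * L ≤ X ω} ≤ exp (-L) := by
  -- Twice `D` is the claimed quantile, and `t = L / D` keeps both `t * b` and `t * √(v * L / 2)`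
  -- below their budgets `1` and `L`.
  set D := √(v * L / 2) + b * L with hD
  have hD_pos : 0 < D := by positivity
  have h_two_mul_D : √(2 * v * L) + 2 * b * L = 2 * D := by
    rw [hD, mul_add, show 2 * v * L = 2 ^ 2 * (v * L / 2) by ring, sqrt_mul (sq_nonneg 2),
      sqrt_sq zero_le_two]
    ring
  have ht_scale : |L / D| * b ≤ 1 := by
    rw [abs_of_pos (by positivity), div_mul_eq_mul_div, div_le_one hD_pos, hD, mul_comm]
    exact le_add_of_nonneg_left (sqrt_nonneg _)
  have ht_variance : v * (L / D) ^ 2 / 2 ≤ L := by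
    have h_le : v * L / 2 ≤ D ^ 2 :=
      (sqrt_le_left hD_pos.le).1 (le_add_of_nonneg_right (by positivity))
    rw [div_pow, ← mul_div_assoc, div_right_comm, div_le_iff₀ (by positivity)]
    nlinarith
  calc μ.real {ω | √(2 * v * L) + 2 * b * L ≤ X ω}
      ≤ exp (-(L / D) * (2 * D)) * mgf X μ (L / D) := by
        rw [h_two_mul_D]
        exact measure_ge_le_exp_mul_mgf _ (by positivity) (hX.integrable_exp_mul _ ht_scale)
    _ ≤ exp (-(L / D) * (2 * D)) * exp L := by
        gcongr
        exact (hX.mgf_le _ ht_scale).trans (exp_le_exp.2 ht_variance)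
    _ = exp (-L) := by
        rw [← exp_add]
        congr 1
        field_simp
        ring

lemma measure_abs_ge_le [IsFiniteMeasure μ] (hX : HasSubexponentialMGF X v b μ)
    (hb : 0 < b) {L : ℝ} (hL : 0 < L) :
    μ.real {ω | √(2 * v * L) + 2 * b * L ≤ |X ω|} ≤ 2 * exp (-L) := by
  simp_rw [le_abs, Set.ofPred_or, two_mul (exp (-L))]
  exact (measureReal_union_le _ _).trans
    (add_le_add (hX.measure_ge_le hb hL) (hX.neg.measure_ge_le hb hL))

lemma le_measure_abs_le [IsProbabilityMeasure μ] (hX : HasSubexponentialMGF X v b μ)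
    (hb : 0 < b) {δ : ℝ} (hδ : 0 < δ) (hδ' : δ ≤ 1 / 2) :
    ENNReal.ofReal (1 - δ) ≤
      μ {ω | |X ω| ≤ 2 * √(v * log (1 / δ)) + 4 * b * log (1 / δ)} := by
  set L := log (1 / δ) with hL
  have hL_pos : 0 < L := log_pos (by rw [lt_div_iff₀ hδ]; linarith)
  have h_exp : exp (-(2 * L)) = δ ^ 2 := by
    rw [hL, one_div, log_inv, mul_neg, neg_neg, ← Nat.cast_two, exp_nat_mul, exp_log hδ]
  have h_quantile : √(2 * v * (2 * L)) + 2 * b * (2 * L) = 2 * √(v * L) + 4 * b * L := by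
    rw [show 2 * v * (2 * L) = 2 ^ 2 * (v * L) by ring, sqrt_mul (sq_nonneg 2),
      sqrt_sq zero_le_two]
    ring
  set q := 2 * √(v * L) + 4 * b * L
  have h_tail : μ.real {ω | q ≤ |X ω|} ≤ δ := by
    calc μ.real {ω | q ≤ |X ω|} ≤ 2 * exp (-(2 * L)) :=
          h_quantile ▸ hX.measure_abs_ge_le hb (by positivity)
      _ ≤ δ := by rw [h_exp]; nlinarith
  have h_cover : Set.univ ⊆ {ω | |X ω| ≤ q} ∪ {ω | q ≤ |X ω|} := fun ω _ ↦ by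
    simpa using le_total |X ω| q
  have h_one_le : 1 ≤ μ.real {ω | |X ω| ≤ q} + μ.real {ω | q ≤ |X ω|} := by
    rw [← probReal_univ (μ := μ)]
    exact (measureReal_mono h_cover).trans (measureReal_union_le _ _)
  exact ENNReal.ofReal_le_of_le_toReal (by rw [← measureReal_def]; linarith)

end HasSubexponentialMGF

lemma iIndepFun_curry {Ω ι : Type*} {κ : ι → Type*} {mΩ : MeasurableSpace Ω} {μ : Measure Ω}
    [Countable ι] [∀ i, Countable (κ i)] {𝓧 : (i : ι) → κ i → Type*}
    {m𝓧 : ∀ i j, MeasurableSpace (𝓧 i j)} {X : (i : ι) → (j : κ i) → Ω → 𝓧 i j}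
    (hX_meas : ∀ i j, AEMeasurable (X i j) μ)
    (hX_indep : iIndepFun (fun (p : (i : ι) × κ i) ω ↦ X p.1 p.2 ω) μ) :
    iIndepFun (fun i ω j ↦ X i j ω) μ := by
  have := hX_indep.isProbabilityMeasure
  have (i : ι) (j : κ i) : IsProbabilityMeasure (μ.map (X i j)) :=
    Measure.isProbabilityMeasure_map (hX_meas i j)
  have h_row (i : ι) : μ.map (fun ω j ↦ X i j ω) = Measure.infinitePi fun j ↦ μ.map (X i j) :=
    (hX_indep.precomp (sigma_mk_injective (i := i))).map_fun_eq_infinitePi_map₀' (hX_meas i)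
  have h_comp : (fun ω i j ↦ X i j ω) = MeasurableEquiv.piCurry 𝓧 ∘ fun ω p ↦ X p.1 p.2 ω := by
    ext
    simp [Sigma.curry]
  rw [iIndepFun_iff_map_fun_eq_infinitePi_map₀' fun i ↦ aemeasurable_pi_iff.2 (hX_meas i)]
  simp_rw [h_row]
  rw [h_comp, ← AEMeasurable.map_map_of_aemeasurable (by fun_prop)
      (aemeasurable_pi_iff.2 fun p ↦ hX_meas p.1 p.2),
    hX_indep.map_fun_eq_infinitePi_map₀' fun p ↦ hX_meas p.1 p.2]
  exact Measure.infinitePi_map_piCurry fun i j ↦ μ.map (X i j)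

section LeaveOneOut

variable {Ω α ι κ : Type*} {mΩ : MeasurableSpace Ω} {μ : Measure Ω}

lemma hasSubexponentialMGF_sum_mul_mul [Fintype α] {U : ι → Ω → ℝ} (hU_indep : iIndepFun U μ)
    {c : ℝ≥0} (hU : ∀ i, HasSubgaussianMGF (U i) c μ) {r : α → ι} (hr : r.Injective) {k : ι}
    (hk : ∀ i, r i ≠ k) (a : α → ℝ) {b : ℝ} (hb_nonneg : 0 ≤ b)
    (hb : 2 * (∑ i, a i ^ 2) * c ^ 2 ≤ b ^ 2) :
    HasSubexponentialMGF (fun ω ↦ (∑ i, a i * U (r i) ω) * U k ω)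
      (2 * (∑ i, a i ^ 2) * c ^ 2) b μ := by
  classical
  have := hU_indep.isProbabilityMeasure
  have h_sum : HasSubgaussianMGF (fun ω ↦ ∑ i, a i * U (r i) ω)
      (∑ i, .mk (a i ^ 2) (sq_nonneg _) * c) μ :=
    hasSubgaussianMGF_sum_mul (hU_indep.precomp hr) (fun i _ ↦ hU (r i)) a
  have h_disj : Disjoint (Finset.univ.image r) {k} := by simpa using hk
  have h_sum_meas : Measurable fun u : Finset.image r Finset.univ → ℝ ↦
      ∑ i, a i * u ⟨r i, Finset.mem_image_of_mem r (Finset.mem_univ i)⟩ := by fun_prop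
  have h_eval_meas : Measurable fun u : ({k} : Finset ι) → ℝ ↦ u ⟨k, Finset.mem_singleton_self k⟩ :=
    by fun_prop
  have h_indep : IndepFun (fun ω ↦ ∑ i, a i * U (r i) ω) (U k) μ :=
    (hU_indep.indepFun_finset₀ _ _ h_disj fun i ↦ (hU i).aemeasurable).comp h_sum_meas h_eval_meas
  have h_proxy : 2 * (((∑ i, .mk (a i ^ 2) (sq_nonneg _) * c : ℝ≥0) : ℝ) * c) =
      2 * (∑ i, a i ^ 2) * c ^ 2 := by
    simp only [NNReal.coe_sum, NNReal.coe_mul, NNReal.coe_mk, ← Finset.sum_mul]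
    ring
  rw [← h_proxy] at hb ⊢
  exact HasSubexponentialMGF.mul_of_indepFun h_sum (hU k) h_indep hb_nonneg hb

lemma hasSubexponentialMGF_dotProduct_mulVec [Fintype α] [Countable ι] [Fintype κ]
    {W : Ω → Matrix ι κ ℝ} (hW_indep : iIndepFun (fun (p : ι × κ) ω ↦ W ω p.1 p.2) μ)
    {c : κ → ℝ≥0} (hW : ∀ i j, HasSubgaussianMGF (fun ω ↦ W ω i j) (c j) μ)
    {r : α → ι} (hr : r.Injective) {k : ι} (hk : ∀ i, r i ≠ k) (a : α → ℝ) {b : ℝ}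
    (hb_nonneg : 0 ≤ b) (hb : ∀ j, 2 * (∑ i, a i ^ 2) * c j ^ 2 ≤ b ^ 2) :
    HasSubexponentialMGF (fun ω ↦ a ⬝ᵥ ((W ω).submatrix r id *ᵥ W ω k))
      (2 * (∑ i, a i ^ 2) * ∑ j, (c j : ℝ) ^ 2) b μ := by
  have hW_meas (i : ι) (j : κ) : AEMeasurable (fun ω ↦ W ω i j) μ := (hW i j).aemeasurable
  have h_column (j : κ) : iIndepFun (fun i ω ↦ W ω i j) μ :=
    hW_indep.precomp (Prod.mk_left_injective j)
  have h_columns : iIndepFun (fun j ω i ↦ W ω i j) μ :=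
    iIndepFun_curry (fun j i ↦ hW_meas i j)
      (hW_indep.precomp (g := fun p : (_ : κ) × ι ↦ (p.2, p.1))
        (Prod.swap_injective.comp (Equiv.sigmaEquivProd κ ι).injective))
  have h_indep : iIndepFun (fun j ω ↦ (∑ i, a i * W ω (r i) j) * W ω k j) μ :=
    h_columns.comp (fun _ u ↦ (∑ i, a i * u (r i)) * u k) fun _ ↦ by fun_prop
  have h_eq : (fun ω ↦ a ⬝ᵥ ((W ω).submatrix r id *ᵥ W ω k)) =
      ∑ j, fun ω ↦ (∑ i, a i * W ω (r i) j) * W ω k j := by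
    ext ω
    rw [dotProduct_mulVec]
    simp only [Finset.sum_apply, dotProduct, vecMul, submatrix_apply, id]
  rw [h_eq, Finset.mul_sum]
  exact HasSubexponentialMGF.sum_of_iIndepFun h_indep (fun j ↦ by fun_prop) fun j _ ↦
    hasSubexponentialMGF_sum_mul_mul (h_column j) (fun i ↦ hW i j) hr hk a hb_nonneg (hb j)

end LeaveOneOut

section DimensionProxies

variable {d : ℕ} {lam : Fin d → ℝ}

lemma sqrt_div_dim2 (hlam : ∀ j, 0 ≤ lam j) (x : ℝ) :
    √(x / dim2 lam) = (∑ j, lam j)⁻¹ * √(x * ∑ j, lam j ^ 2) := by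
  rw [dim2, div_div_eq_mul_div, sqrt_div' _ (sq_nonneg _),
    sqrt_sq (Finset.sum_nonneg fun j _ ↦ hlam j), div_eq_inv_mul]

lemma div_dimInf (x : ℝ) : x / dimInf lam = (∑ j, lam j)⁻¹ * (x * ⨆ j, lam j) := by
  rw [dimInf, div_div_eq_mul_div, div_eq_inv_mul]

end DimensionProxies

theorem stmt7_general {Ω α ι : Type*} {mΩ : MeasurableSpace Ω} {μ : Measure Ω} [Fintype α]
    [Countable ι] {d : ℕ} {lam : Fin d → ℝ} (hlam : ∀ j, 0 ≤ lam j) (hlam_ne : lam ≠ 0)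
    {W : Ω → Matrix ι (Fin d) ℝ} (hW_indep : iIndepFun (fun (p : ι × Fin d) ω ↦ W ω p.1 p.2) μ)
    (hW : ∀ i j, HasSubgaussianMGF (fun ω ↦ W ω i j) (lam j).toNNReal μ)
    {r : α → ι} (hr : r.Injective) {k : ι} (hk : ∀ i, r i ≠ k) (a : α → ℝ)
    {δ : ℝ} (hδ : 0 < δ) (hδ' : δ ≤ 1 / 2) :
    ENNReal.ofReal (1 - δ) ≤
      μ {ω | (∑ j, lam j)⁻¹ * |a ⬝ᵥ ((W ω).submatrix r id *ᵥ W ω k)| ≤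
        8 * (√((∑ i, a i ^ 2) * log (1 / δ) / dim2 lam) +
          √(∑ i, a i ^ 2) * log (1 / δ) / dimInf lam)} := by
  have := hW_indep.isProbabilityMeasure
  rcases eq_or_ne a 0 with rfl | ha
  · simp [hδ.le]
  set V := ∑ i, a i ^ 2
  set Q := ∑ j, lam j ^ 2
  set M := ⨆ j, lam j
  have hV : 0 < V := by
    obtain ⟨i, hi⟩ := Function.ne_iff.1 ha
    exact Finset.sum_pos' (fun i _ ↦ sq_nonneg (a i)) ⟨i, Finset.mem_univ i, sq_pos_of_ne_zero hi⟩
  have h_le_M (j : Fin d) : lam j ≤ M := le_ciSup (Set.finite_range lam).bddAbove j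
  have hM : 0 < M := by
    obtain ⟨j, hj⟩ := Function.ne_iff.1 hlam_ne
    exact ((hlam j).lt_of_ne' hj).trans_le (h_le_M j)
  have h_scale (j : Fin d) : 2 * V * ((lam j).toNNReal : ℝ) ^ 2 ≤ (2 * √V * M) ^ 2 := by
    rw [coe_toNNReal _ (hlam j), mul_pow, mul_pow, sq_sqrt hV.le]
    have := pow_le_pow_left₀ (hlam j) (h_le_M j) 2
    gcongr
    norm_num
  have h_form := hasSubexponentialMGF_dotProduct_mulVec hW_indep hW hr hk a (by positivity) h_scale
  simp only [coe_toNNReal _ (hlam _)] at h_form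
  have h_sqrt : √(2 * V * Q * log (1 / δ)) ≤ 2 * √(V * log (1 / δ) * Q) := by
    rw [mul_right_comm (2 * V), mul_assoc 2 V, mul_assoc 2, sqrt_mul zero_le_two]
    exact mul_le_mul_of_nonneg_right (sqrt_le_iff.2 (by norm_num)) (sqrt_nonneg _)
  refine (h_form.le_measure_abs_le (by positivity) hδ hδ').trans (measure_mono fun ω hω ↦ ?_)
  rw [Set.mem_ofPred_eq, sqrt_div_dim2 hlam, div_dimInf, ← mul_add, mul_left_comm 8]
  refine mul_le_mul_of_nonneg_left (hω.trans ?_) (inv_nonneg.2 (Finset.sum_nonneg fun j _ ↦ hlam j))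
  linarith [sqrt_nonneg (V * log (1 / δ) * Q)]

namespace IsAnisoSample

variable {Ω : Type*} {mΩ : MeasurableSpace Ω} {μ : Measure Ω} {n d : ℕ} {lam : Fin d → ℝ}
  {Z X : Ω → Matrix (Fin n) (Fin d) ℝ} {y : Fin n → ℝ}

lemma label_sq (h : IsAnisoSample μ lam Z X y) (i : Fin n) : y i ^ 2 = 1 :=
  sq_eq_one_iff.2 (h.labels i)

lemma iIndepFun_entries (h : IsAnisoSample μ lam Z X y) :
    iIndepFun (fun (p : Fin n × Fin d) ω ↦ X ω p.1 p.2) μ := by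
  simp_rw [h.X_eq]
  exact h.indep.comp (fun p z ↦ √(lam p.2) * z) fun p ↦ by fun_prop

lemma hasSubgaussianMGF_entry (h : IsAnisoSample μ lam Z X y) (i : Fin n) (j : Fin d) :
    HasSubgaussianMGF (fun ω ↦ X ω i j) (lam j).toNNReal μ := by
  have hZ : HasSubgaussianMGF (fun ω ↦ Z ω i j) 1 μ :=
    ⟨h.subg_int i j, fun t ↦ by simpa [mgf] using h.subg i j t⟩
  simp_rw [h.X_eq]
  have h_proxy : .mk (√(lam j) ^ 2) (sq_nonneg _) * 1 = (lam j).toNNReal :=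
    NNReal.eq (by simp [(h.lam_pos j).le])
  exact h_proxy ▸ hZ.const_mul (√(lam j))

end IsAnisoSample

/-- Lemma 3 (e2): concentration of the leave-one-out term `‖λ‖₁⁻¹ |yᵀ X x′|`.  The joint
sample of size `n+1` consists of an independent pair of a size-`n` sample `X` (the first `n`
rows) and a size-1 sample `x′` (the last row). -/
theorem stmt7 :
    ∃ c > (0 : ℝ),
      ∀ (Ω : Type*) (_ : MeasurableSpace Ω) (μ : Measure Ω), IsProbabilityMeasure μ →
      ∀ (n d : ℕ), 0 < n → 0 < d →
      ∀ (lam : Fin d → ℝ) (Z W : Ω → Matrix (Fin (n + 1)) (Fin d) ℝ) (y : Fin (n + 1) → ℝ),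
        IsAnisoSample μ lam Z W y →
      ∀ δ : ℝ, 0 < δ → δ < 1 / 2 →
        ENNReal.ofReal (1 - δ) ≤
          μ {ω |
              let X : Matrix (Fin n) (Fin d) ℝ := (W ω).submatrix Fin.castSucc id
              let x' : Fin d → ℝ := W ω (Fin.last n)
              (∑ j, lam j)⁻¹ * |(fun i : Fin n => y i.castSucc) ⬝ᵥ (X *ᵥ x')| ≤
                c * (Real.sqrt (n * Real.log (1 / δ) / dim2 lam) +
                      Real.sqrt n * Real.log (1 / δ) / dimInf lam)} := by
  refine ⟨8, by norm_num, fun Ω _ μ _ n d _ hd lam Z W y h δ hδ hδ' ↦ ?_⟩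
  simpa [h.label_sq] using stmt7_general (fun j ↦ (h.lam_pos j).le)
    (fun h0 ↦ (h.lam_pos ⟨0, hd⟩).ne' (congrFun h0 _)) h.iIndepFun_entries
    h.hasSubgaussianMGF_entry (Fin.castSucc_injective n) Fin.castSucc_ne_last
    (fun i ↦ y i.castSucc) hδ hδ'.le

end
end

section
/- There exist absolute constants C₁, C₂, C₃, C₄ > 0 such that the following holds. Let (X, y) be a λ-anisotropic subgaussian sample of size n in dimension d and let δ ∈ (0, 1/2). If n ≥ C₁ (log(1/δ))², d₂ ≤ C₂ n log n, d_∞ ≥ C₃ n log(1/δ), and d_∞² ≥ C₄ d₂ n, then the probability that support vector proliferation occurs for the ℓ₂-SVM is at most δ. -/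
open MeasureTheory ProbabilityTheory Matrix

noncomputable section

/-- Euclidean norm of a finite real vector. -/
def enorm2 {k : ℕ} (w : Fin k → ℝ) : ℝ := Real.sqrt (∑ j, (w j) ^ 2)

/-- Feasibility for the hard-margin ℓ₂-SVM problem. -/
def SVMfeas {n d : ℕ} (X : Matrix (Fin n) (Fin d) ℝ) (y : Fin n → ℝ) (w : Fin d → ℝ) : Prop :=
  ∀ i, 1 ≤ y i * (X i ⬝ᵥ w)

/-- Feasibility for the interpolation problem. -/
def Interpfeas {n d : ℕ} (X : Matrix (Fin n) (Fin d) ℝ) (y : Fin n → ℝ) (w : Fin d → ℝ) : Prop :=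
  ∀ i, y i * (X i ⬝ᵥ w) = 1

/-- Support vector proliferation: the ℓ₂-SVM problem and the minimum-ℓ₂-norm interpolation
problem have a common minimizer (equivalently, as both minimizers are unique when they exist,
the two problems have the same solution). -/
def SVPholds {n d : ℕ} (X : Matrix (Fin n) (Fin d) ℝ) (y : Fin n → ℝ) : Prop :=
  ∃ w : Fin d → ℝ,
    SVMfeas X y w ∧ (∀ w', SVMfeas X y w' → enorm2 w ≤ enorm2 w') ∧
    Interpfeas X y w ∧ (∀ w', Interpfeas X y w' → enorm2 w ≤ enorm2 w')

/-!
Absorb the labels into the rows of the data. Support vector proliferation then yields a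
nonnegative `β` with `X Xᵀ β = 1`. Set aside a small set `A` of test rows and let `w` be the
minimum-norm interpolant of the remaining training rows, `P` the projection onto their kernel and
`V` the matrix of test rows. Eliminating the training rows gives `V P Vᵀ β = 1 - V w` on `A`, so
on the set `S` of test rows with margin `⟨x, w⟩ ≥ 2` the right-hand side is at most `-1`. The
diagonal of `V P Vᵀ` can only make the left-hand side larger, hence the off-diagonal entries would
have to be very negative. Average over a uniformly random `τ ⊆ A`: for fixed `I ⊆ τ` the sum of
the rows in `I` is independent of the rows outside `τ`, so its pairing with the latter is small,
uniformly in `I` and `τ` by a union bound. Hence `|S|` is small.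

On the other hand, conditionally on the training rows the margins of the test rows are
independent. In the regime `d₂ ≲ n log n` the vector `w` is long and spread out enough that each
margin exceeds `2` with probability at least `n ^ (-1/16)`, up to a constant. So `S` is large,
which is a contradiction.
-/

namespace SVProliferation

open scoped NNReal Real Finset

section ExpSquare

variable {Ω : Type*} [MeasurableSpace Ω] {μ : Measure Ω} {Y : Ω → ℝ} {c : ℝ≥0}

lemma hasSubgaussianMGF_mono {c' : ℝ≥0} (h : HasSubgaussianMGF Y c μ) (hc : c ≤ c') :
    HasSubgaussianMGF Y c' μ :=
  ⟨h.integrable_exp_mul, fun t => (h.mgf_le t).trans (by gcongr)⟩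

lemma lintegral_exp_sq_div_four_gaussianReal_le :
    ∫⁻ g, ENNReal.ofReal (Real.exp (g ^ 2 / 4)) ∂(gaussianReal 0 1) ≤ 2 := by
  have hint : Integrable (fun x : ℝ => Real.exp (-(1 / 4) * x ^ 2)) :=
    integrable_exp_neg_mul_sq (by norm_num)
  have hdensity : ∀ x : ℝ, (gaussianPDF 0 1 * fun g => ENNReal.ofReal (Real.exp (g ^ 2 / 4))) x =
      ENNReal.ofReal ((√(2 * π))⁻¹ * Real.exp (-(1 / 4) * x ^ 2)) := by
    intro x
    simp only [Pi.mul_apply, gaussianPDF, gaussianPDFReal]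
    rw [← ENNReal.ofReal_mul (by positivity), mul_assoc, ← Real.exp_add]
    congr 2
    · simp
    · congr 1; simp; ring
  have hconst : (√(2 * π))⁻¹ * √(π / (1 / 4)) ≤ 2 := by
    rw [show π / (1 / 4) = 2 ^ 2 * π by ring, Real.sqrt_mul (x := 2 ^ 2) (by norm_num),
      Real.sqrt_sq zero_le_two, inv_mul_le_iff₀ (by positivity), mul_comm]
    gcongr
    linarith [Real.pi_pos]
  rw [gaussianReal_of_var_ne_zero _ one_ne_zero,
    lintegral_withDensity_eq_lintegral_mul _ (measurable_gaussianPDF 0 1) (by fun_prop)]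
  simp_rw [hdensity]
  rw [← ofReal_integral_eq_lintegral_ofReal (hint.const_mul _)
    (.of_forall fun x => by positivity), integral_const_mul, integral_gaussian]
  exact (ENNReal.ofReal_le_ofReal hconst).trans_eq (by simp)

-- Gaussian linearization: `exp (y² / 4c) = 𝔼 exp (y g / √(2c))` for a standard Gaussian `g`,
-- so that after Tonelli only the moment generating function of `Y` enters.
lemma lintegral_exp_sq_div_le [IsProbabilityMeasure μ] (h : HasSubgaussianMGF Y c μ) :
    ∫⁻ ω, ENNReal.ofReal (Real.exp (Y ω ^ 2 / (4 * c))) ∂μ ≤ 2 := by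
  have hY := h.aemeasurable
  have hlin : ∀ y : ℝ, ENNReal.ofReal (Real.exp (y ^ 2 / (4 * c))) =
      ∫⁻ g, ENNReal.ofReal (Real.exp (y / √(2 * c) * g)) ∂(gaussianReal 0 1) := by
    intro y
    have hmgf := mgf_gaussianReal (p := gaussianReal 0 1) (X := id) (μ := 0) (v := 1)
      (by simp) (y / √(2 * c))
    simp only [mgf, id] at hmgf
    rw [← ofReal_integral_eq_lintegral_ofReal (integrable_exp_mul_gaussianReal _)
      (.of_forall fun x => by positivity), hmgf, div_pow, Real.sq_sqrt (by positivity)]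
    congr 2
    simp only [zero_mul, NNReal.coe_one, one_mul, zero_add]
    rw [div_div]; congr 1; ring
  simp_rw [hlin]
  rw [lintegral_lintegral_swap (f := fun ω g => ENNReal.ofReal (Real.exp (Y ω / √(2 * c) * g)))
    (((hY.comp_fst.div_const _).mul measurable_snd.aemeasurable).exp.ennreal_ofReal)]
  refine (lintegral_mono fun g => ?_).trans lintegral_exp_sq_div_four_gaussianReal_le
  simp_rw [div_mul_eq_mul_div, mul_div_assoc, mul_comm (Y _)]
  rw [← ofReal_integral_eq_lintegral_ofReal (h.integrable_exp_mul _)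
    (.of_forall fun x => by positivity)]
  refine ENNReal.ofReal_le_ofReal ((h.mgf_le _).trans (Real.exp_le_exp.2 ?_))
  rw [div_pow, Real.sq_sqrt (by positivity)]
  rcases eq_or_ne (c : ℝ) 0 with hc | hc
  · simp only [hc, zero_mul, zero_div]; positivity
  · exact le_of_eq (by field_simp; norm_num)

lemma integrable_exp_sq_div [IsProbabilityMeasure μ] (h : HasSubgaussianMGF Y c μ) :
    Integrable (fun ω => Real.exp (Y ω ^ 2 / (4 * c))) μ := by
  have hY := h.aemeasurable
  refine ⟨((hY.pow_const 2).div_const _).exp.aestronglyMeasurable, ?_⟩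
  rw [hasFiniteIntegral_iff_ofReal (.of_forall fun x => by positivity)]
  exact (lintegral_exp_sq_div_le h).trans_lt (by simp)

lemma integral_exp_sq_div_le [IsProbabilityMeasure μ] (h : HasSubgaussianMGF Y c μ) :
    ∫ ω, Real.exp (Y ω ^ 2 / (4 * c)) ∂μ ≤ 2 := by
  have hle := lintegral_exp_sq_div_le h
  rwa [← ofReal_integral_eq_lintegral_ofReal (integrable_exp_sq_div h)
    (.of_forall fun x => by positivity), ← ENNReal.ofReal_ofNat,
    ENNReal.ofReal_le_ofReal_iff (by norm_num)] at hle

lemma integrable_pow_of_hasSubgaussianMGF (h : HasSubgaussianMGF Y c μ) (k : ℕ) :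
    Integrable (fun ω => Y ω ^ k) μ :=
  integrable_pow_of_integrable_exp_mul (t := 1) one_ne_zero (h.integrable_exp_mul 1)
    (h.integrable_exp_mul (-1)) k

lemma measureReal_le_abs_le [IsFiniteMeasure μ] (h : HasSubgaussianMGF Y c μ) {ε : ℝ}
    (hε : 0 ≤ ε) : μ.real {ω | ε ≤ |Y ω|} ≤ 2 * Real.exp (-ε ^ 2 / (2 * c)) := by
  have hunion : {ω | ε ≤ |Y ω|} ⊆ {ω | ε ≤ Y ω} ∪ {ω | ε ≤ (-Y) ω} := by
    intro ω hω
    simpa [le_abs] using hω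
  linarith [(measureReal_mono hunion (μ := μ)).trans (measureReal_union_le _ _), h.measure_ge_le hε,
    h.neg.measure_ge_le hε]

end ExpSquare

section Bernstein

variable {Ω : Type*} [MeasurableSpace Ω] {μ : Measure Ω} [IsProbabilityMeasure μ]

lemma exp_mul_le_quadratic_add_exp {t x : ℝ} (ht : |t| ≤ 1 / 8) (hx : 0 ≤ x) :
    Real.exp (t * x) ≤ 1 + t * x + 128 * t ^ 2 * Real.exp (x / 4) := by
  have htaylor : Real.exp (t * x) - (1 + t * x) ≤ (t * x) ^ 2 * Real.exp |t * x| := by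
    have hcomplex := Complex.norm_exp_sub_sum_le_norm_mul_exp ((t * x : ℝ) : ℂ) 2
    have hcast : ((Real.exp (t * x) - (1 + t * x) : ℝ) : ℂ) = Complex.exp ((t * x : ℝ) : ℂ) -
        ∑ m ∈ Finset.range 2, ((t * x : ℝ) : ℂ) ^ m / (m.factorial : ℂ) := by
      simp [Finset.sum_range_succ]
    rw [← hcast, Complex.norm_real, Complex.norm_real, Real.norm_eq_abs, Real.norm_eq_abs,
      sq_abs] at hcomplex
    exact (le_abs_self _).trans hcomplex
  have habs : |t * x| ≤ x / 8 := by
    rw [abs_mul, abs_of_nonneg hx]; nlinarith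
  have hsq : x ^ 2 ≤ 128 * Real.exp (x / 8) := by
    nlinarith [Real.quadratic_le_exp_of_nonneg (x := x / 8) (by positivity)]
  have hsplit : Real.exp (x / 4) = Real.exp (x / 8) * Real.exp (x / 8) := by
    rw [← Real.exp_add]; ring_nf
  have : (t * x) ^ 2 * Real.exp |t * x| ≤ t ^ 2 * (128 * Real.exp (x / 8)) * Real.exp (x / 8) := by
    rw [mul_pow]; gcongr
  rw [hsplit]; linarith

lemma integrable_exp_mul_sq {Y : Ω → ℝ} (h : HasSubgaussianMGF Y 1 μ) {t : ℝ} (ht : |t| ≤ 1 / 8) :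
    Integrable (fun ω => Real.exp (t * Y ω ^ 2)) μ := by
  have hY := h.aemeasurable
  refine (integrable_exp_sq_div h).mono
    ((hY.pow_const 2).const_mul t).exp.aestronglyMeasurable (.of_forall fun ω => ?_)
  rw [Real.norm_of_nonneg (Real.exp_pos _).le, Real.norm_of_nonneg (Real.exp_pos _).le,
    Real.exp_le_exp, NNReal.coe_one]
  nlinarith [sq_nonneg (Y ω), (abs_le.1 ht).2]

lemma mgf_sq_sub_one_le {Y : Ω → ℝ} (h : HasSubgaussianMGF Y 1 μ)
    (hvar : ∫ ω, Y ω ^ 2 ∂μ = 1) {t : ℝ} (ht : |t| ≤ 1 / 8) :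
    mgf (fun ω => Y ω ^ 2 - 1) μ t ≤ Real.exp (256 * t ^ 2) := by
  have hI : Integrable (fun ω => Real.exp (Y ω ^ 2 / 4)) μ := by
    simpa using integrable_exp_sq_div h
  have hE : ∫ ω, Real.exp (Y ω ^ 2 / 4) ∂μ ≤ 2 := by
    simpa using integral_exp_sq_div_le h
  have h2 := integrable_pow_of_hasSubgaussianMGF h 2
  have hA : Integrable (fun ω => 1 + t * Y ω ^ 2) μ := (integrable_const _).add (h2.const_mul _)
  have hbound : ∫ ω, Real.exp (t * Y ω ^ 2) ∂μ ≤ Real.exp (t + 256 * t ^ 2) := by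
    calc ∫ ω, Real.exp (t * Y ω ^ 2) ∂μ
        ≤ ∫ ω, (1 + t * Y ω ^ 2 + 128 * t ^ 2 * Real.exp (Y ω ^ 2 / 4)) ∂μ :=
          integral_mono (integrable_exp_mul_sq h ht) (hA.add (hI.const_mul _))
            fun ω => exp_mul_le_quadratic_add_exp ht (sq_nonneg _)
      _ = 1 + t + 128 * t ^ 2 * ∫ ω, Real.exp (Y ω ^ 2 / 4) ∂μ := by
          rw [integral_add hA (hI.const_mul _), integral_add (integrable_const _) (h2.const_mul _),
            integral_const_mul, integral_const_mul, hvar]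
          simp
      _ ≤ t + 256 * t ^ 2 + 1 := by nlinarith [sq_nonneg t]
      _ ≤ Real.exp (t + 256 * t ^ 2) := Real.add_one_le_exp _
  simp_rw [mgf, mul_sub, mul_one, sub_eq_neg_add, Real.exp_add]
  rw [integral_const_mul]
  calc Real.exp (-t) * ∫ ω, Real.exp (t * Y ω ^ 2) ∂μ
      ≤ Real.exp (-t) * Real.exp (t + 256 * t ^ 2) := by gcongr
    _ = Real.exp (256 * t ^ 2) := by rw [← Real.exp_add]; ring_nf

variable {κ : Type*} [Fintype κ] {Y : κ → Ω → ℝ} {M ε : ℝ}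

lemma measureReal_le_sum_mul_sq_sub_one_le (hind : iIndepFun Y μ)
    (hmeas : ∀ j, Measurable (Y j)) (hY : ∀ j, HasSubgaussianMGF (Y j) 1 μ)
    (hvar : ∀ j, ∫ ω, Y j ω ^ 2 ∂μ = 1) {a : κ → ℝ}
    (hM : 0 < M) (haM : ∀ j, |a j| ≤ M) (hε0 : 0 ≤ ε) (hε1 : ε ≤ 1) :
    μ.real {ω | ε * ∑ j, |a j| ≤ ∑ j, a j * (Y j ω ^ 2 - 1)} ≤
      Real.exp (-(ε ^ 2 * (∑ j, |a j|) / (1024 * M))) := by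
  set s : ℝ := ε / (512 * M) with hs
  have hs0 : 0 ≤ s := by positivity
  have hsa : ∀ j, |s * a j| ≤ 1 / 8 := fun j => by
    calc |s * a j| = s * |a j| := by rw [abs_mul, abs_of_nonneg hs0]
      _ ≤ s * M := by gcongr; exact haM j
      _ = ε / 512 := by rw [hs]; field_simp
      _ ≤ 1 / 8 := by linarith
  set T : κ → Ω → ℝ := fun j ω => a j * (Y j ω ^ 2 - 1) with hT
  have hTind : iIndepFun T μ := hind.comp (fun j x => a j * (x ^ 2 - 1)) (fun j => by fun_prop)
  have hTexp : ∀ j, Integrable (fun ω => Real.exp (s * T j ω)) μ := fun j => by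
    have h := (integrable_exp_mul_sq (hY j) (hsa j)).const_mul (Real.exp (-(s * a j)))
    simp_rw [← Real.exp_add] at h
    refine h.congr (.of_forall fun ω => ?_)
    simp only [hT]; ring_nf
  have hTmeas : ∀ j, Measurable (T j) := fun j => by simp only [hT]; fun_prop
  have hmgf : mgf (fun ω => ∑ j, T j ω) μ s ≤ Real.exp (256 * s ^ 2 * (M * ∑ j, |a j|)) := by
    rw [← Finset.sum_fn, hTind.mgf_sum hTmeas, Finset.mul_sum, Finset.mul_sum, Real.exp_sum]
    refine Finset.prod_le_prod (fun j _ => mgf_nonneg) fun j _ => ?_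
    have hj : mgf (T j) μ s = mgf (fun ω => Y j ω ^ 2 - 1) μ (s * a j) := by
      simp only [mgf, hT, mul_assoc]
    rw [hj]
    refine (mgf_sq_sub_one_le (hY j) (hvar j) (hsa j)).trans (Real.exp_le_exp.2 ?_)
    rw [mul_pow, ← sq_abs (a j), sq |a j|, mul_assoc (256 : ℝ)]
    gcongr
    exact haM j
  have hint : Integrable (fun ω => Real.exp (s * ∑ j, T j ω)) μ := by
    simpa using hTind.integrable_exp_mul_sum hTmeas (s := Finset.univ) fun j _ => hTexp j
  refine (measure_ge_le_exp_mul_mgf _ hs0 hint).trans ?_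
  calc Real.exp (-s * (ε * ∑ j, |a j|)) * mgf (fun ω => ∑ j, T j ω) μ s
      ≤ Real.exp (-s * (ε * ∑ j, |a j|)) * Real.exp (256 * s ^ 2 * (M * ∑ j, |a j|)) := by gcongr
    _ = Real.exp (-(ε ^ 2 * (∑ j, |a j|) / (1024 * M))) := by
        rw [← Real.exp_add]; congr 1; rw [hs]; field_simp; ring

lemma measureReal_le_abs_sum_mul_sq_sub_one_le (hind : iIndepFun Y μ)
    (hmeas : ∀ j, Measurable (Y j)) (hY : ∀ j, HasSubgaussianMGF (Y j) 1 μ)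
    (hvar : ∀ j, ∫ ω, Y j ω ^ 2 ∂μ = 1) {a : κ → ℝ}
    (hM : 0 < M) (haM : ∀ j, |a j| ≤ M) (hε0 : 0 ≤ ε) (hε1 : ε ≤ 1) :
    μ.real {ω | ε * ∑ j, |a j| ≤ |∑ j, a j * (Y j ω ^ 2 - 1)|} ≤
      2 * Real.exp (-(ε ^ 2 * (∑ j, |a j|) / (1024 * M))) := by
  have hpos := measureReal_le_sum_mul_sq_sub_one_le hind hmeas hY hvar hM haM hε0 hε1
  have hneg := measureReal_le_sum_mul_sq_sub_one_le hind hmeas hY hvar (a := -a) hM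
    (fun j => by simpa using haM j) hε0 hε1
  simp only [Pi.neg_apply, abs_neg, neg_mul, Finset.sum_neg_distrib] at hneg
  have hunion : {ω | ε * ∑ j, |a j| ≤ |∑ j, a j * (Y j ω ^ 2 - 1)|} ⊆
      {ω | ε * ∑ j, |a j| ≤ ∑ j, a j * (Y j ω ^ 2 - 1)} ∪
        {ω | ε * ∑ j, |a j| ≤ -∑ j, a j * (Y j ω ^ 2 - 1)} := by
    intro ω hω
    simpa [le_abs] using hω
  linarith [(measureReal_mono hunion (μ := μ)).trans (measureReal_union_le _ _)]

end Bernstein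

section StdSubgaussian

variable {Ω ι κ : Type*} [MeasurableSpace Ω] {μ : Measure Ω}

/-- A family of independent, centred, unit-variance random variables which are subgaussian with
variance proxy `1`: the law of the entries of the matrix `Z` behind an anisotropic sample. -/
structure IsStdSubgaussian (W : ι → Ω → ℝ) (μ : Measure Ω) : Prop where
  measurable : ∀ i, Measurable (W i)
  iIndepFun : iIndepFun W μ
  integral_eq_zero : ∀ i, ∫ ω, W i ω ∂μ = 0
  integral_sq_eq_one : ∀ i, ∫ ω, W i ω ^ 2 ∂μ = 1
  hasSubgaussianMGF : ∀ i, HasSubgaussianMGF (W i) 1 μ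

namespace IsStdSubgaussian

variable {W : ι → Ω → ℝ}

lemma isProbabilityMeasure (h : IsStdSubgaussian W μ) : IsProbabilityMeasure μ :=
  h.iIndepFun.isProbabilityMeasure

lemma precomp (h : IsStdSubgaussian W μ) {g : κ → ι} (hg : g.Injective) :
    IsStdSubgaussian (fun k => W (g k)) μ :=
  ⟨fun _ => h.measurable _, h.iIndepFun.precomp hg, fun _ => h.integral_eq_zero _,
    fun _ => h.integral_sq_eq_one _, fun _ => h.hasSubgaussianMGF _⟩

lemma sign_mul (h : IsStdSubgaussian W μ) {s : ι → ℝ} (hs : ∀ i, s i = 1 ∨ s i = -1) :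
    IsStdSubgaussian (fun i ω => s i * W i ω) μ := by
  have hm := h.measurable
  have hs2 : ∀ i, s i ^ 2 = 1 := fun i => by rcases hs i with h | h <;> rw [h] <;> norm_num
  refine ⟨by fun_prop, h.iIndepFun.comp (fun i x => s i * x) (by fun_prop), fun i => ?_,
    fun i => ?_, fun i => ?_⟩
  · rw [integral_const_mul, h.integral_eq_zero, mul_zero]
  · simp_rw [mul_pow, hs2, one_mul, h.integral_sq_eq_one]
  · refine hasSubgaussianMGF_mono ((h.hasSubgaussianMGF i).const_mul (s i)) ?_
    rw [← NNReal.coe_le_coe]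
    exact (mul_one _).trans (hs2 i) |>.le

variable [Fintype ι]

lemma hasSubgaussianMGF_sum_mul (h : IsStdSubgaussian W μ) {a : ι → ℝ} {c : ℝ≥0}
    (hc : ∑ i, a i ^ 2 ≤ c) : HasSubgaussianMGF (fun ω => ∑ i, a i * W i ω) c μ := by
  have hind : ProbabilityTheory.iIndepFun (fun i ω => a i * W i ω) μ :=
    h.iIndepFun.comp (fun i x => a i * x) (by fun_prop)
  refine hasSubgaussianMGF_mono (HasSubgaussianMGF.sum_of_iIndepFun hind (s := Finset.univ)
    fun i _ => (h.hasSubgaussianMGF i).const_mul (a i)) ?_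
  rw [← NNReal.coe_le_coe, NNReal.coe_sum]
  exact (Finset.sum_congr rfl fun i _ => mul_one (a i ^ 2)).trans_le hc

lemma integral_sum_mul_sq (h : IsStdSubgaussian W μ) (a : ι → ℝ) :
    ∫ ω, (∑ i, a i * W i ω) ^ 2 ∂μ = ∑ i, a i ^ 2 := by
  have := h.isProbabilityMeasure
  have hLp : ∀ i, MemLp (fun ω => a i * W i ω) 2 μ := fun i =>
    ((h.hasSubgaussianMGF i).memLp 2).const_mul (a i)
  have hind : Pairwise fun i j => IndepFun (fun ω => a i * W i ω) (fun ω => a j * W j ω) μ :=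
    fun i j hij => (h.iIndepFun.indepFun hij).comp (φ := fun x => a i * x) (ψ := fun x => a j * x)
      (by fun_prop) (by fun_prop)
  have hmean : ∫ ω, (∑ i, fun ω => a i * W i ω) ω ∂μ = 0 := by
    simp only [Finset.sum_apply]
    rw [integral_finsetSum _ fun i _ => (hLp i).integrable one_le_two]
    simp_rw [integral_const_mul, h.integral_eq_zero, mul_zero, Finset.sum_const_zero]
  have hvar := IndepFun.variance_sum (s := Finset.univ) (fun i _ => hLp i) (hind.set_pairwise _)
  have hvar1 : ∀ i, Var[W i; μ] = 1 := fun i => by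
    rw [variance_of_integral_eq_zero (h.measurable i).aemeasurable (h.integral_eq_zero i)]
    exact h.integral_sq_eq_one i
  rw [variance_of_integral_eq_zero (Finset.aemeasurable_sum _ fun i _ => (hLp i).aemeasurable)
    hmean] at hvar
  simpa only [Finset.sum_apply, variance_const_mul, hvar1, mul_one] using hvar

lemma mgf_sum_mul (h : IsStdSubgaussian W μ) (a : ι → ℝ) (t : ℝ) :
    mgf (fun ω => ∑ i, a i * W i ω) μ t = ∏ i, mgf (W i) μ (t * a i) := by
  have hm := h.measurable
  have hind : ProbabilityTheory.iIndepFun (fun i ω => a i * W i ω) μ :=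
    h.iIndepFun.comp (fun i x => a i * x) (by fun_prop)
  have hsum := hind.mgf_sum (t := t) (by fun_prop) Finset.univ
  simpa [mgf, Finset.sum_fn, mul_assoc] using hsum

end IsStdSubgaussian

/-- A random matrix whose entries form a standard subgaussian family. -/
abbrev IsStdSubgaussianMatrix (Z : Ω → Matrix ι κ ℝ) (μ : Measure Ω) : Prop :=
  IsStdSubgaussian (fun (p : ι × κ) ω => Z ω p.1 p.2) μ

namespace IsStdSubgaussianMatrix

variable {Z : Ω → Matrix ι κ ℝ}

lemma measurable_row (h : IsStdSubgaussianMatrix Z μ) (i : ι) : Measurable fun ω => Z ω i :=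
  measurable_pi_iff.2 fun j => h.measurable (i, j)

lemma row (h : IsStdSubgaussianMatrix Z μ) (i : ι) : IsStdSubgaussian (fun j ω => Z ω i j) μ :=
  h.precomp (g := fun j => (i, j)) (Prod.mk_right_injective i)

lemma col (h : IsStdSubgaussianMatrix Z μ) (j : κ) : IsStdSubgaussian (fun i ω => Z ω i j) μ :=
  h.precomp (g := fun i => (i, j)) (Prod.mk_left_injective j)

lemma transpose (h : IsStdSubgaussianMatrix Z μ) :
    IsStdSubgaussianMatrix (fun ω => (Z ω)ᵀ) μ :=
  h.precomp Prod.swap_injective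

lemma iIndepFun_row (h : IsStdSubgaussianMatrix Z μ) :
    ProbabilityTheory.iIndepFun (fun i ω => Z ω i) μ := by
  have hm := h.measurable
  have := h.isProbabilityMeasure
  have (i : ι) (j : κ) : IsProbabilityMeasure (μ.map fun ω => Z ω i j) :=
    Measure.isProbabilityMeasure_map (hm (i, j)).aemeasurable
  have hjoint := (iIndepFun_iff_map_fun_eq_infinitePi_map hm).1 h.iIndepFun
  have hrow : ∀ i, μ.map (fun ω => Z ω i) =
      Measure.infinitePi fun j => μ.map (fun ω => Z ω i j) := fun i =>
    (iIndepFun_iff_map_fun_eq_infinitePi_map fun j => hm (i, j)).1 (h.row i).iIndepFun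
  rw [iIndepFun_iff_map_fun_eq_infinitePi_map h.measurable_row]
  simp_rw [hrow]
  rw [← Measure.infinitePi_map_curry (X := ℝ) fun i j => μ.map (fun ω => Z ω i j), ← hjoint,
    Measure.map_map (by fun_prop) (by fun_prop)]
  rfl

lemma iIndepFun_col (h : IsStdSubgaussianMatrix Z μ) :
    ProbabilityTheory.iIndepFun (fun j ω i => Z ω i j) μ :=
  h.transpose.iIndepFun_row

end IsStdSubgaussianMatrix

end StdSubgaussian

section Net

open Module

lemma exists_finset_isCover_closedBall_two (V : Type*) [NormedAddCommGroup V] [NormedSpace ℝ V]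
    [FiniteDimensional ℝ V] :
    ∃ N : Finset V, N.card ≤ 5 ^ finrank ℝ V ∧ (∀ z ∈ N, ‖z‖ ≤ 2) ∧
      ∀ x : V, ‖x‖ ≤ 2 → ∃ z ∈ N, ‖x - z‖ ≤ 1 := by
  classical
  set B : Set V := Metric.closedBall 0 2
  have hpack : Metric.packingNumber 1 B ≤ (5 ^ finrank ℝ V : ℕ) := by
    refine iSup_le fun C => iSup_le fun hCB => iSup_le fun hC => ?_
    by_contra! hcard
    obtain ⟨t, htC, ht⟩ := Set.exists_subset_encard_eq (Order.add_one_le_of_lt hcard)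
    have htfin : t.Finite :=
      Set.finite_of_encard_eq_coe (k := 5 ^ finrank ℝ V + 1) (by simpa using ht)
    lift t to Finset V using htfin
    have ht5 : t.card = 5 ^ finrank ℝ V + 1 := by
      rw [Set.encard_coe_eq_coe_finsetCard] at ht
      exact_mod_cast ht
    have hsep : t.card ≤ 5 ^ finrank ℝ V := by
      refine Besicovitch.card_le_of_separated t (fun z hz => ?_) fun z hz w hw hne => ?_
      · exact mem_closedBall_zero_iff.1 (hCB (htC hz))
      · have h := hC (htC hz) (htC hw) hne
        rw [← dist_eq_norm]
        have hlt : ENNReal.ofReal 1 < ENNReal.ofReal (dist z w) := by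
          simpa [← edist_dist] using h
        exact ((ENNReal.ofReal_lt_ofReal_iff_of_nonneg zero_le_one).1 hlt).le
    omega
  have htop : Metric.packingNumber 1 B ≠ ⊤ := (hpack.trans_lt (ENat.natCast_lt_top _)).ne
  have hcard := Metric.encard_maximalSeparatedSet htop
  have hfin : (Metric.maximalSeparatedSet 1 B).Finite :=
    Set.encard_ne_top_iff.1 (hcard.trans_ne htop)
  refine ⟨hfin.toFinset, ?_, fun z hz => ?_, fun x hx => ?_⟩
  · rw [hfin.encard_eq_coe_toFinset_card] at hcard
    exact_mod_cast hcard.trans_le hpack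
  · exact mem_closedBall_zero_iff.1 (Metric.maximalSeparatedSet_subset (hfin.mem_toFinset.1 hz))
  · obtain ⟨z, hz, hxz⟩ := Metric.isCover_maximalSeparatedSet htop (mem_closedBall_zero_iff.2 hx)
    refine ⟨z, hfin.mem_toFinset.2 hz, ?_⟩
    rw [← dist_eq_norm]
    exact edist_le_ofReal zero_le_one |>.1 (by simpa using hxz)

lemma abs_inner_le_of_isSymmetric {V : Type*} [NormedAddCommGroup V] [InnerProductSpace ℝ V]
    {T : V →ₗ[ℝ] V} (hT : T.IsSymmetric) {c : ℝ} {z w : V}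
    (hadd : |inner ℝ (z + w) (T (z + w))| ≤ c * ‖z + w‖ ^ 2)
    (hsub : |inner ℝ (z - w) (T (z - w))| ≤ c * ‖z - w‖ ^ 2) :
    |inner ℝ z (T w)| ≤ c / 2 * (‖z‖ ^ 2 + ‖w‖ ^ 2) := by
  have hpolar : 4 * inner ℝ z (T w) =
      inner ℝ (z + w) (T (z + w)) - inner ℝ (z - w) (T (z - w)) := by
    have hsymm : inner ℝ w (T z) = inner ℝ z (T w) := by
      rw [← real_inner_comm]
      exact hT z w
    simp only [map_add, map_sub, inner_add_left, inner_add_right, inner_sub_left,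
      inner_sub_right, hsymm]
    ring
  have hpar : c * ‖z + w‖ ^ 2 + c * ‖z - w‖ ^ 2 = 2 * c * (‖z‖ ^ 2 + ‖w‖ ^ 2) := by
    linear_combination c * parallelogram_law_with_norm ℝ z w
  rw [abs_le] at hadd hsub ⊢
  constructor <;> linarith

lemma opNorm_le_of_abs_inner_le {V : Type*} [NormedAddCommGroup V] [InnerProductSpace ℝ V]
    {N : Set V} (hN : ∀ x : V, ‖x‖ ≤ 2 → ∃ z ∈ N, ‖x - z‖ ≤ 1) {T : V →L[ℝ] V} {c : ℝ}
    (hc : 0 ≤ c) (hT : ∀ z ∈ N, ∀ w ∈ N, |inner ℝ z (T w)| ≤ c) : ‖T‖ ≤ c := by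
  have hcol : ∀ w ∈ N, ‖T w‖ ≤ c := by
    intro w hw
    rcases eq_or_ne (T w) 0 with h0 | h0
    · rwa [h0, norm_zero]
    have hpos : 0 < ‖T w‖ := norm_pos_iff.2 h0
    obtain ⟨z, hz, hxz⟩ := hN ((2 / ‖T w‖) • T w) (by
      rw [norm_smul, Real.norm_of_nonneg (by positivity), div_mul_cancel₀ _ hpos.ne'])
    have hself : inner ℝ ((2 / ‖T w‖) • T w) (T w) = 2 * ‖T w‖ := by
      rw [real_inner_smul_left, real_inner_self_eq_norm_sq]
      field_simp
    have hcs := real_inner_le_norm ((2 / ‖T w‖) • T w - z) (T w)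
    rw [inner_sub_left, hself] at hcs
    nlinarith [le_of_abs_le (hT z hz w hw)]
  suffices hhalf : ‖T‖ ≤ (c + ‖T‖) / 2 by linarith
  refine T.opNorm_le_of_unit_norm (by positivity) fun x hx => ?_
  obtain ⟨z, hz, hxz⟩ := hN ((2 : ℝ) • x) (by rw [norm_smul, hx]; norm_num)
  have hsplit : (2 : ℝ) • T x = T z + T ((2 : ℝ) • x - z) := by simp
  have htwo : ‖(2 : ℝ) • T x‖ = 2 * ‖T x‖ := by rw [norm_smul]; norm_num
  have hT1 : ‖T ((2 : ℝ) • x - z)‖ ≤ ‖T‖ :=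
    T.le_of_opNorm_le_of_le le_rfl hxz |>.trans_eq (mul_one _)
  have := norm_add_le (T z) (T ((2 : ℝ) • x - z))
  rw [← hsplit, htwo] at this
  linarith [hcol z hz]

lemma exists_finset_opNorm_le (V : Type*) [NormedAddCommGroup V] [InnerProductSpace ℝ V]
    [FiniteDimensional ℝ V] :
    ∃ N : Finset V, N.card ≤ 2 * 25 ^ finrank ℝ V ∧ ∀ T : V →L[ℝ] V,
      (T : V →ₗ[ℝ] V).IsSymmetric → ∀ c : ℝ, 0 ≤ c →
      (∀ u ∈ N, |inner ℝ u (T u)| ≤ c * ‖u‖ ^ 2) → ‖T‖ ≤ 4 * c := by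
  classical
  obtain ⟨N, hcard, hN2, hN⟩ := exists_finset_isCover_closedBall_two V
  refine ⟨Finset.image (fun p => p.1 + p.2) (N ×ˢ N) ∪ Finset.image (fun p => p.1 - p.2) (N ×ˢ N),
    ?_, fun T hT c hc hq => opNorm_le_of_abs_inner_le (N := N) hN (by positivity)
      fun z hz w hw => ?_⟩
  · have hNN : (N ×ˢ N).card ≤ 25 ^ finrank ℝ V := by
      rw [Finset.card_product, show 25 = 5 * 5 by rfl, mul_pow]
      gcongr
    linarith [Finset.card_union_le (Finset.image (fun p => p.1 + p.2) (N ×ˢ N))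
      (Finset.image (fun p => p.1 - p.2) (N ×ˢ N)),
      Finset.card_image_le (s := N ×ˢ N) (f := fun p => p.1 + p.2),
      Finset.card_image_le (s := N ×ˢ N) (f := fun p => p.1 - p.2)]
  · have hadd := hq (z + w) (Finset.mem_union_left _ (Finset.mem_image_of_mem
      (fun p : V × V => p.1 + p.2) (Finset.mk_mem_product hz hw)))
    have hsub := hq (z - w) (Finset.mem_union_right _ (Finset.mem_image_of_mem
      (fun p : V × V => p.1 - p.2) (Finset.mk_mem_product hz hw)))
    calc |inner ℝ z (T w)| ≤ c / 2 * (‖z‖ ^ 2 + ‖w‖ ^ 2) :=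
          abs_inner_le_of_isSymmetric hT hadd hsub
      _ ≤ c / 2 * (2 ^ 2 + 2 ^ 2) := by gcongr; exacts [hN2 z hz, hN2 w hw]
      _ = 4 * c := by ring

end Net

section GramConcentration

variable {Ω ι κ : Type*} [Fintype κ]

/-- The weighted Gram matrix `Z diag(ν) Zᵀ` of the rows of `Z` differs from its typical value
`‖ν‖₁ • 1` by at most the relative error `c`, as a quadratic form. -/
def GramConcentrated [Fintype ι] (Z : Matrix ι κ ℝ) (ν : κ → ℝ) (c : ℝ) : Prop :=
  ∀ x : ι → ℝ, |∑ j, ν j * (x ᵥ* Z) j ^ 2 - (∑ j, ν j) * (x ⬝ᵥ x)| ≤ c * (∑ j, ν j) * (x ⬝ᵥ x)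

lemma dotProduct_mul_diagonal_mul_transpose_mulVec [Fintype ι] [DecidableEq κ] (Z : Matrix ι κ ℝ)
    (ν : κ → ℝ) (x : ι → ℝ) :
    x ⬝ᵥ (Z * diagonal ν * Zᵀ) *ᵥ x = ∑ j, ν j * (x ᵥ* Z) j ^ 2 := by
  rw [← mulVec_mulVec, mulVec_transpose, dotProduct_mulVec, ← vecMul_vecMul]
  simp only [dotProduct, vecMul_diagonal]
  exact Finset.sum_congr rfl fun j _ => by ring

lemma exists_finset_gramConcentrated (ι : Type*) [Fintype ι] :
    ∃ N : Finset (ι → ℝ), N.card ≤ 2 * 25 ^ Fintype.card ι ∧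
      ∀ (Z : Matrix ι κ ℝ) (ν : κ → ℝ) (ε : ℝ), 0 ≤ ε → (∀ j, 0 ≤ ν j) →
      (∀ u ∈ N, |∑ j, ν j * (u ᵥ* Z) j ^ 2 - (∑ j, ν j) * (u ⬝ᵥ u)| ≤
        ε * (∑ j, ν j) * (u ⬝ᵥ u)) → GramConcentrated Z ν (4 * ε) := by
  classical
  obtain ⟨N, hcard, hN⟩ := exists_finset_opNorm_le (EuclideanSpace ℝ ι)
  rw [finrank_euclideanSpace] at hcard
  refine ⟨N.image WithLp.ofLp, Finset.card_image_le.trans hcard, fun Z ν ε hε hν h x => ?_⟩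
  have hS : 0 ≤ ∑ j, ν j := Finset.sum_nonneg fun j _ => hν j
  set D : Matrix ι ι ℝ := Z * diagonal ν * Zᵀ - (∑ j, ν j) • 1 with hD
  have hDsymm : Dᵀ = D := by simp [hD, Matrix.mul_assoc]
  set T := toEuclideanCLM (𝕜 := ℝ) D
  have hquad : ∀ u : ι → ℝ, inner ℝ (WithLp.toLp 2 u) (T (WithLp.toLp 2 u)) =
      ∑ j, ν j * (u ᵥ* Z) j ^ 2 - (∑ j, ν j) * (u ⬝ᵥ u) := fun u => by
    rw [inner_toEuclideanCLM, sub_mulVec, dotProduct_sub, smul_mulVec, one_mulVec,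
      dotProduct_smul, smul_eq_mul, dotProduct_mul_diagonal_mul_transpose_mulVec]
  have hself : ∀ u : ι → ℝ, u ⬝ᵥ u = ‖WithLp.toLp 2 u‖ ^ 2 := fun u => by
    rw [EuclideanSpace.real_norm_sq_eq]
    exact Finset.sum_congr rfl fun i _ => (sq _).symm
  have hTsymm : (T : EuclideanSpace ℝ ι →ₗ[ℝ] EuclideanSpace ℝ ι).IsSymmetric := by
    rw [coe_toEuclideanCLM_eq_toEuclideanLin]
    exact isSymmetric_toEuclideanLin_iff.2 hDsymm
  have hT : ‖T‖ ≤ 4 * (ε * ∑ j, ν j) := by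
    refine hN T hTsymm _ (by positivity) fun u hu => ?_
    have := h u.ofLp (Finset.mem_image_of_mem _ hu)
    rwa [← hquad, hself] at this
  rw [← hquad, hself]
  calc |inner ℝ (WithLp.toLp 2 x) (T (WithLp.toLp 2 x))|
      ≤ ‖WithLp.toLp 2 x‖ * ‖T (WithLp.toLp 2 x)‖ := abs_real_inner_le_norm _ _
    _ ≤ ‖WithLp.toLp 2 x‖ * (4 * (ε * ∑ j, ν j) * ‖WithLp.toLp 2 x‖) := by
        gcongr; exact T.le_of_opNorm_le hT _
    _ = 4 * ε * (∑ j, ν j) * ‖WithLp.toLp 2 x‖ ^ 2 := by ring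

variable [Fintype ι] [MeasurableSpace Ω] {μ : Measure Ω} {Z : Ω → Matrix ι κ ℝ}
  {ν : κ → ℝ} {M ε : ℝ}

lemma IsStdSubgaussianMatrix.measureReal_lt_abs_gram_sub_le (h : IsStdSubgaussianMatrix Z μ)
    (hM : 0 < M) (hν : ∀ j, 0 ≤ ν j) (hνM : ∀ j, ν j ≤ M) (hε0 : 0 ≤ ε) (hε1 : ε ≤ 1)
    (x : ι → ℝ) :
    μ.real {ω | ε * (∑ j, ν j) * (x ⬝ᵥ x) <
        |∑ j, ν j * (x ᵥ* Z ω) j ^ 2 - (∑ j, ν j) * (x ⬝ᵥ x)|} ≤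
      2 * Real.exp (-(ε ^ 2 * (∑ j, ν j) / (1024 * M))) := by
  have := h.isProbabilityMeasure
  have hm := h.measurable
  have hx : 0 ≤ x ⬝ᵥ x := dotProduct_self_star_nonneg x
  rcases hx.eq_or_lt with hx0 | hx0
  · obtain rfl := dotProduct_self_eq_zero.1 hx0.symm
    have hempty : {ω | ε * (∑ j, ν j) * ((0 : ι → ℝ) ⬝ᵥ 0) <
        |∑ j, ν j * (0 ᵥ* Z ω) j ^ 2 - (∑ j, ν j) * ((0 : ι → ℝ) ⬝ᵥ 0)|} = ∅ := by simp
    rw [hempty, measureReal_empty]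
    positivity
  set r := √(x ⬝ᵥ x)
  have hr0 : 0 < r := Real.sqrt_pos.2 hx0
  have hr2 : r ^ 2 = x ⬝ᵥ x := Real.sq_sqrt hx0.le
  have hnorm : ∑ i, (x i / r) ^ 2 = 1 := by
    simp_rw [div_pow, ← Finset.sum_div, hr2]
    rw [div_eq_one_iff_eq hx0.ne']
    exact Finset.sum_congr rfl fun i _ => sq (x i)
  set Y : κ → Ω → ℝ := fun j ω => ∑ i, x i / r * Z ω i j
  have hY : ∀ j ω, (x ᵥ* Z ω) j = r * Y j ω := fun j ω => by
    simp only [Y, vecMul, dotProduct, Finset.mul_sum]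
    exact Finset.sum_congr rfl fun i _ => by field_simp
  have hYind : iIndepFun Y μ :=
    h.iIndepFun_col.comp (fun _ (v : ι → ℝ) => ∑ i, x i / r * v i) (by fun_prop)
  refine (measureReal_mono ?_).trans (measureReal_le_abs_sum_mul_sq_sub_one_le hYind
    (fun j => Finset.measurable_sum _ fun i _ => (hm (i, j)).const_mul _)
    (fun j => (h.col j).hasSubgaussianMGF_sum_mul hnorm.le)
    (fun j => ((h.col j).integral_sum_mul_sq _).trans hnorm) hM
    (fun j => (abs_of_nonneg (hν j)).trans_le (hνM j)) hε0 hε1 |>.trans_eq ?_)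
  · intro ω hω
    simp only [Set.mem_ofPred_eq, hY, mul_pow, hr2, abs_of_nonneg (hν _)] at hω ⊢
    have hfactor : ∑ j, ν j * (x ⬝ᵥ x * Y j ω ^ 2) - (∑ j, ν j) * (x ⬝ᵥ x) =
        (x ⬝ᵥ x) * ∑ j, ν j * (Y j ω ^ 2 - 1) := by
      rw [Finset.mul_sum, Finset.sum_mul, ← Finset.sum_sub_distrib]
      exact Finset.sum_congr rfl fun j _ => by ring
    rw [hfactor, abs_mul, abs_of_pos hx0, mul_comm] at hω
    exact (lt_of_mul_lt_mul_left hω hx0.le).le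
  · simp_rw [abs_of_nonneg (hν _)]

lemma IsStdSubgaussianMatrix.measureReal_not_gramConcentrated_le (h : IsStdSubgaussianMatrix Z μ)
    (hM : 0 < M) (hν : ∀ j, 0 ≤ ν j) (hνM : ∀ j, ν j ≤ M) (hε0 : 0 ≤ ε) (hε1 : ε ≤ 1) :
    μ.real {ω | ¬ GramConcentrated (Z ω) ν (4 * ε)} ≤
      25 ^ Fintype.card ι * (4 * Real.exp (-(ε ^ 2 * (∑ j, ν j) / (1024 * M)))) := by
  have := h.isProbabilityMeasure
  obtain ⟨N, hcard, hN⟩ := exists_finset_gramConcentrated (κ := κ) ι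
  let bad (u : ι → ℝ) : Set Ω := {ω | ε * (∑ j, ν j) * (u ⬝ᵥ u) <
    |∑ j, ν j * (u ᵥ* Z ω) j ^ 2 - (∑ j, ν j) * (u ⬝ᵥ u)|}
  have hsub : {ω | ¬ GramConcentrated (Z ω) ν (4 * ε)} ⊆ ⋃ u ∈ N, bad u := by
    intro ω hω
    by_contra hgood
    simp only [Set.mem_iUnion, not_exists, bad, Set.mem_ofPred_eq, not_lt] at hω hgood
    exact hω (hN (Z ω) ν ε hε0 hν hgood)
  calc μ.real {ω | ¬ GramConcentrated (Z ω) ν (4 * ε)}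
      ≤ ∑ u ∈ N, μ.real (bad u) :=
        (measureReal_mono hsub (measure_ne_top _ _)).trans
          (measureReal_biUnion_finset_le _ _)
    _ ≤ ∑ u ∈ N, 2 * Real.exp (-(ε ^ 2 * (∑ j, ν j) / (1024 * M))) :=
        Finset.sum_le_sum fun u _ => h.measureReal_lt_abs_gram_sub_le hM hν hνM hε0 hε1 u
    _ ≤ ((2 * 25 ^ Fintype.card ι : ℕ) : ℝ) *
        (2 * Real.exp (-(ε ^ 2 * (∑ j, ν j) / (1024 * M)))) := by
        rw [Finset.sum_const, nsmul_eq_mul]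
        gcongr
    _ = _ := by push_cast; ring

end GramConcentration

section Anticoncentration

variable {Ω : Type*} [MeasurableSpace Ω] {μ : Measure Ω} [IsProbabilityMeasure μ]

lemma one_add_add_sq_add_cube_le_exp (y : ℝ) : 1 + y + y ^ 2 / 2 + y ^ 3 / 6 ≤ Real.exp y := by
  rcases le_total 0 y with hy | hy
  · have h := Real.sum_le_exp_of_nonneg hy 4
    norm_num [Finset.sum_range_succ, Nat.factorial] at h
    linarith
  · have hderiv (x : ℝ) : HasDerivAt
        (fun x : ℝ => (1 + x + x ^ 2 / 2 + x ^ 3 / 6) * Real.exp (-x))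
        (-(x ^ 3 / 6) * Real.exp (-x)) x := by
      have hpoly : HasDerivAt (fun x : ℝ => 1 + x + x ^ 2 / 2 + x ^ 3 / 6) (1 + x + x ^ 2 / 2) x :=
        (((hasDerivAt_id' x).const_add 1 |>.add ((hasDerivAt_pow 2 x).div_const 2)).add
          ((hasDerivAt_pow 3 x).div_const 6)).congr_deriv (by push_cast; ring)
      exact (hpoly.mul (hasDerivAt_neg x).exp).congr_deriv (by ring)
    have hmono : MonotoneOn (fun x : ℝ => (1 + x + x ^ 2 / 2 + x ^ 3 / 6) * Real.exp (-x))
        (Set.Iic 0) := by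
      refine monotoneOn_of_deriv_nonneg (convex_Iic 0) (by fun_prop) (by fun_prop) fun x hx => ?_
      rw [interior_Iic, Set.mem_Iio] at hx
      rw [(hderiv x).deriv]
      have : x ^ 3 ≤ 0 := Odd.pow_nonpos (by decide) hx.le
      exact mul_nonneg (by linarith) (Real.exp_pos _).le
    have h : (1 + y + y ^ 2 / 2 + y ^ 3 / 6) * Real.exp (-y) ≤ 1 := by
      simpa using hmono (Set.mem_Iic.2 hy) (Set.mem_Iic.2 le_rfl) hy
    rwa [Real.exp_neg, ← div_eq_mul_inv, div_le_one (Real.exp_pos y)] at h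

lemma abs_cube_le_exp_sq (z : ℝ) : |z ^ 3| ≤ 4 * Real.exp (z ^ 2 / 4) := by
  have habs : |z| ≤ 1 + z ^ 2 / 4 := by
    rw [← sq_abs]
    linarith [sq_nonneg (|z| / 2 - 1)]
  have hv : 0 ≤ z ^ 2 / 4 := by positivity
  calc |z ^ 3| = 4 * (z ^ 2 / 4) * |z| := by rw [pow_succ, abs_mul, abs_sq]; ring
    _ ≤ 4 * (z ^ 2 / 4) * (1 + z ^ 2 / 4) := by gcongr
    _ ≤ 4 * (1 + z ^ 2 / 4 + (z ^ 2 / 4) ^ 2 / 2 + (z ^ 2 / 4) ^ 3 / 6) := by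
        nlinarith [mul_nonneg hv (sq_nonneg (z ^ 2 / 4 - 2)), sq_nonneg (z ^ 2 / 4 - 2)]
    _ ≤ 4 * Real.exp (z ^ 2 / 4) := by gcongr; exact one_add_add_sq_add_cube_le_exp _

variable {Y : Ω → ℝ}

lemma one_le_mgf (h : HasSubgaussianMGF Y 1 μ) (h0 : ∫ ω, Y ω ∂μ = 0) (x : ℝ) :
    1 ≤ mgf Y μ x := by
  have hlin : Integrable (fun ω => x * Y ω) μ := h.integrable.const_mul x
  have hmono := integral_mono ((integrable_const 1).add hlin) (h.integrable_exp_mul x)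
    fun ω => (add_comm _ _).trans_le (Real.add_one_le_exp (x * Y ω))
  rwa [integral_add' (integrable_const 1) hlin, integral_const_mul, h0, mul_zero, add_zero,
    integral_const, probReal_univ, one_smul] at hmono

lemma exp_sq_div_eight_le_one_add {x : ℝ} (hx : |x| ≤ 1) :
    Real.exp (x ^ 2 / 8) ≤ 1 + x ^ 2 / 4 := by
  have hx2 : x ^ 2 ≤ 1 := (sq_le_one_iff_abs_le_one x).2 hx
  have hexp := Real.add_one_le_exp (-(x ^ 2 / 8))
  rw [Real.exp_neg, le_inv_comm₀ (by linarith) (Real.exp_pos _)] at hexp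
  refine hexp.trans (inv_le_of_inv_le₀ (by positivity) ?_)
  rw [inv_le_iff_one_le_mul₀ (by positivity)]
  nlinarith [sq_nonneg x]

lemma abs_integral_cube_le (h : HasSubgaussianMGF Y 1 μ) : |∫ ω, Y ω ^ 3 ∂μ| ≤ 8 := by
  have hint : Integrable (fun ω => Real.exp (Y ω ^ 2 / 4)) μ := by
    simpa using integrable_exp_sq_div h
  have hle : ∫ ω, Real.exp (Y ω ^ 2 / 4) ∂μ ≤ 2 := by simpa using integral_exp_sq_div_le h
  calc |∫ ω, Y ω ^ 3 ∂μ| ≤ ∫ ω, |Y ω ^ 3| ∂μ := abs_integral_le_integral_abs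
    _ ≤ ∫ ω, 4 * Real.exp (Y ω ^ 2 / 4) ∂μ :=
        integral_mono (integrable_pow_of_hasSubgaussianMGF h 3).abs (hint.const_mul 4)
          fun ω => abs_cube_le_exp_sq (Y ω)
    _ ≤ 8 := by rw [integral_const_mul]; linarith

lemma exp_sq_div_eight_le_mgf (h : HasSubgaussianMGF Y 1 μ) (h0 : ∫ ω, Y ω ∂μ = 0)
    (h1 : ∫ ω, Y ω ^ 2 ∂μ = 1) {x : ℝ} (hx : |x| ≤ 1 / 16) :
    Real.exp (x ^ 2 / 8) ≤ mgf Y μ x := by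
  have hi1 : Integrable (fun ω => x * Y ω) μ := h.integrable.const_mul x
  have hi2 : Integrable (fun ω => x ^ 2 / 2 * Y ω ^ 2) μ :=
    (integrable_pow_of_hasSubgaussianMGF h 2).const_mul _
  have hi3 : Integrable (fun ω => x ^ 3 / 6 * Y ω ^ 3) μ :=
    (integrable_pow_of_hasSubgaussianMGF h 3).const_mul _
  have hi12 : Integrable (fun ω => 1 + x * Y ω) μ := (integrable_const 1).add hi1
  have hi123 : Integrable (fun ω => 1 + x * Y ω + x ^ 2 / 2 * Y ω ^ 2) μ := hi12.add hi2
  have htaylor : 1 + x ^ 2 / 2 + x ^ 3 / 6 * ∫ ω, Y ω ^ 3 ∂μ ≤ mgf Y μ x := by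
    calc 1 + x ^ 2 / 2 + x ^ 3 / 6 * ∫ ω, Y ω ^ 3 ∂μ
        = ∫ ω, (1 + x * Y ω + x ^ 2 / 2 * Y ω ^ 2 + x ^ 3 / 6 * Y ω ^ 3) ∂μ := by
          rw [integral_add hi123 hi3, integral_add hi12 hi2, integral_add (integrable_const 1) hi1]
          simp [integral_const_mul, h0, h1]
      _ ≤ mgf Y μ x := integral_mono (hi123.add hi3) (h.integrable_exp_mul x) fun ω =>
          (by ring : _ = _).trans_le (one_add_add_sq_add_cube_le_exp (x * Y ω))
  have hcube : |x ^ 3 / 6 * ∫ ω, Y ω ^ 3 ∂μ| ≤ x ^ 2 / 12 := by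
    calc |x ^ 3 / 6 * ∫ ω, Y ω ^ 3 ∂μ| = |x| ^ 2 * |x| / 6 * |∫ ω, Y ω ^ 3 ∂μ| := by
          rw [abs_mul, abs_div, abs_pow, abs_of_pos (show (0 : ℝ) < 6 by norm_num), pow_succ]
      _ ≤ |x| ^ 2 * (1 / 16) / 6 * 8 := by gcongr; exact abs_integral_cube_le h
      _ = x ^ 2 / 12 := by rw [sq_abs]; ring
  refine (exp_sq_div_eight_le_one_add (hx.trans (by norm_num))).trans ?_
  nlinarith [neg_le_of_abs_le hcube, sq_nonneg x]

lemma le_sq_div_add_half {c : ℝ} (hc : 0 < c) (u : ℝ) : u ≤ 1 / (2 * c) * u ^ 2 + c / 2 := by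
  have hsq : 0 ≤ (u - c) ^ 2 / (2 * c) := by positivity
  have hexpand : (u - c) ^ 2 / (2 * c) = 1 / (2 * c) * u ^ 2 + c / 2 - u := by field_simp; ring
  linarith

/- Paley–Zygmund for `exp (θ Y)`; Cauchy–Schwarz enters through `2 uv ≤ u ^ 2 / c + c v ^ 2`. -/
lemma mgf_sq_le_mul_measureReal_le (hY : Measurable Y) {θ a : ℝ} (hθ : 0 ≤ θ)
    (hint : Integrable (fun ω => Real.exp (θ * Y ω)) μ)
    (hint2 : Integrable (fun ω => Real.exp (2 * θ * Y ω)) μ)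
    (ha : 2 * Real.exp (θ * a) ≤ mgf Y μ θ) :
    mgf Y μ θ ^ 2 ≤ 4 * mgf Y μ (2 * θ) * μ.real {ω | a ≤ Y ω} := by
  have hF : 0 < mgf Y μ θ := mgf_pos hint
  have hS : 0 < mgf Y μ (2 * θ) := mgf_pos hint2
  set c : ℝ := 2 * mgf Y μ (2 * θ) / mgf Y μ θ with hc
  have hc0 : 0 < c := by positivity
  have hms : MeasurableSet {ω | a ≤ Y ω} := measurableSet_le measurable_const hY
  have hpt (ω : Ω) : Real.exp (θ * Y ω) ≤ Real.exp (θ * a) + 1 / (2 * c) * Real.exp (2 * θ * Y ω) +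
      c / 2 * {ω | a ≤ Y ω}.indicator 1 ω := by
    have hsq : Real.exp (2 * θ * Y ω) = Real.exp (θ * Y ω) ^ 2 := by
      rw [← Real.exp_nat_mul]; push_cast; ring_nf
    by_cases hω : a ≤ Y ω
    · rw [Set.indicator_of_mem (by exact hω), Pi.one_apply, hsq]
      linarith [Real.exp_pos (θ * a), le_sq_div_add_half hc0 (Real.exp (θ * Y ω))]
    · have : Real.exp (θ * Y ω) ≤ Real.exp (θ * a) := by gcongr; exact (not_le.1 hω).le
      rw [Set.indicator_of_notMem (by exact hω)]
      linarith [show 0 ≤ 1 / (2 * c) * Real.exp (2 * θ * Y ω) by positivity]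
  have hind : Integrable ({ω | a ≤ Y ω}.indicator (1 : Ω → ℝ)) μ :=
    (integrable_const (1 : ℝ)).indicator hms
  have hub : mgf Y μ θ ≤ Real.exp (θ * a) + 1 / (2 * c) * mgf Y μ (2 * θ) +
      c / 2 * μ.real {ω | a ≤ Y ω} := by
    have hg := (integrable_const (Real.exp (θ * a)) (μ := μ)).add (hint2.const_mul (1 / (2 * c)))
    refine (integral_mono hint (hg.add (hind.const_mul (c / 2))) hpt).trans_eq ?_
    rw [integral_add' hg (hind.const_mul _), integral_add' (integrable_const _) (hint2.const_mul _),
      integral_const_mul, integral_const_mul, integral_indicator_one hms]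
    simp [mgf]
  have e1 : 1 / (2 * c) * mgf Y μ (2 * θ) = mgf Y μ θ / 4 := by rw [hc]; field_simp; norm_num
  have e2 : mgf Y μ θ * (c / 2) = mgf Y μ (2 * θ) := by rw [hc]; field_simp
  rw [e1] at hub
  nlinarith [mul_le_mul_of_nonneg_left hub hF.le]

end Anticoncentration

section Spread

variable {κ Ω : Type*} [Fintype κ] [MeasurableSpace Ω] {μ : Measure Ω}

/-- `q` is spread at scale `θ`: at least half of `‖q‖²` is carried by coordinates for which
`|θ q j|` lies in the range where a standard subgaussian moment generating function is bounded
below by a Gaussian one. Linear forms with spread coefficients are anticoncentrated. -/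
def IsSpread (θ : ℝ) (q : κ → ℝ) : Prop :=
  (∑ j, q j ^ 2) / 2 ≤ ∑ j with |θ * q j| ≤ 1 / 16, q j ^ 2

lemma measurableSet_isSpread (θ : ℝ) : MeasurableSet {q : κ → ℝ | IsSpread θ q} := by
  simp only [IsSpread, Finset.sum_filter]
  exact measurableSet_le (by fun_prop) (Finset.measurable_sum _ fun j _ =>
    Measurable.ite (measurableSet_le (by fun_prop) (by fun_prop)) (by fun_prop) (by fun_prop))

variable {W : κ → Ω → ℝ} {q : κ → ℝ} {θ : ℝ}

lemma IsStdSubgaussian.exp_le_mgf_sum_mul (h : IsStdSubgaussian W μ) (hq : IsSpread θ q) :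
    Real.exp (θ ^ 2 * (∑ j, q j ^ 2) / 16) ≤ mgf (fun ω => ∑ j, q j * W j ω) μ θ := by
  have := h.isProbabilityMeasure
  calc Real.exp (θ ^ 2 * (∑ j, q j ^ 2) / 16)
      ≤ Real.exp (θ ^ 2 / 8 * ∑ j with |θ * q j| ≤ 1 / 16, q j ^ 2) := by
        rw [IsSpread] at hq
        gcongr
        calc θ ^ 2 * (∑ j, q j ^ 2) / 16 = θ ^ 2 / 8 * ((∑ j, q j ^ 2) / 2) := by ring
          _ ≤ _ := by gcongr
    _ = ∏ j, if |θ * q j| ≤ 1 / 16 then Real.exp ((θ * q j) ^ 2 / 8) else 1 := by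
        rw [← Finset.prod_filter, ← Real.exp_sum, Finset.mul_sum]
        exact congrArg Real.exp (Finset.sum_congr rfl fun j _ => by ring)
    _ ≤ ∏ j, mgf (W j) μ (θ * q j) := by
        refine Finset.prod_le_prod (fun j _ => by split_ifs <;> positivity) fun j _ => ?_
        split_ifs with hj
        · exact exp_sq_div_eight_le_mgf (h.hasSubgaussianMGF j) (h.integral_eq_zero j)
            (h.integral_sq_eq_one j) hj
        · exact one_le_mgf (h.hasSubgaussianMGF j) (h.integral_eq_zero j) _
    _ = _ := (h.mgf_sum_mul q θ).symm

lemma IsStdSubgaussian.le_measureReal_two_le_sum_mul (h : IsStdSubgaussian W μ)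
    (hq : IsSpread θ q) (hθ : 1 ≤ θ) (hθq : 48 ≤ θ * ∑ j, q j ^ 2) :
    1 / 4 * Real.exp (-(2 * θ ^ 2 * ∑ j, q j ^ 2)) ≤ μ.real {ω | 2 ≤ ∑ j, q j * W j ω} := by
  have := h.isProbabilityMeasure
  set v : ℝ := ∑ j, q j ^ 2
  have hv0 : 0 ≤ v := Finset.sum_nonneg fun j _ => sq_nonneg _
  have hsg : HasSubgaussianMGF (fun ω => ∑ j, q j * W j ω) v.toNNReal μ :=
    h.hasSubgaussianMGF_sum_mul (Real.coe_toNNReal v hv0).ge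
  have hF : Real.exp (θ ^ 2 * v / 16) ≤ mgf (fun ω => ∑ j, q j * W j ω) μ θ :=
    h.exp_le_mgf_sum_mul hq
  have hF1 : 1 ≤ mgf (fun ω => ∑ j, q j * W j ω) μ θ :=
    (Real.one_le_exp (by positivity)).trans hF
  have hS : mgf (fun ω => ∑ j, q j * W j ω) μ (2 * θ) ≤ Real.exp (2 * θ ^ 2 * v) :=
    (hsg.mgf_le (2 * θ)).trans_eq (congrArg Real.exp (by rw [Real.coe_toNNReal v hv0]; ring))
  have hF2 : 2 * Real.exp (θ * 2) ≤ mgf (fun ω => ∑ j, q j * W j ω) μ θ := by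
    calc 2 * Real.exp (θ * 2) ≤ Real.exp 1 * Real.exp (θ * 2) := by
          gcongr
          linarith [Real.add_one_le_exp (1 : ℝ)]
      _ ≤ Real.exp (θ ^ 2 * v / 16) := by rw [← Real.exp_add]; gcongr; nlinarith
      _ ≤ _ := hF
  have hm := h.measurable
  have hpz := mgf_sq_le_mul_measureReal_le (by fun_prop) (by linarith) (hsg.integrable_exp_mul θ)
    (hsg.integrable_exp_mul (2 * θ)) hF2
  rw [Real.exp_neg, ← div_eq_mul_inv, div_le_iff₀ (Real.exp_pos _)]
  nlinarith [mul_le_mul_of_nonneg_right hS (measureReal_nonneg (μ := μ)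
    (s := {ω | 2 ≤ ∑ j, q j * W j ω}))]

end Spread

section TestRows

variable {Ω E F ι κ : Type*} [MeasurableSpace Ω] [MeasurableSpace E] [MeasurableSpace F]
  {μ : Measure Ω}

lemma measureReal_prodMk_mem_le_of_indepFun [IsProbabilityMeasure μ] {X : Ω → E} {Y : Ω → F}
    (hX : Measurable X) (hY : Measurable Y) (hXY : IndepFun X Y μ) {s : Set (E × F)}
    (hs : MeasurableSet s) {ε : ℝ} (hε : ∀ x, μ.real {ω | (x, Y ω) ∈ s} ≤ ε) :
    μ.real {ω | (X ω, Y ω) ∈ s} ≤ ε := by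
  have := Measure.isProbabilityMeasure_map (μ := μ) hX.aemeasurable
  have := Measure.isProbabilityMeasure_map (μ := μ) hY.aemeasurable
  have hne : Nonempty Ω := μ.nonempty_of_neZero
  have hε0 : 0 ≤ ε := measureReal_nonneg.trans (hε (X hne.some))
  have hle : μ {ω | (X ω, Y ω) ∈ s} ≤ ENNReal.ofReal ε :=
    calc μ {ω | (X ω, Y ω) ∈ s} = μ.map (fun ω => (X ω, Y ω)) s :=
          (Measure.map_apply (hX.prodMk hY) hs).symm
      _ = ∫⁻ x, μ.map Y (Prod.mk x ⁻¹' s) ∂(μ.map X) := by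
          rw [(indepFun_iff_map_prod_eq_prod_map_map hX.aemeasurable hY.aemeasurable).1 hXY,
            Measure.prod_apply hs]
      _ ≤ ∫⁻ _, ENNReal.ofReal ε ∂(μ.map X) := lintegral_mono fun x => by
          rw [Measure.map_apply hY (measurable_prodMk_left hs), ← ofReal_measureReal]
          exact ENNReal.ofReal_le_ofReal (hε x)
      _ = ENNReal.ofReal ε := by simp
  exact ENNReal.toReal_le_of_le_ofReal hε0 hle

lemma IsStdSubgaussianMatrix.indepFun_submatrix [Finite ι] {Z : Ω → Matrix ι κ ℝ}
    (h : IsStdSubgaussianMatrix Z μ) {α β : Type*} {f : α → ι} {g : β → ι}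
    (hfg : ∀ a b, f a ≠ g b) :
    IndepFun (fun ω a => Z ω (f a)) (fun ω b => Z ω (g b)) μ := by
  classical
  cases nonempty_fintype ι
  set R : Finset ι := Finset.univ.filter (· ∈ Set.range f) with hR
  have hf (a : α) : f a ∈ R := by simp [hR]
  have hg (b : β) : g b ∈ Rᶜ := by simpa [hR] using fun a => hfg a b
  exact (h.iIndepFun_row.indepFun_finset R Rᶜ disjoint_compl_right h.measurable_row).comp
    (φ := fun v a => v ⟨f a, hf a⟩) (ψ := fun v b => v ⟨g b, hg b⟩) (by fun_prop) (by fun_prop)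

lemma measureReal_card_le_mul_div_four_le [IsProbabilityMeasure μ] [Fintype ι] {Y : ι → Ω → ℝ}
    (hi : iIndepFun Y μ) (hm : ∀ i, Measurable (Y i)) {p t : ℝ}
    (hp : ∀ i, p ≤ μ.real {ω | t ≤ Y i ω}) :
    μ.real {ω | (#{i | t ≤ Y i ω} : ℝ) ≤ p * Fintype.card ι / 4} ≤
      Real.exp (-(p * Fintype.card ι / 4)) := by
  set B : ι → Ω → ℝ := fun i => {ω | t ≤ Y i ω}.indicator 1 with hB
  have hset (i : ι) : MeasurableSet {ω | t ≤ Y i ω} := measurableSet_le measurable_const (hm i)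
  have hBm (i : ι) : Measurable (B i) := measurable_one.indicator (hset i)
  have hBi (i : ι) : Integrable (B i) μ := (integrable_const (1 : ℝ)).indicator (hset i)
  have hBind : iIndepFun B μ := hi.comp (fun _ => (Set.Ici t).indicator 1)
    fun _ => measurable_one.indicator measurableSet_Ici
  have hexp (i : ι) : (fun ω => Real.exp (-1 * B i ω)) =
      fun ω => 1 - (1 - Real.exp (-1)) * B i ω := by
    ext ω
    by_cases hω : t ≤ Y i ω <;> simp [hB, hω]
  have hint (i : ι) : Integrable (fun ω => Real.exp (-1 * B i ω)) μ := by
    rw [hexp]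
    exact (integrable_const _).sub ((hBi i).const_mul _)
  have hmgf (i : ι) : mgf (B i) μ (-1) ≤ Real.exp (-(p / 2)) := by
    have he : Real.exp (-1) < 1 / 2 := by linarith [Real.exp_neg_one_lt_half]
    rw [mgf, hexp, integral_sub (integrable_const _) ((hBi i).const_mul _), integral_const_mul,
      integral_indicator_one (hset i), integral_const, probReal_univ, one_smul]
    nlinarith [Real.add_one_le_exp (-(p / 2)), hp i,
      measureReal_nonneg (μ := μ) (s := {ω | t ≤ Y i ω})]
  have hcard (ω : Ω) : (#{i | t ≤ Y i ω} : ℝ) = (∑ i, B i) ω := by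
    simp [hB, Set.indicator_apply]
  simp_rw [hcard]
  refine (measure_le_le_exp_mul_mgf _ (by norm_num)
    (hBind.integrable_exp_mul_sum (t := -1) hBm fun i _ => hint i)).trans ?_
  rw [hBind.mgf_sum hBm]
  calc _ ≤ Real.exp (-(-1) * (p * Fintype.card ι / 4)) * ∏ _i : ι, Real.exp (-(p / 2)) := by
        gcongr with i
        · exact fun _ _ => mgf_nonneg
        · exact hmgf i
    _ = _ := by
        rw [Finset.prod_const, Finset.card_univ, ← Real.exp_nat_mul, ← Real.exp_add]
        congr 1
        ring

variable [Fintype κ]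

lemma IsStdSubgaussianMatrix.measureReal_lt_sum_mulVec_sq_le {Z : Ω → Matrix ι κ ℝ}
    (h : IsStdSubgaussianMatrix Z μ) (J : Finset ι) {K : ℝ} (hK : 0 < K) {q : κ → ℝ}
    (hq : q ⬝ᵥ q ≤ K) (t : ℝ) :
    μ.real {ω | 4 * K * t < ∑ i ∈ J, (Z ω *ᵥ q) i ^ 2} ≤ 2 ^ #J * Real.exp (-t) := by
  have := h.isProbabilityMeasure
  have hm := h.measurable_row
  have hsg (i : ι) : HasSubgaussianMGF (fun ω => (Z ω *ᵥ q) i) K.toNNReal μ := by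
    simp only [mulVec, dotProduct_comm _ q]
    exact (h.row i).hasSubgaussianMGF_sum_mul (by
      rw [Real.coe_toNNReal K hK.le]
      simpa only [dotProduct, sq] using hq)
  set Y : ι → Ω → ℝ := fun i ω => (Z ω *ᵥ q) i ^ 2 / (4 * K) with hY
  have hexp (i : ι) : (fun ω => Real.exp (1 * Y i ω)) =
      fun ω => Real.exp ((Z ω *ᵥ q) i ^ 2 / (4 * K.toNNReal)) := by
    simp only [hY, one_mul, Real.coe_toNNReal K hK.le]
  have hind : iIndepFun Y μ := h.iIndepFun_row.comp
    (fun _ (z : κ → ℝ) => (z ⬝ᵥ q) ^ 2 / (4 * K)) fun _ => by unfold dotProduct; fun_prop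
  have hYm (i : ι) : Measurable (Y i) := by
    have := hm i
    simp only [hY, mulVec, dotProduct]
    fun_prop
  have hint (i : ι) : Integrable (fun ω => Real.exp (1 * Y i ω)) μ := by
    rw [hexp]
    exact integrable_exp_sq_div (hsg i)
  have hmgf (i : ι) : mgf (Y i) μ 1 ≤ 2 := by
    rw [mgf, hexp]
    exact integral_exp_sq_div_le (hsg i)
  have hsub : {ω | 4 * K * t < ∑ i ∈ J, (Z ω *ᵥ q) i ^ 2} ⊆
      {ω | t ≤ (∑ i ∈ J, Y i) ω} := fun ω hω => by
    simp only [Set.mem_ofPred_eq, Finset.sum_apply, hY, ← Finset.sum_div] at hω ⊢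
    rw [le_div_iff₀ (by positivity)]
    linarith
  refine (measureReal_mono hsub).trans ((measure_ge_le_exp_mul_mgf _ zero_le_one
    (hind.integrable_exp_mul_sum hYm fun i _ => hint i)).trans ?_)
  rw [hind.mgf_sum hYm, mul_comm, neg_one_mul, ← Finset.prod_const]
  gcongr with i
  · exact fun _ _ => mgf_nonneg
  · exact hmgf i

lemma IsStdSubgaussianMatrix.measureReal_card_two_le_mulVec_le [Fintype ι] {Z : Ω → Matrix ι κ ℝ}
    (h : IsStdSubgaussianMatrix Z μ) {q : κ → ℝ} {θ v p : ℝ} (hq : IsSpread θ q) (hθ : 1 ≤ θ)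
    (hθq : 48 ≤ θ * (q ⬝ᵥ q)) (hqv : q ⬝ᵥ q ≤ v) (hp : p ≤ 1 / 4 * Real.exp (-(2 * θ ^ 2 * v))) :
    μ.real {ω | (#{i | 2 ≤ (Z ω *ᵥ q) i} : ℝ) ≤ p * Fintype.card ι / 4} ≤
      Real.exp (-(p * Fintype.card ι / 4)) := by
  have := h.isProbabilityMeasure
  have hm := h.measurable_row
  have hsq : ∑ j, q j ^ 2 = q ⬝ᵥ q := Finset.sum_congr rfl fun j _ => sq (q j)
  refine measureReal_card_le_mul_div_four_le
    (h.iIndepFun_row.comp (fun _ (z : κ → ℝ) => z ⬝ᵥ q) fun _ => by unfold dotProduct; fun_prop)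
    (fun i => by have := hm i; simp only [dotProduct]; fun_prop) fun i => ?_
  have hanti := (h.row i).le_measureReal_two_le_sum_mul hq hθ (hθq.trans_eq (by rw [hsq]))
  rw [hsq] at hanti
  simp only [dotProduct_comm _ q]
  refine hp.trans (le_trans ?_ hanti)
  gcongr

end TestRows

section KernelProjection

variable {T A κ : Type*} [Fintype T] [Fintype κ]

lemma vecMul_dotProduct_self (U : Matrix T κ ℝ) (x : T → ℝ) :
    (x ᵥ* U) ⬝ᵥ (x ᵥ* U) = x ⬝ᵥ ((U * Uᵀ) *ᵥ x) := by
  rw [← mulVec_mulVec, mulVec_transpose, dotProduct_mulVec]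

variable [DecidableEq T]

lemma isUnit_det_mul_transpose {U : Matrix T κ ℝ} (hU : ∀ x, x ᵥ* U = 0 → x = 0) :
    IsUnit (U * Uᵀ).det := by
  rw [← isUnit_iff_isUnit_det, ← mulVec_injective_iff_isUnit, ← coe_mulVecLin,
    ← LinearMap.ker_eq_bot, LinearMap.ker_eq_bot']
  intro x hx
  refine hU x (dotProduct_self_eq_zero.1 ?_)
  rw [vecMul_dotProduct_self, ← mulVecLin_apply, hx, dotProduct_zero]

/-- The minimum-norm solution `w` of `U *ᵥ w = 1`, when the rows of `U` are independent. -/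
def minNormInterpolant (U : Matrix T κ ℝ) : κ → ℝ := ((U * Uᵀ)⁻¹ *ᵥ 1) ᵥ* U

variable [DecidableEq κ]

/-- The orthogonal projection onto the kernel of `U`, when the rows of `U` are independent. -/
def kernelProj (U : Matrix T κ ℝ) : Matrix κ κ ℝ := 1 - Uᵀ * (U * Uᵀ)⁻¹ * U

lemma kernelProj_mulVec (U : Matrix T κ ℝ) (v : κ → ℝ) :
    kernelProj U *ᵥ v = v - ((U * Uᵀ)⁻¹ *ᵥ (U *ᵥ v)) ᵥ* U := by
  rw [kernelProj, sub_mulVec, one_mulVec, ← mulVec_mulVec, ← mulVec_mulVec, mulVec_transpose]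

lemma transpose_kernelProj (U : Matrix T κ ℝ) : (kernelProj U)ᵀ = kernelProj U := by
  simp only [kernelProj, transpose_sub, transpose_one, transpose_mul, transpose_transpose,
    transpose_nonsing_inv, Matrix.mul_assoc]

lemma kernelProj_mul_self {U : Matrix T κ ℝ} (hU : IsUnit (U * Uᵀ).det) :
    kernelProj U * kernelProj U = kernelProj U := by
  have hzero : U * kernelProj U = 0 := by
    rw [kernelProj, Matrix.mul_sub, Matrix.mul_one, ← Matrix.mul_assoc, ← Matrix.mul_assoc,
      mul_nonsing_inv _ hU, Matrix.one_mul, sub_self]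
  conv_lhs => enter [1]; unfold kernelProj
  rw [Matrix.sub_mul, Matrix.one_mul, Matrix.mul_assoc, hzero, Matrix.mul_zero, sub_zero]

lemma dotProduct_kernelProj_mulVec {U : Matrix T κ ℝ} (hU : IsUnit (U * Uᵀ).det) (v : κ → ℝ) :
    v ⬝ᵥ (kernelProj U *ᵥ v) = (kernelProj U *ᵥ v) ⬝ᵥ (kernelProj U *ᵥ v) := by
  rw [dotProduct_mulVec (kernelProj U *ᵥ v), ← mulVec_transpose, transpose_kernelProj,
    mulVec_mulVec, kernelProj_mul_self hU, dotProduct_comm]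

lemma kernelProj_mulVec_dotProduct_self_le {U : Matrix T κ ℝ} (hU : IsUnit (U * Uᵀ).det)
    (v : κ → ℝ) : (kernelProj U *ᵥ v) ⬝ᵥ (kernelProj U *ᵥ v) ≤ v ⬝ᵥ v := by
  have hres : 0 ≤ (v - kernelProj U *ᵥ v) ⬝ᵥ (v - kernelProj U *ᵥ v) :=
    dotProduct_self_star_nonneg (v - kernelProj U *ᵥ v)
  rw [sub_dotProduct, dotProduct_sub, dotProduct_sub, dotProduct_comm (kernelProj U *ᵥ v) v,
    dotProduct_kernelProj_mulVec hU] at hres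
  linarith

lemma schur_mulVec_eq_one_sub [Fintype A] {U : Matrix T κ ℝ} {V : Matrix A κ ℝ}
    (hU : IsUnit (U * Uᵀ).det) {x : T → ℝ} {y : A → ℝ} (hT : U *ᵥ (x ᵥ* U + y ᵥ* V) = 1)
    (hA : V *ᵥ (x ᵥ* U + y ᵥ* V) = 1) :
    (V * kernelProj U * Vᵀ) *ᵥ y = 1 - V *ᵥ minNormInterpolant U := by
  have hx : x = (U * Uᵀ)⁻¹ *ᵥ 1 - (U * Uᵀ)⁻¹ *ᵥ (U *ᵥ (y ᵥ* V)) := by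
    rw [← hT, mulVec_add, mulVec_add, add_sub_cancel_right, ← mulVec_transpose U x,
      mulVec_mulVec x, mulVec_mulVec, nonsing_inv_mul _ hU, one_mulVec]
  have hsum : x ᵥ* U + y ᵥ* V = minNormInterpolant U + kernelProj U *ᵥ (y ᵥ* V) := by
    rw [hx, sub_vecMul, kernelProj_mulVec, minNormInterpolant]
    abel
  rw [hsum, mulVec_add] at hA
  rw [← mulVec_mulVec, mulVec_transpose, ← mulVec_mulVec, ← hA, add_sub_cancel_left]

lemma le_dotProduct_schur_mulVec [Fintype A] {U : Matrix T κ ℝ} {V : Matrix A κ ℝ}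
    (hU : IsUnit (U * Uᵀ).det) {c : ℝ} (hc : 0 ≤ c)
    (hUV : ∀ x y, c * (x ⬝ᵥ x + y ⬝ᵥ y) ≤ (x ᵥ* U + y ᵥ* V) ⬝ᵥ (x ᵥ* U + y ᵥ* V)) (y : A → ℝ) :
    c * (y ⬝ᵥ y) ≤ y ⬝ᵥ ((V * kernelProj U * Vᵀ) *ᵥ y) := by
  set x : T → ℝ := -((U * Uᵀ)⁻¹ *ᵥ (U *ᵥ (y ᵥ* V)))
  have hxy : x ᵥ* U + y ᵥ* V = kernelProj U *ᵥ (y ᵥ* V) := by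
    rw [kernelProj_mulVec, neg_vecMul]
    abel
  have hx : 0 ≤ x ⬝ᵥ x := dotProduct_self_star_nonneg x
  calc c * (y ⬝ᵥ y) ≤ c * (x ⬝ᵥ x + y ⬝ᵥ y) := by gcongr; linarith
    _ ≤ (kernelProj U *ᵥ (y ᵥ* V)) ⬝ᵥ (kernelProj U *ᵥ (y ᵥ* V)) := hxy ▸ hUV x y
    _ = y ⬝ᵥ ((V * kernelProj U * Vᵀ) *ᵥ y) := by
      rw [← dotProduct_kernelProj_mulVec hU, ← dotProduct_mulVec, ← mulVec_mulVec,
        ← mulVec_mulVec, mulVec_transpose]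

end KernelProjection

section Decoupling

variable {A : Type*} [Fintype A]

lemma sq_mul_dotProduct_self_le {M : Matrix A A ℝ} {c : ℝ} (hc : 0 ≤ c) {b : A → ℝ}
    (hM : c * (b ⬝ᵥ b) ≤ b ⬝ᵥ (M *ᵥ b)) : c ^ 2 * (b ⬝ᵥ b) ≤ (M *ᵥ b) ⬝ᵥ (M *ᵥ b) := by
  have hres : 0 ≤ (M *ᵥ b - c • b) ⬝ᵥ (M *ᵥ b - c • b) :=
    dotProduct_self_star_nonneg (M *ᵥ b - c • b)
  simp only [sub_dotProduct, dotProduct_sub, smul_dotProduct, dotProduct_smul, smul_eq_mul,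
    dotProduct_comm (M *ᵥ b) b] at hres
  nlinarith

lemma neg_sqrt_le_sum_mul {M : Matrix A A ℝ} {b : A → ℝ} {I J : Finset A} {B : ℝ}
    (hB : ∑ l ∈ J, (∑ i ∈ I, M i l) ^ 2 ≤ B) :
    -√((b ⬝ᵥ b) * B) ≤ ∑ i ∈ I, ∑ l ∈ J, M i l * b l := by
  have hswap : ∑ i ∈ I, ∑ l ∈ J, M i l * b l = ∑ l ∈ J, b l * ∑ i ∈ I, M i l := by
    rw [Finset.sum_comm]
    simp only [Finset.mul_sum, mul_comm]
  have hb : ∑ l ∈ J, b l ^ 2 ≤ b ⬝ᵥ b := by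
    simpa only [dotProduct, sq] using Finset.sum_le_sum_of_subset_of_nonneg (Finset.subset_univ J)
      fun i _ _ => mul_self_nonneg (b i)
  have hbb : 0 ≤ b ⬝ᵥ b := dotProduct_self_star_nonneg b
  rw [hswap]
  refine (abs_le.1 (Real.abs_le_sqrt ?_)).1
  calc _ ≤ (∑ l ∈ J, b l ^ 2) * ∑ l ∈ J, (∑ i ∈ I, M i l) ^ 2 :=
        Finset.sum_mul_sq_le_sq_mul_sq _ _ _
    _ ≤ _ := by gcongr

variable [DecidableEq A]

lemma four_mul_card_mem_notMem {i l : A} (hil : i ≠ l) :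
    4 * #{τ : Finset A | i ∈ τ ∧ l ∉ τ} = 2 ^ Fintype.card A := by
  have hIcc : ({τ : Finset A | i ∈ τ ∧ l ∉ τ} : Finset (Finset A)) = Finset.Icc {i} {l}ᶜ := by
    ext τ
    simp [Finset.subset_compl_comm (s := τ)]
  have hcard : 2 ≤ Fintype.card A := by
    simpa [Finset.card_pair hil] using Finset.card_le_univ ({i, l} : Finset A)
  obtain ⟨k, hk⟩ := Nat.exists_eq_add_of_le' hcard
  rw [hIcc, Finset.card_Icc_finset (by simpa using hil.symm), Finset.card_compl,
    Finset.card_singleton, Finset.card_singleton, hk, pow_add, mul_comm]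
  rfl

lemma two_pow_card_mul_sum_erase (F : A → A → ℝ) (S : Finset A) :
    2 ^ Fintype.card A * ∑ i ∈ S, ∑ l ∈ Finset.univ.erase i, F i l =
      4 * ∑ τ : Finset A, ∑ i ∈ S ∩ τ, ∑ l ∈ τᶜ, F i l := by
  have hτ (τ : Finset A) : ∑ i ∈ S ∩ τ, ∑ l ∈ τᶜ, F i l =
      ∑ i ∈ S, ∑ l ∈ Finset.univ.erase i, if i ∈ τ ∧ l ∉ τ then F i l else 0 := by
    rw [← Finset.filter_mem_eq_inter, Finset.sum_filter]
    refine Finset.sum_congr rfl fun i _ => ?_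
    split_ifs with hi
    · simp only [hi, true_and, ← Finset.sum_filter]
      congr 1
      ext l
      simp only [Finset.mem_compl, Finset.mem_filter, Finset.mem_erase, Finset.mem_univ, and_true]
      exact ⟨fun hl => ⟨fun h => hl (h ▸ hi), hl⟩, And.right⟩
    · simp [hi]
  simp_rw [hτ]
  rw [Finset.sum_comm, Finset.mul_sum, Finset.mul_sum]
  refine Finset.sum_congr rfl fun i _ => ?_
  rw [Finset.sum_comm, Finset.mul_sum, Finset.mul_sum]
  refine Finset.sum_congr rfl fun l hl => ?_
  rw [← Finset.sum_filter, Finset.sum_const, nsmul_eq_mul, ← mul_assoc]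
  congr 1
  exact_mod_cast (four_mul_card_mem_notMem (Finset.ne_of_mem_erase hl).symm).symm

/- A uniformly random `τ ⊆ A` keeps each off-diagonal pair with probability `1 / 4`, so the
off-diagonal sum is four times the average of its decoupled versions. -/
lemma card_sq_le_of_mulVec_le_neg_one {M : Matrix A A ℝ} (hdiag : ∀ i, 0 ≤ M i i) {b : A → ℝ}
    (hb : ∀ i, 0 ≤ b i) {S : Finset A} (hS : ∀ i ∈ S, (M *ᵥ b) i ≤ -1) {B : ℝ} (hB0 : 0 ≤ B)
    (hB : ∀ τ, ∑ l ∈ τᶜ, (∑ i ∈ S ∩ τ, M i l) ^ 2 ≤ B) :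
    (#S : ℝ) ^ 2 ≤ 16 * ((b ⬝ᵥ b) * B) := by
  have hoff : ∑ i ∈ S, ∑ l ∈ Finset.univ.erase i, M i l * b l ≤ -#S := by
    have hrow : ∀ i ∈ S, ∑ l ∈ Finset.univ.erase i, M i l * b l ≤ -1 := fun i hi => by
      have hsplit : M i i * b i + ∑ l ∈ Finset.univ.erase i, M i l * b l = (M *ᵥ b) i :=
        Finset.add_sum_erase Finset.univ (fun l => M i l * b l) (Finset.mem_univ i)
      linarith [mul_nonneg (hdiag i) (hb i), hS i hi]
    simpa using Finset.sum_le_sum hrow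
  have hsum : -(2 ^ Fintype.card A * √((b ⬝ᵥ b) * B)) ≤
      ∑ τ : Finset A, ∑ i ∈ S ∩ τ, ∑ l ∈ τᶜ, M i l * b l := by
    simpa using Finset.sum_le_sum fun τ (_ : τ ∈ Finset.univ) =>
      neg_sqrt_le_sum_mul (b := b) (hB τ)
  have hcard : (#S : ℝ) ≤ 4 * √((b ⬝ᵥ b) * B) := by
    refine le_of_mul_le_mul_left ?_ (by positivity : (0 : ℝ) < 2 ^ Fintype.card A)
    have := two_pow_card_mul_sum_erase (fun i l => M i l * b l) S
    nlinarith [mul_le_mul_of_nonneg_left hoff (by positivity : (0 : ℝ) ≤ 2 ^ Fintype.card A)]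
  have hbb : 0 ≤ b ⬝ᵥ b := dotProduct_self_star_nonneg b
  calc (#S : ℝ) ^ 2 ≤ (4 * √((b ⬝ᵥ b) * B)) ^ 2 := by gcongr
    _ = _ := by rw [mul_pow, Real.sq_sqrt (by positivity)]; ring

end Decoupling

section DualCertificate

variable {T A ι κ : Type*} [Fintype T] [Fintype A] [Fintype ι] [Fintype κ]
  {lam : κ → ℝ} {c M : ℝ}

/-- A nonnegative solution `β` of `X Xᵀ β = 1`. When the labels are absorbed into the rows of `X`,
this is the dual certificate that every example is a support vector. -/
def HasNonnegDual (X : Matrix ι κ ℝ) : Prop :=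
  ∃ β : ι → ℝ, (∀ i, 0 ≤ β i) ∧ X *ᵥ (β ᵥ* X) = 1

lemma GramConcentrated.toRows₁ {Z : Matrix (T ⊕ A) κ ℝ} (h : GramConcentrated Z lam c) :
    GramConcentrated Z.toRows₁ lam c := fun x => by
  have hx := h (Sum.elim x 0)
  rwa [← fromRows_toRows Z, sumElim_vecMul_fromRows, zero_vecMul, add_zero,
    sumElim_dotProduct_sumElim, zero_dotProduct, add_zero] at hx

lemma GramConcentrated.toRows₂ {Z : Matrix (T ⊕ A) κ ℝ} (h : GramConcentrated Z lam c) :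
    GramConcentrated Z.toRows₂ lam c := fun x => by
  have hx := h (Sum.elim 0 x)
  rwa [← fromRows_toRows Z, sumElim_vecMul_fromRows, zero_vecMul, zero_add,
    sumElim_dotProduct_sumElim, zero_dotProduct, zero_add] at hx

variable [DecidableEq T] [DecidableEq κ]

/-- The data matrix `Z diag(lam)^{1/2}` with standardized data `Z`. -/
def scaled (lam : κ → ℝ) (Z : Matrix ι κ ℝ) : Matrix ι κ ℝ := Z * diagonal fun j => √(lam j)

/-- The direction `q` with `⟨x, w⟩ = ⟨z, q⟩` for `x = diag(lam)^{1/2} z`, where `w` is the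
minimum-norm interpolant of the training rows `Z`. -/
def interpolantCoeff (lam : κ → ℝ) (Z : Matrix T κ ℝ) : κ → ℝ :=
  diagonal (fun j => √(lam j)) *ᵥ minNormInterpolant (scaled lam Z)

/-- The direction `q` with `⟨x, P x'⟩ = ⟨z, q⟩` for `x = diag(lam)^{1/2} z` and
`x' = diag(lam)^{1/2} v`, where `P` projects onto the kernel of the training rows `Z`. -/
def residualCoeff (lam : κ → ℝ) (Z : Matrix T κ ℝ) (v : κ → ℝ) : κ → ℝ :=
  diagonal (fun j => √(lam j)) *ᵥ (kernelProj (scaled lam Z) *ᵥ (v ᵥ* diagonal fun j => √(lam j)))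

lemma vecMul_scaled_dotProduct_self (hlam : ∀ j, 0 ≤ lam j) (Z : Matrix ι κ ℝ) (x : ι → ℝ) :
    (x ᵥ* scaled lam Z) ⬝ᵥ (x ᵥ* scaled lam Z) = ∑ j, lam j * (x ᵥ* Z) j ^ 2 := by
  rw [scaled, ← vecMul_vecMul]
  refine Finset.sum_congr rfl fun j _ => ?_
  rw [vecMul_diagonal, mul_mul_mul_comm, Real.mul_self_sqrt (hlam j)]
  ring

lemma GramConcentrated.le_vecMul_scaled {Z : Matrix ι κ ℝ} (h : GramConcentrated Z lam c)
    (hlam : ∀ j, 0 ≤ lam j) (x : ι → ℝ) :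
    (1 - c) * (∑ j, lam j) * (x ⬝ᵥ x) ≤ (x ᵥ* scaled lam Z) ⬝ᵥ (x ᵥ* scaled lam Z) := by
  rw [vecMul_scaled_dotProduct_self hlam]
  linarith [(abs_le.1 (h x)).1]

lemma GramConcentrated.vecMul_scaled_le {Z : Matrix ι κ ℝ} (h : GramConcentrated Z lam c)
    (hlam : ∀ j, 0 ≤ lam j) (x : ι → ℝ) :
    (x ᵥ* scaled lam Z) ⬝ᵥ (x ᵥ* scaled lam Z) ≤ (1 + c) * (∑ j, lam j) * (x ⬝ᵥ x) := by
  rw [vecMul_scaled_dotProduct_self hlam]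
  linarith [(abs_le.1 (h x)).2]

lemma GramConcentrated.eq_zero_of_vecMul_scaled_eq_zero {Z : Matrix ι κ ℝ}
    (h : GramConcentrated Z lam c) (hc : c < 1) (hlam : ∀ j, 0 ≤ lam j) (hL : 0 < ∑ j, lam j)
    {x : ι → ℝ} (hx : x ᵥ* scaled lam Z = 0) : x = 0 := by
  have hle := h.le_vecMul_scaled hlam x
  have hxx : 0 ≤ x ⬝ᵥ x := dotProduct_self_star_nonneg x
  rw [hx, dotProduct_zero] at hle
  have hpos : 0 < (1 - c) * ∑ j, lam j := mul_pos (sub_pos.2 hc) hL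
  exact dotProduct_self_eq_zero.1 (le_antisymm (nonpos_of_mul_nonpos_right hle hpos) hxx)

lemma GramConcentrated.isUnit_det_scaled {Z : Matrix T κ ℝ} (h : GramConcentrated Z lam c)
    (hc : c < 1) (hlam : ∀ j, 0 ≤ lam j) (hL : 0 < ∑ j, lam j) :
    IsUnit (scaled lam Z * (scaled lam Z)ᵀ).det :=
  isUnit_det_mul_transpose fun _ => h.eq_zero_of_vecMul_scaled_eq_zero hc hlam hL

lemma mulVec_interpolantCoeff {α : Type*} (Z : Matrix T κ ℝ) (Z' : Matrix α κ ℝ) :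
    Z' *ᵥ interpolantCoeff lam Z = scaled lam Z' *ᵥ minNormInterpolant (scaled lam Z) :=
  mulVec_mulVec _ _ _

lemma residualCoeff_dotProduct_self_le {Z : Matrix (T ⊕ A) κ ℝ} (h : GramConcentrated Z lam c)
    (hc : c < 1) (hlam : ∀ j, 0 ≤ lam j) (hL : 0 < ∑ j, lam j) (hM0 : 0 ≤ M)
    (hM : ∀ j, lam j ≤ M) (I : Finset A) :
    residualCoeff lam Z.toRows₁ (∑ i ∈ I, Z.toRows₂.row i) ⬝ᵥ
      residualCoeff lam Z.toRows₁ (∑ i ∈ I, Z.toRows₂.row i) ≤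
        M * ((1 + c) * (∑ j, lam j) * #I) := by
  classical
  set e : A → ℝ := fun i => if i ∈ I then 1 else 0 with he
  have hsum : ∑ i ∈ I, Z.toRows₂.row i = e ᵥ* Z.toRows₂ := by
    ext j
    simp [he, vecMul, dotProduct, Finset.sum_apply]
  set r := kernelProj (scaled lam Z.toRows₁) *ᵥ (e ᵥ* scaled lam Z.toRows₂) with hr
  have hcoeff : residualCoeff lam Z.toRows₁ (∑ i ∈ I, Z.toRows₂.row i) =
      diagonal (fun j => √(lam j)) *ᵥ r := by
    rw [residualCoeff, hsum, vecMul_vecMul, hr, scaled]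
    rfl
  have hee : e ⬝ᵥ e = #I := by simp [he, dotProduct]
  calc _ = ∑ j, lam j * (r j * r j) := by
        rw [hcoeff]
        refine Finset.sum_congr rfl fun j _ => ?_
        rw [mulVec_diagonal, mul_mul_mul_comm, Real.mul_self_sqrt (hlam j)]
    _ ≤ M * (r ⬝ᵥ r) := by
        rw [dotProduct, Finset.mul_sum]
        exact Finset.sum_le_sum fun j _ => mul_le_mul_of_nonneg_right (hM j) (mul_self_nonneg _)
    _ ≤ _ := by
        rw [← hee]
        gcongr
        exact (kernelProj_mulVec_dotProduct_self_le
          (h.toRows₁.isUnit_det_scaled hc hlam hL) _).trans (h.toRows₂.vecMul_scaled_le hlam e)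

lemma sum_schur_eq_mulVec_residualCoeff {α : Type*} (Z : Matrix T κ ℝ) (Z' : Matrix α κ ℝ)
    (I : Finset α) (l : α) :
    ∑ i ∈ I, (scaled lam Z' * kernelProj (scaled lam Z) * (scaled lam Z')ᵀ) i l =
      (Z' *ᵥ residualCoeff lam Z (∑ i ∈ I, Z'.row i)) l := by
  set P := kernelProj (scaled lam Z) with hP
  have hsum : (∑ i ∈ I, Z'.row i) ᵥ* (diagonal fun j => √(lam j)) =
      ∑ i ∈ I, (scaled lam Z').row i :=
    sum_vecMul _ _ _
  have hswap (i : α) : (scaled lam Z').row l ⬝ᵥ (P *ᵥ (scaled lam Z').row i) =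
      (scaled lam Z').row i ⬝ᵥ (P *ᵥ (scaled lam Z').row l) := by
    rw [dotProduct_mulVec, ← mulVec_transpose, hP, transpose_kernelProj, dotProduct_comm]
  calc _ = ∑ i ∈ I, (scaled lam Z').row i ⬝ᵥ (P *ᵥ (scaled lam Z').row l) :=
        Finset.sum_congr rfl fun i _ => by
          rw [Matrix.mul_assoc]
          rfl
    _ = (scaled lam Z').row l ⬝ᵥ (P *ᵥ ∑ i ∈ I, (scaled lam Z').row i) := by
        rw [mulVec_sum, dotProduct_sum]
        exact Finset.sum_congr rfl fun i _ => (hswap i).symm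
    _ = _ := by
        rw [residualCoeff, mulVec_mulVec, hsum]
        rfl

lemma schur_diag_nonneg {α : Type*} {U : Matrix T κ ℝ} (hU : IsUnit (U * Uᵀ).det)
    (V : Matrix α κ ℝ) (i : α) :
    0 ≤ (V * kernelProj U * Vᵀ) i i := by
  have hi : (V * kernelProj U * Vᵀ) i i = V.row i ⬝ᵥ (kernelProj U *ᵥ V.row i) := by
    rw [Matrix.mul_assoc]
    rfl
  rw [hi, dotProduct_kernelProj_mulVec hU]
  exact dotProduct_self_star_nonneg (kernelProj U *ᵥ V.row i)

lemma one_sub_dotProduct_self_le {a : A → ℝ} (h : ∑ i, a i ^ 2 ≤ 16 * Fintype.card A) :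
    (1 - a) ⬝ᵥ (1 - a) ≤ (34 * Fintype.card A : ℝ) :=
  calc (1 - a) ⬝ᵥ (1 - a) ≤ ∑ i, (2 + 2 * a i ^ 2) :=
        Finset.sum_le_sum fun i _ => by
          simp only [Pi.sub_apply, Pi.one_apply]
          nlinarith [sq_nonneg (1 + a i)]
    _ = 2 * Fintype.card A + 2 * ∑ i, a i ^ 2 := by
        rw [Finset.sum_add_distrib, ← Finset.mul_sum]
        simp [mul_comm]
    _ ≤ _ := by linarith

lemma HasNonnegDual.exists_schur_mulVec_eq {U : Matrix T κ ℝ} {V : Matrix A κ ℝ}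
    (h : HasNonnegDual (fromRows U V)) (hU : IsUnit (U * Uᵀ).det) :
    ∃ b : A → ℝ, (∀ i, 0 ≤ b i) ∧
      (V * kernelProj U * Vᵀ) *ᵥ b = 1 - V *ᵥ minNormInterpolant U := by
  obtain ⟨β, hβ, hβ1⟩ := h
  rw [vecMul_fromRows, fromRows_mulVec] at hβ1
  exact ⟨β ∘ Sum.inr, fun _ => hβ _, schur_mulVec_eq_one_sub hU
    (funext fun k => congrFun hβ1 (Sum.inl k)) (funext fun i => congrFun hβ1 (Sum.inr i))⟩

lemma GramConcentrated.le_dotProduct_schur_mulVec {Z : Matrix (T ⊕ A) κ ℝ}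
    (h : GramConcentrated Z lam c) (hc : c < 1) (hlam : ∀ j, 0 ≤ lam j) (hL : 0 < ∑ j, lam j)
    (y : A → ℝ) :
    (1 - c) * (∑ j, lam j) * (y ⬝ᵥ y) ≤ y ⬝ᵥ ((scaled lam Z.toRows₂ *
      kernelProj (scaled lam Z.toRows₁) * (scaled lam Z.toRows₂)ᵀ) *ᵥ y) := by
  refine SVProliferation.le_dotProduct_schur_mulVec (h.toRows₁.isUnit_det_scaled hc hlam hL)
    (mul_nonneg (sub_nonneg.2 hc.le) hL.le) (fun x y => ?_) y
  rw [← sumElim_vecMul_fromRows, ← sumElim_dotProduct_sumElim]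
  refine (h.le_vecMul_scaled hlam (Sum.elim x y)).trans_eq ?_
  rw [← fromRows_toRows (scaled lam Z)]
  rfl

/- The constant `136 = 4 * 34` bounds `L ^ 2 ‖b‖ ^ 2 / card A`, and `69632 = 16 * 32 * 136`. -/
lemma card_sq_mul_le [DecidableEq A] {Z : Matrix (T ⊕ A) κ ℝ}
    (h : GramConcentrated Z lam (1 / 100)) (hlam : ∀ j, 0 ≤ lam j) (hL : 0 < ∑ j, lam j)
    (hM0 : 0 ≤ M) (hdual : HasNonnegDual (scaled lam Z))
    (hmargin : ∑ i, (Z.toRows₂ *ᵥ interpolantCoeff lam Z.toRows₁) i ^ 2 ≤ 16 * Fintype.card A)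
    (hresidual : ∀ τ I : Finset A, I ⊆ τ →
      ∑ l ∈ τᶜ, (Z.toRows₂ *ᵥ residualCoeff lam Z.toRows₁ (∑ i ∈ I, Z.toRows₂.row i)) l ^ 2 ≤
        32 * M * (∑ j, lam j) * (#I + 1) * Fintype.card A)
    {S : Finset A} (hS : ∀ i ∈ S, 2 ≤ (Z.toRows₂ *ᵥ interpolantCoeff lam Z.toRows₁) i) :
    (#S : ℝ) ^ 2 * ∑ j, lam j ≤ 69632 * M * (#S + 1) * Fintype.card A ^ 2 := by
  have hc : (1 / 100 : ℝ) < 1 := by norm_num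
  have hdet := h.toRows₁.isUnit_det_scaled hc hlam hL
  rw [← fromRows_toRows (scaled lam Z)] at hdual
  obtain ⟨b, hb0, hb⟩ := hdual.exists_schur_mulVec_eq hdet
  change (scaled lam Z.toRows₂ * kernelProj (scaled lam Z.toRows₁) *
    (scaled lam Z.toRows₂)ᵀ) *ᵥ b =
      1 - scaled lam Z.toRows₂ *ᵥ minNormInterpolant (scaled lam Z.toRows₁) at hb
  rw [← mulVec_interpolantCoeff] at hb
  set L := ∑ j, lam j with hLdef
  set m : ℝ := (Fintype.card A : ℝ)
  have hbb : L ^ 2 * (b ⬝ᵥ b) ≤ 136 * m := by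
    have hsq := sq_mul_dotProduct_self_le (by positivity)
      (h.le_dotProduct_schur_mulVec hc hlam hL b)
    rw [hb] at hsq
    have hb0 : 0 ≤ b ⬝ᵥ b := dotProduct_self_star_nonneg b
    nlinarith [one_sub_dotProduct_self_le hmargin, mul_nonneg (sq_nonneg L) hb0]
  have hcard : (#S : ℝ) ^ 2 ≤ 16 * ((b ⬝ᵥ b) * (32 * M * L * (#S + 1) * m)) := by
    refine card_sq_le_of_mulVec_le_neg_one (schur_diag_nonneg hdet (scaled lam Z.toRows₂))
      hb0 (fun i hi => ?_) (by positivity) fun τ => ?_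
    · rw [hb, Pi.sub_apply, Pi.one_apply]
      linarith [hS i hi]
    · simp only [sum_schur_eq_mulVec_residualCoeff]
      refine (hresidual τ _ Finset.inter_subset_right).trans ?_
      gcongr
      exact Finset.inter_subset_left
  refine le_of_mul_le_mul_left ?_ hL
  calc L * (#S ^ 2 * L) ≤ L * (16 * ((b ⬝ᵥ b) * (32 * M * L * (#S + 1) * m)) * L) := by gcongr
    _ = 512 * M * L * (#S + 1) * m * (L ^ 2 * (b ⬝ᵥ b)) := by ring
    _ ≤ 512 * M * L * (#S + 1) * m * (136 * m) := by gcongr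
    _ = _ := by ring

end DualCertificate

section SupportVectors

variable {n d : ℕ} {X : Matrix (Fin n) (Fin d) ℝ} {y : Fin n → ℝ}

lemma dotProduct_self_le_of_enorm2_le {w w' : Fin d → ℝ} (h : enorm2 w ≤ enorm2 w') :
    w ⬝ᵥ w ≤ w' ⬝ᵥ w' := by
  simpa only [dotProduct, ← sq] using
    (Real.sqrt_le_sqrt_iff (Finset.sum_nonneg fun _ _ => sq_nonneg _)).1 h

lemma diagonal_mul_mulVec (w : Fin d → ℝ) (i : Fin n) :
    ((diagonal y * X) *ᵥ w) i = y i * (X i ⬝ᵥ w) := by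
  rw [← mulVec_mulVec, mulVec_diagonal]
  rfl

lemma dotProduct_nonneg_of_forall_enorm2_le {w v : Fin d → ℝ} (hw : SVMfeas X y w)
    (hmin : ∀ w', SVMfeas X y w' → enorm2 w ≤ enorm2 w')
    (hv : ∀ i, 0 ≤ ((diagonal y * X) *ᵥ v) i) : 0 ≤ w ⬝ᵥ v := by
  have hvar (ε : ℝ) (hε : 0 ≤ ε) : 0 ≤ 2 * ε * (w ⬝ᵥ v) + ε ^ 2 * (v ⬝ᵥ v) := by
    have hfeas : SVMfeas X y (w + ε • v) := fun i => by
      rw [← diagonal_mul_mulVec, mulVec_add, mulVec_smul, Pi.add_apply, Pi.smul_apply, smul_eq_mul,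
        diagonal_mul_mulVec w]
      linarith [hw i, mul_nonneg hε (hv i)]
    have hle := dotProduct_self_le_of_enorm2_le (hmin _ hfeas)
    simp only [add_dotProduct, dotProduct_add, smul_dotProduct, dotProduct_smul, smul_eq_mul,
      dotProduct_comm v w] at hle
    linarith
  have hvv : 0 ≤ v ⬝ᵥ v := dotProduct_self_star_nonneg v
  by_contra! hneg
  set a := w ⬝ᵥ v
  set b := v ⬝ᵥ v
  have hε := hvar (-a / (b + 1)) (div_nonneg (by linarith) (by linarith))
  have heq : 2 * (-a / (b + 1)) * a + (-a / (b + 1)) ^ 2 * b =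
      -(a ^ 2 * (b + 2) / (b + 1) ^ 2) := by
    field_simp
    ring
  have hpos : 0 < a ^ 2 * (b + 2) / (b + 1) ^ 2 :=
    div_pos (mul_pos (sq_pos_of_neg hneg) (by linarith)) (by positivity)
  linarith

lemma hasNonnegDual_of_svpholds (h : SVPholds X y)
    (hinj : ∀ x, x ᵥ* (diagonal y * X) = 0 → x = 0) : HasNonnegDual (diagonal y * X) := by
  obtain ⟨w, hfeas, hmin, hinterp, -⟩ := h
  set U := diagonal y * X with hU
  have hdet := isUnit_det_mul_transpose hinj
  have hUw : U *ᵥ w = 1 := funext fun i => (diagonal_mul_mulVec w i).trans (hinterp i)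
  have hsolve (b : Fin n → ℝ) : U *ᵥ (((U * Uᵀ)⁻¹ *ᵥ b) ᵥ* U) = b := by
    rw [← mulVec_transpose, mulVec_mulVec, mulVec_mulVec, mul_nonsing_inv _ hdet, one_mulVec]
  refine ⟨(U * Uᵀ)⁻¹ *ᵥ 1, fun i => ?_, hsolve 1⟩
  set v := ((U * Uᵀ)⁻¹ *ᵥ Pi.single i 1) ᵥ* U with hv
  have hwv : w ⬝ᵥ v = ((U * Uᵀ)⁻¹ *ᵥ 1) i := by
    rw [hv, dotProduct_comm, ← dotProduct_mulVec, hUw, dotProduct_comm, dotProduct_mulVec,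
      ← mulVec_transpose, transpose_nonsing_inv, transpose_mul, transpose_transpose,
      dotProduct_single_one]
  rw [← hwv]
  refine dotProduct_nonneg_of_forall_enorm2_le hfeas hmin fun k => ?_
  rw [← hU, hv, hsolve]
  exact (Pi.single_nonneg.2 zero_le_one : (0 : Fin n → ℝ) ≤ Pi.single i 1) k

end SupportVectors

section InterpolantNorm

variable {T κ : Type*} [Fintype T] [Fintype κ] {lam : κ → ℝ} {c : ℝ}

lemma isSpread_add {θ : ℝ} {a e : κ → ℝ} (ha : ∀ j, |θ * a j| ≤ 1 / 32)
    (he : 8 * ∑ j, e j ^ 2 ≤ ∑ j, (a j + e j) ^ 2) : IsSpread θ (a + e) := by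
  have hterm (j : κ) : (a j + e j) ^ 2 - 4 * e j ^ 2 ≤
      if |θ * (a j + e j)| ≤ 1 / 16 then (a j + e j) ^ 2 else 0 := by
    split_ifs with hj
    · nlinarith [sq_nonneg (e j)]
    · have hθ : |θ * (a j + e j)| ≤ 2 * |θ * e j| := by
        have := abs_add_le (θ * a j) (θ * e j)
        rw [← mul_add] at this
        linarith [ha j]
      have hle : |a j + e j| ≤ 2 * |e j| := by
        rw [abs_mul, abs_mul] at hθ
        by_contra! hlt
        have hθ0 : 0 < |θ| := by
          by_contra! h0
          rw [abs_mul, abs_nonpos_iff.1 h0] at hj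
          norm_num at hj
        nlinarith
      have hsq := pow_le_pow_left₀ (abs_nonneg _) hle 2
      rw [mul_pow, sq_abs, sq_abs] at hsq
      linarith
  have hsum := Finset.sum_le_sum fun j (_ : j ∈ Finset.univ) => hterm j
  rw [Finset.sum_sub_distrib, ← Finset.mul_sum, ← Finset.sum_filter] at hsum
  simp only [IsSpread, Pi.add_apply]
  linarith

variable [DecidableEq κ]

/- Since `⟨hU, xU⟩ = ⟨1, x⟩` for all `x`, one has `‖(h - w / 2)U‖² = ⟨1, h - w⟩ + ‖wU‖² / 4`, and
`1 = L w`; the quadratic form bounds on `h - w / 2` and `w` give the estimate. -/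
lemma GramConcentrated.dual_sub_dotProduct_self_le {Z : Matrix T κ ℝ}
    (h : GramConcentrated Z lam c) (hc : 0 ≤ c) (hlam : ∀ j, 0 ≤ lam j) (hL : 0 < ∑ j, lam j)
    {x w : T → ℝ} (hx : scaled lam Z *ᵥ (x ᵥ* scaled lam Z) = 1) (hw : (∑ j, lam j) • w = 1) :
    (1 - 3 * c / 2) * ((x - w) ⬝ᵥ (x - w)) ≤ c * (w ⬝ᵥ w) := by
  have hlow := h.le_vecMul_scaled hlam (x - (1 / 2 : ℝ) • w)
  have hup := h.vecMul_scaled_le hlam w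
  set U := scaled lam Z
  set L := ∑ j, lam j
  have hxU (z : T → ℝ) : (z ᵥ* U) ⬝ᵥ (x ᵥ* U) = L * (z ⬝ᵥ w) := by
    rw [← dotProduct_mulVec, hx, ← hw, dotProduct_smul, smul_eq_mul]
  simp only [sub_vecMul, smul_vecMul, smul_dotProduct, dotProduct_smul, sub_dotProduct,
    dotProduct_sub, hxU, smul_eq_mul, dotProduct_comm w x, dotProduct_comm (x ᵥ* U) (w ᵥ* U)]
    at hlow ⊢
  have hres : 0 ≤ (x - (2 : ℝ) • w) ⬝ᵥ (x - (2 : ℝ) • w) :=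
    dotProduct_self_star_nonneg (x - (2 : ℝ) • w)
  simp only [smul_dotProduct, dotProduct_smul, sub_dotProduct, dotProduct_sub, smul_eq_mul,
    dotProduct_comm w x] at hres
  refine le_of_mul_le_mul_left ?_ hL
  linarith [mul_nonneg (mul_nonneg hL.le hc) hres]

variable [DecidableEq T]

/-- The approximation of `interpolantCoeff lam Z` obtained by replacing the Gram matrix of
`scaled lam Z` by its mean `(∑ j, lam j) • 1`. -/
def approxCoeff (lam : κ → ℝ) (Z : Matrix T κ ℝ) (j : κ) : ℝ := lam j * (∑ i, Z i j) / ∑ j, lam j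

lemma interpolantCoeff_apply (hlam : ∀ j, 0 ≤ lam j) (Z : Matrix T κ ℝ) (j : κ) :
    interpolantCoeff lam Z j =
      lam j * (((scaled lam Z * (scaled lam Z)ᵀ)⁻¹ *ᵥ 1) ᵥ* Z) j := by
  rw [interpolantCoeff, mulVec_diagonal, minNormInterpolant]
  conv_lhs => enter [2]; rw [scaled, ← vecMul_vecMul, vecMul_diagonal, ← scaled]
  rw [mul_left_comm, Real.mul_self_sqrt (hlam j), mul_comm]

lemma GramConcentrated.exists_interpolantCoeff_eq_approxCoeff_add {Z : Matrix T κ ℝ}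
    (h : GramConcentrated Z lam (1 / 100)) (h₂ : GramConcentrated Z (fun j => lam j ^ 2) (1 / 100))
    (hlam : ∀ j, 0 ≤ lam j) (hL : 0 < ∑ j, lam j) {r : ℝ}
    (hr : r = Fintype.card T * (∑ j, lam j ^ 2) / (∑ j, lam j) ^ 2) :
    ∃ e : κ → ℝ, interpolantCoeff lam Z = approxCoeff lam Z + e ∧ ∑ j, e j ^ 2 ≤ r / 90 ∧
      |∑ j, approxCoeff lam Z j ^ 2 - r| ≤ r / 100 := by
  set L := ∑ j, lam j
  set x : T → ℝ := (scaled lam Z * (scaled lam Z)ᵀ)⁻¹ *ᵥ 1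
  set w : T → ℝ := fun _ => L⁻¹
  have hdet := h.isUnit_det_scaled (by norm_num) hlam hL
  have happrox (j : κ) : approxCoeff lam Z j = lam j * (w ᵥ* Z) j := by
    simp only [approxCoeff, vecMul, dotProduct, w, ← Finset.mul_sum]
    ring
  have hww : (∑ j, lam j ^ 2) * (w ⬝ᵥ w) = r := by
    simp only [hr, w, dotProduct, Finset.sum_const, Finset.card_univ, nsmul_eq_mul]
    field_simp
  have hx : scaled lam Z *ᵥ (x ᵥ* scaled lam Z) = 1 := by
    rw [← mulVec_transpose, mulVec_mulVec, mulVec_mulVec, mul_nonsing_inv _ hdet, one_mulVec]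
  have hdiff := h.dual_sub_dotProduct_self_le (by norm_num) hlam hL (w := w) hx
    (funext fun _ => mul_inv_cancel₀ hL.ne')
  have hL₂ : 0 ≤ ∑ j, lam j ^ 2 := Finset.sum_nonneg fun j _ => sq_nonneg _
  refine ⟨fun j => lam j * ((x - w) ᵥ* Z) j, funext fun j => ?_, ?_, ?_⟩
  · rw [Pi.add_apply, happrox, ← mul_add, ← Pi.add_apply, ← add_vecMul, add_sub_cancel]
    exact interpolantCoeff_apply hlam Z j
  · have hup := (abs_le.1 (h₂ (x - w))).2
    simp only [mul_pow] at hup ⊢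
    have hscaled := mul_le_mul_of_nonneg_left hdiff hL₂
    have hr0 : 0 ≤ r := hww ▸ mul_nonneg hL₂ (dotProduct_self_star_nonneg w)
    linarith
  · have hup := h₂ w
    rw [mul_assoc, hww] at hup
    simp only [happrox, mul_pow]
    linarith

lemma GramConcentrated.interpolantCoeff_bounds {Z : Matrix T κ ℝ}
    (h : GramConcentrated Z lam (1 / 100)) (h₂ : GramConcentrated Z (fun j => lam j ^ 2) (1 / 100))
    (hlam : ∀ j, 0 ≤ lam j) (hL : 0 < ∑ j, lam j) {ρ : ℝ} (hρ : 0 < ρ)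
    (hρ₁ : ρ / 2 ≤ Fintype.card T * (∑ j, lam j ^ 2) / (∑ j, lam j) ^ 2)
    (hρ₂ : Fintype.card T * (∑ j, lam j ^ 2) / (∑ j, lam j) ^ 2 ≤ ρ)
    (hflat : ∀ j, |approxCoeff lam Z j| ≤ ρ / 12288) :
    ρ / 8 ≤ interpolantCoeff lam Z ⬝ᵥ interpolantCoeff lam Z ∧
      interpolantCoeff lam Z ⬝ᵥ interpolantCoeff lam Z ≤ 3 * ρ ∧
      IsSpread (384 / ρ) (interpolantCoeff lam Z) := by
  obtain ⟨e, heq, he, ha⟩ := h.exists_interpolantCoeff_eq_approxCoeff_add h₂ hlam hL rfl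
  set r := Fintype.card T * (∑ j, lam j ^ 2) / (∑ j, lam j) ^ 2
  set a := approxCoeff lam Z
  obtain ⟨ha₁, ha₂⟩ := abs_le.1 ha
  have hq : interpolantCoeff lam Z ⬝ᵥ interpolantCoeff lam Z = ∑ j, (a j + e j) ^ 2 := by
    simp only [heq, dotProduct, Pi.add_apply, ← sq]
  have hlow : (∑ j, a j ^ 2) / 2 - ∑ j, e j ^ 2 ≤ ∑ j, (a j + e j) ^ 2 := by
    rw [Finset.sum_div, ← Finset.sum_sub_distrib]
    exact Finset.sum_le_sum fun j _ => by nlinarith [sq_nonneg (a j + 2 * e j)]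
  have hup : ∑ j, (a j + e j) ^ 2 ≤ 2 * ∑ j, a j ^ 2 + 2 * ∑ j, e j ^ 2 := by
    rw [Finset.mul_sum, Finset.mul_sum, ← Finset.sum_add_distrib]
    exact Finset.sum_le_sum fun j _ => by nlinarith [sq_nonneg (a j - e j)]
  refine ⟨by linarith, by linarith, heq ▸ isSpread_add (fun j => ?_) (by linarith)⟩
  rw [abs_mul, abs_of_pos (by positivity)]
  calc 384 / ρ * |a j| ≤ 384 / ρ * (ρ / 12288) := by gcongr; exact hflat j
    _ = 1 / 32 := by
        field_simp
        norm_num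

end InterpolantNorm

section IndependentDirection

variable {Ω ι κ T A α : Type*} [MeasurableSpace Ω] {μ : Measure Ω}

lemma IsStdSubgaussianMatrix.toRows₁ {Z : Ω → Matrix (T ⊕ A) κ ℝ}
    (h : IsStdSubgaussianMatrix Z μ) : IsStdSubgaussianMatrix (fun ω => (Z ω).toRows₁) μ :=
  h.precomp (g := Prod.map Sum.inl id) (Sum.inl_injective.prodMap Function.injective_id)

lemma IsStdSubgaussianMatrix.toRows₂ {Z : Ω → Matrix (T ⊕ A) κ ℝ}
    (h : IsStdSubgaussianMatrix Z μ) : IsStdSubgaussianMatrix (fun ω => (Z ω).toRows₂) μ :=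
  h.precomp (g := Prod.map Sum.inr id) (Sum.inr_injective.prodMap Function.injective_id)

variable [Fintype κ]

lemma IsStdSubgaussianMatrix.measureReal_le_and_lt_sum_mulVec_sq_le [Finite ι]
    {Z : Ω → Matrix ι κ ℝ} (h : IsStdSubgaussianMatrix Z μ) {f : α → ι} {J : Finset ι}
    (hf : ∀ a, f a ∉ J) {F : (α → κ → ℝ) → κ → ℝ} (hF : Measurable F) {K : ℝ} (hK : 0 < K)
    (t : ℝ) :
    μ.real {ω | F (fun a => Z ω (f a)) ⬝ᵥ F (fun a => Z ω (f a)) ≤ K ∧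
      4 * K * t < ∑ i ∈ J, (Z ω *ᵥ F (fun a => Z ω (f a))) i ^ 2} ≤ 2 ^ #J * Real.exp (-t) := by
  have := h.isProbabilityMeasure
  have hm := h.measurable_row
  set s : Set ((α → κ → ℝ) × (J → κ → ℝ)) :=
    {x | F x.1 ⬝ᵥ F x.1 ≤ K} ∩ {x | 4 * K * t < ∑ i, (x.2 i ⬝ᵥ F x.1) ^ 2} with hs
  have hsm : MeasurableSet s := by
    simp only [hs, dotProduct]
    exact (measurableSet_le (by fun_prop) (by fun_prop)).inter
      (measurableSet_lt (by fun_prop) (by fun_prop))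
  have hsum (z : Matrix ι κ ℝ) (q : κ → ℝ) :
      ∑ i : J, (z i ⬝ᵥ q) ^ 2 = ∑ i ∈ J, (z *ᵥ q) i ^ 2 :=
    Finset.sum_coe_sort J fun i => (z i ⬝ᵥ q) ^ 2
  have hind : IndepFun (fun ω a => Z ω (f a)) (fun ω (b : J) => Z ω b) μ :=
    h.indepFun_submatrix fun a b hab => hf a (hab ▸ b.2)
  have hle := measureReal_prodMk_mem_le_of_indepFun (by fun_prop) (by fun_prop) hind hsm
    (ε := 2 ^ #J * Real.exp (-t)) fun u => ?_
  · simpa only [hs, Set.mem_inter_iff, Set.mem_ofPred_eq, hsum] using hle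
  by_cases hu : F u ⬝ᵥ F u ≤ K
  · simpa only [hs, Set.mem_inter_iff, Set.mem_ofPred_eq, hu, true_and, hsum] using
      h.measureReal_lt_sum_mulVec_sq_le J hK hu t
  · simp only [hs, Set.mem_inter_iff, Set.mem_ofPred_eq, hu, false_and, Set.ofPred_false,
      measureReal_empty]
    positivity

lemma IsStdSubgaussianMatrix.measureReal_isSpread_and_card_le [Finite T] [Fintype A]
    {Z : Ω → Matrix (T ⊕ A) κ ℝ} (h : IsStdSubgaussianMatrix Z μ)
    {F : (T → κ → ℝ) → κ → ℝ} (hF : Measurable F) {θ v p : ℝ} (hθ : 1 ≤ θ)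
    (hp : p ≤ 1 / 4 * Real.exp (-(2 * θ ^ 2 * v))) :
    μ.real {ω | (IsSpread θ (F (Z ω).toRows₁) ∧ 48 ≤ θ * (F (Z ω).toRows₁ ⬝ᵥ F (Z ω).toRows₁) ∧
        F (Z ω).toRows₁ ⬝ᵥ F (Z ω).toRows₁ ≤ v) ∧
      (#{i | 2 ≤ ((Z ω).toRows₂ *ᵥ F (Z ω).toRows₁) i} : ℝ) ≤ p * Fintype.card A / 4} ≤
      Real.exp (-(p * Fintype.card A / 4)) := by
  have := h.isProbabilityMeasure
  have hm := h.measurable_row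
  set Good : (κ → ℝ) → Prop := fun q => IsSpread θ q ∧ 48 ≤ θ * (q ⬝ᵥ q) ∧ q ⬝ᵥ q ≤ v
  have hGoodm : MeasurableSet {q | Good q} := by
    have hsq : Measurable fun q : κ → ℝ => q ⬝ᵥ q := by simp only [dotProduct]; fun_prop
    exact (measurableSet_isSpread θ).inter ((measurableSet_le (measurable_const (a := (48 : ℝ)))
      (hsq.const_mul θ)).inter (measurableSet_le hsq (measurable_const (a := v))))
  set s : Set ((T → κ → ℝ) × (A → κ → ℝ)) :=
    {x | Good (F x.1)} ∩ {x | (#{i | 2 ≤ x.2 i ⬝ᵥ F x.1} : ℝ) ≤ p * Fintype.card A / 4} with hs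
  have hsm : MeasurableSet s := by
    have hcount : Measurable fun x : (T → κ → ℝ) × (A → κ → ℝ) =>
        (#{i | 2 ≤ x.2 i ⬝ᵥ F x.1} : ℝ) := by
      simp_rw [← Finset.sum_boole, dotProduct]
      refine Finset.measurable_sum _ fun i _ => Measurable.ite (measurableSet_le ?_ ?_) ?_ ?_ <;>
        fun_prop
    exact (hF.comp measurable_fst hGoodm).inter (measurableSet_le hcount measurable_const)
  have hind : IndepFun (fun ω a => Z ω (Sum.inl a)) (fun ω b => Z ω (Sum.inr b)) μ :=
    h.indepFun_submatrix fun _ _ => Sum.inl_ne_inr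
  refine measureReal_prodMk_mem_le_of_indepFun (by fun_prop) (by fun_prop) hind hsm fun u => ?_
  by_cases hu : Good (F u)
  · simp only [hs, Set.mem_inter_iff, Set.mem_ofPred_eq, hu, true_and]
    exact h.toRows₂.measureReal_card_two_le_mulVec_le hu.1 hθ hu.2.1 hu.2.2 hp
  · simp only [hs, Set.mem_inter_iff, Set.mem_ofPred_eq, hu, false_and, Set.ofPred_false,
      measureReal_empty]
    positivity

variable [Fintype T] [DecidableEq T] [DecidableEq κ] (lam : κ → ℝ)

lemma measurable_inv_scaled_mul_transpose :
    Measurable fun (z : T → κ → ℝ) i j => (scaled lam (of z) * (scaled lam (of z))ᵀ)⁻¹ i j := by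
  have hscaled : Continuous fun z : T → κ → ℝ => scaled lam (of z) :=
    (continuous_id : Continuous fun z : Matrix T κ ℝ => z).matrix_mul continuous_const
  have hgram := hscaled.matrix_mul hscaled.matrix_transpose
  refine measurable_pi_lambda _ fun i => measurable_pi_lambda _ fun j => ?_
  simp only [inv_def, Ring.inverse_eq_inv', Matrix.smul_apply, smul_eq_mul]
  exact hgram.matrix_det.measurable.inv.mul (hgram.matrix_adjugate.matrix_elem i j).measurable

lemma measurable_interpolantCoeff :
    Measurable fun z : T → κ → ℝ => interpolantCoeff lam (of z) := by
  have hinv := measurable_inv_scaled_mul_transpose (T := T) lam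
  refine measurable_pi_lambda _ fun j => ?_
  simp only [interpolantCoeff, minNormInterpolant, mulVec, vecMul, dotProduct]
  simp only [scaled, Matrix.mul_apply, of_apply, diagonal_apply] at hinv ⊢
  fun_prop

lemma measurable_residualCoeff {β : Type*} [MeasurableSpace β] {z : β → T → κ → ℝ}
    {v : β → κ → ℝ} (hz : Measurable z) (hv : Measurable v) :
    Measurable fun u => residualCoeff lam (of (z u)) (v u) := by
  have hinv := (measurable_inv_scaled_mul_transpose (T := T) lam).comp hz
  refine measurable_pi_lambda _ fun j => ?_
  simp only [residualCoeff, kernelProj, mulVec, vecMul, dotProduct, Matrix.sub_apply,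
    Matrix.mul_apply, transpose_apply]
  simp only [Function.comp_def, scaled, Matrix.mul_apply, of_apply, diagonal_apply] at hinv ⊢
  fun_prop

end IndependentDirection

section TypicalSample

lemma measureReal_union_le_add {Ω : Type*} [MeasurableSpace Ω] {μ : Measure Ω} {s t : Set Ω}
    {a b : ℝ} (hs : μ.real s ≤ a) (ht : μ.real t ≤ b) : μ.real (s ∪ t) ≤ a + b :=
  (measureReal_union_le s t).trans (add_le_add hs ht)

lemma exp_neg_mul_sq_le {Q t : ℝ} (hQ : 1 ≤ Q) (ht : 1 ≤ t) :
    Real.exp (-(Q * t ^ 2)) ≤ Real.exp (-Q) / t := by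
  have hexp : t ≤ Real.exp (Q * t ^ 2 - Q) := by
    nlinarith [Real.add_one_le_exp (Q * t ^ 2 - Q), mul_nonneg (sub_nonneg.2 hQ) (sub_nonneg.2 ht),
      mul_nonneg (mul_nonneg (sub_nonneg.2 hQ) (sub_nonneg.2 ht)) (by linarith : 0 ≤ t)]
  rw [le_div_iff₀ (by linarith)]
  calc Real.exp (-(Q * t ^ 2)) * t ≤ Real.exp (-(Q * t ^ 2)) * Real.exp (Q * t ^ 2 - Q) := by gcongr
    _ = Real.exp (-Q) := by
        rw [← Real.exp_add]
        congr 1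
        ring

lemma IsStdSubgaussianMatrix.measureReal_not_forall_abs_approxCoeff_le {Ω T κ : Type*}
    [MeasurableSpace Ω] {μ : Measure Ω} [Fintype T] [Fintype κ] {Z : Ω → Matrix T κ ℝ}
    (h : IsStdSubgaussianMatrix Z μ) {lam : κ → ℝ} (hlam : ∀ j, 0 < lam j) {M c Q : ℝ} (hM0 : 0 < M)
    (hM : ∀ j, lam j ≤ M) (hc : 0 < c) (hQ : 1 ≤ Q)
    (hQc : Q ≤ (c * ∑ j, lam j) ^ 2 / (2 * Fintype.card T * M ^ 2)) :
    μ.real {ω | ¬ ∀ j, |approxCoeff lam (Z ω) j| ≤ c} ≤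
      2 * Real.exp (-Q) * ((∑ j, lam j) / M) := by
  have := h.isProbabilityMeasure
  set L := ∑ j, lam j
  have hcoord (j : κ) : μ.real {ω | ¬ |approxCoeff lam (Z ω) j| ≤ c} ≤
      2 * Real.exp (-Q) * (lam j / M) := by
    have hlamj := hlam j
    have hL : 0 < L := hlamj.trans_le
      (Finset.single_le_sum (fun i _ => (hlam i).le) (Finset.mem_univ j))
    have hsub : {ω | ¬ |approxCoeff lam (Z ω) j| ≤ c} ⊆
        {ω | c * L / lam j ≤ |∑ i, 1 * Z ω i j|} := fun ω hω => by
      simp only [Set.mem_ofPred_eq, approxCoeff, not_le, one_mul] at hω ⊢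
      rw [abs_div, abs_mul, abs_of_pos hlamj, abs_of_pos hL, lt_div_iff₀ hL] at hω
      rw [div_le_iff₀ hlamj]
      linarith
    have htail := measureReal_le_abs_le ((h.col j).hasSubgaussianMGF_sum_mul (a := fun _ => 1)
      (c := Fintype.card T) (by simp)) (ε := c * L / lam j) (by positivity)
    have hexponent : Q * (M / lam j) ^ 2 ≤ (c * L / lam j) ^ 2 / (2 * Fintype.card T) :=
      calc Q * (M / lam j) ^ 2
          ≤ (c * L) ^ 2 / (2 * Fintype.card T * M ^ 2) * (M / lam j) ^ 2 := by gcongr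
        _ = (c * L / lam j) ^ 2 / (2 * Fintype.card T) := by field_simp
    calc μ.real {ω | ¬ |approxCoeff lam (Z ω) j| ≤ c}
        ≤ 2 * Real.exp (-((c * L / lam j) ^ 2 / (2 * Fintype.card T))) := by
          simpa only [neg_div, NNReal.coe_natCast] using (measureReal_mono hsub).trans htail
      _ ≤ 2 * (Real.exp (-Q) / (M / lam j)) := by
          gcongr
          exact (Real.exp_le_exp.2 (neg_le_neg hexponent)).trans
            (exp_neg_mul_sq_le hQ ((one_le_div hlamj).2 (hM j)))
      _ = 2 * Real.exp (-Q) * (lam j / M) := by field_simp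
  simp only [not_forall, Set.ofPred_exists]
  calc μ.real (⋃ j, {ω | ¬ |approxCoeff lam (Z ω) j| ≤ c})
      ≤ ∑ j, 2 * Real.exp (-Q) * (lam j / M) :=
        (measureReal_iUnion_fintype_le _).trans (Finset.sum_le_sum fun j _ => hcoord j)
    _ = 2 * Real.exp (-Q) * (L / M) := by rw [← Finset.mul_sum, Finset.sum_div]

variable {Ω T A κ : Type*} [MeasurableSpace Ω] {μ : Measure Ω}
  [Fintype T] [Fintype A] [Fintype κ] [DecidableEq T] [DecidableEq κ]

lemma IsStdSubgaussianMatrix.measureReal_interpolantCoeff_lt_sum_sq_le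
    {Z : Ω → Matrix (T ⊕ A) κ ℝ} (h : IsStdSubgaussianMatrix Z μ) (lam : κ → ℝ) :
    μ.real {ω | interpolantCoeff lam (Z ω).toRows₁ ⬝ᵥ interpolantCoeff lam (Z ω).toRows₁ ≤ 1 ∧
      16 * (Fintype.card A : ℝ) <
        ∑ i, ((Z ω).toRows₂ *ᵥ interpolantCoeff lam (Z ω).toRows₁) i ^ 2} ≤
      2 ^ Fintype.card A * Real.exp (-(4 * Fintype.card A)) := by
  have hle := h.measureReal_le_and_lt_sum_mulVec_sq_le (f := Sum.inl)
    (J := Finset.univ.map (.inr : A ↪ T ⊕ A)) (by simp) (measurable_interpolantCoeff lam) one_pos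
    (4 * Fintype.card A)
  simp only [Finset.sum_map, Finset.card_map, Finset.card_univ, ← mul_assoc] at hle
  norm_num at hle
  exact hle

variable [DecidableEq A]

lemma IsStdSubgaussianMatrix.measureReal_residualCoeff_lt_sum_sq_le
    {Z : Ω → Matrix (T ⊕ A) κ ℝ} (h : IsStdSubgaussianMatrix Z μ) (lam : κ → ℝ)
    {I τ : Finset A} (hI : I ⊆ τ) {K : ℝ} (hK : 0 < K) :
    μ.real {ω | residualCoeff lam (Z ω).toRows₁ (∑ i ∈ I, (Z ω).toRows₂.row i) ⬝ᵥ
        residualCoeff lam (Z ω).toRows₁ (∑ i ∈ I, (Z ω).toRows₂.row i) ≤ K ∧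
      16 * K * Fintype.card A < ∑ l ∈ τᶜ, ((Z ω).toRows₂ *ᵥ
        residualCoeff lam (Z ω).toRows₁ (∑ i ∈ I, (Z ω).toRows₂.row i)) l ^ 2} ≤
      2 ^ Fintype.card A * Real.exp (-(4 * Fintype.card A)) := by
  have hF : Measurable fun u : T ⊕ I → κ → ℝ =>
      residualCoeff lam (of fun t => u (Sum.inl t)) (∑ i, u (Sum.inr i)) :=
    measurable_residualCoeff lam (by fun_prop) (by fun_prop)
  have hle := h.measureReal_le_and_lt_sum_mulVec_sq_le (f := Sum.map id Subtype.val)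
    (J := τᶜ.map (.inr : A ↪ T ⊕ A)) (by rintro (t | i) <;> simp [hI (Subtype.prop _)]) hF
    hK (4 * Fintype.card A)
  simp only [Finset.sum_map, Finset.card_map, Sum.map_inl, Sum.map_inr, id_eq] at hle
  have hsum (ω : Ω) : ∑ i : I, Z ω (Sum.inr i) = ∑ i ∈ I, (Z ω).toRows₂.row i :=
    Finset.sum_coe_sort I fun i => Z ω (Sum.inr i)
  simp only [hsum] at hle
  refine le_trans (le_of_eq ?_) (hle.trans ?_)
  · simp only [show 16 * K * (Fintype.card A : ℝ) = 4 * K * (4 * Fintype.card A) by ring]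
    rfl
  · gcongr
    · norm_num
    · exact Finset.card_le_univ _

lemma IsStdSubgaussianMatrix.measureReal_exists_residualCoeff_lt_sum_sq_le
    {Z : Ω → Matrix (T ⊕ A) κ ℝ} (h : IsStdSubgaussianMatrix Z μ) (lam : κ → ℝ)
    {K : Finset A → ℝ} (hK : ∀ I, 0 < K I) :
    μ.real {ω | ∃ p : Finset A × Finset A, p.2 ⊆ p.1 ∧
      residualCoeff lam (Z ω).toRows₁ (∑ i ∈ p.2, (Z ω).toRows₂.row i) ⬝ᵥ
        residualCoeff lam (Z ω).toRows₁ (∑ i ∈ p.2, (Z ω).toRows₂.row i) ≤ K p.2 ∧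
      16 * K p.2 * Fintype.card A < ∑ l ∈ p.1ᶜ, ((Z ω).toRows₂ *ᵥ
        residualCoeff lam (Z ω).toRows₁ (∑ i ∈ p.2, (Z ω).toRows₂.row i)) l ^ 2} ≤
      8 ^ Fintype.card A * Real.exp (-(4 * Fintype.card A)) := by
  rw [Set.ofPred_exists]
  refine (measureReal_iUnion_fintype_le _).trans ((Finset.sum_le_card_nsmul _ _
    (2 ^ Fintype.card A * Real.exp (-(4 * Fintype.card A))) fun p _ => ?_).trans_eq ?_)
  · by_cases hp : p.2 ⊆ p.1
    · simpa only [hp, true_and] using h.measureReal_residualCoeff_lt_sum_sq_le lam hp (hK p.2)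
    · simp only [hp, false_and, Set.ofPred_false, measureReal_empty]
      positivity
  · rw [Finset.card_univ, Fintype.card_prod, Fintype.card_finset, nsmul_eq_mul, ← mul_assoc]
    push_cast
    rw [← mul_pow, ← mul_pow]
    norm_num

/-- The conditions on a sample `Z` with entries indexed by training rows `T` and test rows `A`
which jointly exclude a nonnegative dual solution: concentration of the Gram matrix, sufficiently
many test rows on which the interpolant of the training rows has margin at least `2`, and control
of the margins in square mean, for the interpolant and for the residuals of sums of test rows. -/
structure IsTypical (lam : κ → ℝ) (M p : ℝ) (Z : Matrix (T ⊕ A) κ ℝ) : Prop where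
  gramConcentrated : GramConcentrated Z lam (1 / 100)
  lt_card_two_le : p * Fintype.card A / 4 <
    #{i | 2 ≤ (Z.toRows₂ *ᵥ interpolantCoeff lam Z.toRows₁) i}
  sum_margin_sq_le : ∑ i, (Z.toRows₂ *ᵥ interpolantCoeff lam Z.toRows₁) i ^ 2 ≤
    16 * Fintype.card A
  sum_residual_sq_le (τ I : Finset A) (hI : I ⊆ τ) :
    ∑ l ∈ τᶜ, (Z.toRows₂ *ᵥ residualCoeff lam Z.toRows₁ (∑ i ∈ I, Z.toRows₂.row i)) l ^ 2 ≤
      32 * M * (∑ j, lam j) * (#I + 1) * Fintype.card A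

variable {lam : κ → ℝ} {M p : ℝ}

lemma IsTypical.not_hasNonnegDual {Z : Matrix (T ⊕ A) κ ℝ} (h : IsTypical lam M p Z)
    (hlam : ∀ j, 0 ≤ lam j) (hL : 0 < ∑ j, lam j) (hM0 : 0 ≤ M)
    (hp : 1 ≤ p * Fintype.card A / 4)
    (hMp : 139264 * M * (Fintype.card A : ℝ) ^ 2 < (∑ j, lam j) * (p * Fintype.card A / 4)) :
    ¬ HasNonnegDual (scaled lam Z) := fun hdual => by
  have hcard := card_sq_mul_le h.gramConcentrated hlam hL hM0 hdual h.sum_margin_sq_le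
    h.sum_residual_sq_le (S := {i | 2 ≤ (Z.toRows₂ *ᵥ interpolantCoeff lam Z.toRows₁) i})
    fun i hi => (Finset.mem_filter.1 hi).2
  have hlt := h.lt_card_two_le
  set s : ℝ := (#{i | 2 ≤ (Z.toRows₂ *ᵥ interpolantCoeff lam Z.toRows₁) i} : ℝ)
  set m : ℝ := (Fintype.card A : ℝ)
  set L := ∑ j, lam j
  have hs : 1 < s := hp.trans_lt hlt
  have hle : s * (s * L) ≤ s * (139264 * M * m ^ 2) :=
    calc s * (s * L) = s ^ 2 * L := by ring
      _ ≤ 69632 * M * (s + 1) * m ^ 2 := hcard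
      _ ≤ 69632 * M * (s + s) * m ^ 2 := by gcongr
      _ = s * (139264 * M * m ^ 2) := by ring
  have hsL : s * L ≤ 139264 * M * m ^ 2 := le_of_mul_le_mul_left hle (by linarith)
  nlinarith

lemma IsStdSubgaussianMatrix.measureReal_not_isTypical_le {Z : Ω → Matrix (T ⊕ A) κ ℝ}
    (h : IsStdSubgaussianMatrix Z μ) (hlam : ∀ j, 0 < lam j) (hL : 0 < ∑ j, lam j) (hM0 : 0 < M)
    (hM : ∀ j, lam j ≤ M) {ρ Q : ℝ} (hρ : 0 < ρ) (hρ₁ : 3 * ρ ≤ 1)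
    (hρT₁ : ρ / 2 ≤ Fintype.card T * (∑ j, lam j ^ 2) / (∑ j, lam j) ^ 2)
    (hρT₂ : Fintype.card T * (∑ j, lam j ^ 2) / (∑ j, lam j) ^ 2 ≤ ρ)
    (hp : p ≤ 1 / 4 * Real.exp (-(884736 / ρ))) (hQ : 1 ≤ Q)
    (hQρ : Q ≤ (ρ / 12288 * ∑ j, lam j) ^ 2 / (2 * Fintype.card T * M ^ 2)) :
    μ.real {ω | ¬ IsTypical lam M p (Z ω)} ≤
      25 ^ Fintype.card (T ⊕ A) *
        (4 * Real.exp (-((1 / 400) ^ 2 * (∑ j, lam j) / (1024 * M)))) +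
      25 ^ Fintype.card (T ⊕ A) *
        (4 * Real.exp (-((1 / 400) ^ 2 * (∑ j, lam j ^ 2) / (1024 * M ^ 2)))) +
      2 * Real.exp (-Q) * ((∑ j, lam j) / M) +
      Real.exp (-(p * Fintype.card A / 4)) +
      2 ^ Fintype.card A * Real.exp (-(4 * Fintype.card A)) +
      8 ^ Fintype.card A * Real.exp (-(4 * Fintype.card A)) := by
  have := h.isProbabilityMeasure
  have hθρ : 384 / ρ * (ρ / 8) = 48 := by
    field_simp
    norm_num
  have hgram := h.measureReal_not_gramConcentrated_le hM0 (fun j => (hlam j).le) hM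
    (ε := 1 / 400) (by norm_num) (by norm_num)
  have hgram_sq := h.measureReal_not_gramConcentrated_le (ν := fun j => lam j ^ 2) (pow_pos hM0 2)
    (fun j => sq_nonneg _) (fun j => pow_le_pow_left₀ (hlam j).le (hM j) 2)
    (ε := 1 / 400) (by norm_num) (by norm_num)
  rw [show (4 * (1 / 400) : ℝ) = 1 / 100 by norm_num] at hgram hgram_sq
  have hflat := h.toRows₁.measureReal_not_forall_abs_approxCoeff_le hlam hM0 hM
    (by positivity : 0 < ρ / 12288) hQ hQρ
  have hcount := h.measureReal_isSpread_and_card_le (F := interpolantCoeff lam)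
    (measurable_interpolantCoeff lam)
    (θ := 384 / ρ) (v := 3 * ρ) (p := p) ((one_le_div hρ).2 (by linarith)) (hp.trans_eq (by
      congr 3
      field_simp
      norm_num))
  have hmargin := h.measureReal_interpolantCoeff_lt_sum_sq_le lam
  have hresidual := h.measureReal_exists_residualCoeff_lt_sum_sq_le lam
    (K := fun I => 2 * M * (∑ j, lam j) * (#I + 1)) (fun I => by positivity)
  refine (measureReal_mono fun ω hω => ?_).trans (measureReal_union_le_add
    (measureReal_union_le_add (measureReal_union_le_add (measureReal_union_le_add
      (measureReal_union_le_add hgram hgram_sq) hflat) hcount) hmargin) hresidual)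
  by_contra hnot
  simp only [Set.mem_union, Set.mem_ofPred_eq, not_or, not_and, not_not, not_le, not_lt,
    not_exists] at hnot hω
  obtain ⟨⟨⟨⟨⟨hgram, hgram_sq⟩, hflat⟩, hcount⟩, hmargin⟩, hresidual⟩ := hnot
  obtain ⟨hq₁, hq₂, hspread⟩ := hgram.toRows₁.interpolantCoeff_bounds hgram_sq.toRows₁
    (fun j => (hlam j).le) hL hρ hρT₁ hρT₂ hflat
  refine hω ⟨hgram, hcount ⟨hspread, ?_, hq₂⟩, hmargin (hq₂.trans hρ₁), fun τ I hI => ?_⟩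
  · calc 48 = 384 / ρ * (ρ / 8) := hθρ.symm
      _ ≤ _ := by gcongr
  · have hnorm := residualCoeff_dotProduct_self_le hgram (by norm_num) (fun j => (hlam j).le) hL
      hM0.le hM I
    refine (hresidual (τ, I) hI (hnorm.trans ?_)).trans_eq (by ring)
    have : (0 : ℝ) ≤ #I := Nat.cast_nonneg _
    nlinarith [mul_pos hM0 hL]

end TypicalSample

section Parameters

/-- The numerical regime of the theorem for sample size `n` and dimension proxies `D₂` and `Dinf`,
with `n = b ^ 16` so that the number `b ^ 12` of test rows and the square root `b ^ 8` of `n` are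
powers of the same parameter. -/
structure IsSubcritical (b n D₂ Dinf : ℝ) : Prop where
  le_base : 256 ≤ b
  size_eq : n = b ^ 16
  Dinf_le : Dinf ≤ D₂
  D₂_le : D₂ ≤ 1 / 1000000 * n * Real.log b
  le_Dinf : 1000000000 * n ≤ Dinf
  le_Dinf_sq : 2000000000 * D₂ * n ≤ Dinf ^ 2

lemma pow_mul_exp_neg_le {c k : ℝ} (hc0 : 0 ≤ c) (hc : c ≤ Real.exp k) (m : ℕ) (x : ℝ) :
    c ^ m * Real.exp (-x) ≤ Real.exp (k * m - x) := by
  rw [sub_eq_add_neg, Real.exp_add, mul_comm k, Real.exp_nat_mul]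
  gcongr

lemma eight_le_exp_three : (8 : ℝ) ≤ Real.exp 3 :=
  calc (8 : ℝ) = 2 ^ 3 := by norm_num
    _ ≤ Real.exp 1 ^ 3 := by
        gcongr
        linarith [Real.exp_one_gt_d9]
    _ = Real.exp 3 := by
        rw [← Real.exp_nat_mul]
        norm_num

lemma gram_failure_le {S V : ℝ} {N : ℕ} (hV : 0 < V) (h : 1000000000 * (N : ℝ) ≤ S / V) :
    25 ^ N * (4 * Real.exp (-((1 / 400) ^ 2 * S / (1024 * V)))) ≤ 4 * Real.exp (-(2 * N)) := by
  have hexp : (25 : ℝ) ≤ Real.exp 4 :=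
    calc (25 : ℝ) ≤ 2.7 ^ 4 := by norm_num
      _ ≤ Real.exp 1 ^ 4 := by
          gcongr
          linarith [Real.exp_one_gt_d9]
      _ = Real.exp 4 := by
          rw [← Real.exp_nat_mul]
          norm_num
  have hSV : (1 / 400) ^ 2 * S / (1024 * V) = S / V / 163840000 := by
    field_simp
    ring
  calc 25 ^ N * (4 * Real.exp (-((1 / 400) ^ 2 * S / (1024 * V))))
      = 4 * (25 ^ N * Real.exp (-(S / V / 163840000))) := by rw [hSV]; ring
    _ ≤ 4 * Real.exp (4 * N - S / V / 163840000) := by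
        gcongr
        exact pow_mul_exp_neg_le (by norm_num) hexp N _
    _ ≤ 4 * Real.exp (-(2 * N)) := by
        gcongr
        have : (0 : ℝ) ≤ N := N.cast_nonneg
        linarith

namespace IsSubcritical

variable {b n D₂ Dinf : ℝ}

lemma base_pos (h : IsSubcritical b n D₂ Dinf) : 0 < b := by linarith [h.le_base]

lemma size_pos (h : IsSubcritical b n D₂ Dinf) : 0 < n := h.size_eq ▸ pow_pos h.base_pos 16

lemma D₂_pos (h : IsSubcritical b n D₂ Dinf) : 0 < D₂ := by
  linarith [h.size_pos, h.le_Dinf, h.Dinf_le]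

lemma mul_pow_eight_le (h : IsSubcritical b n D₂ Dinf) : 32 * b ^ 8 ≤ b ^ 11 := by
  have hb3 : (256 : ℝ) ^ 3 ≤ b ^ 3 := pow_le_pow_left₀ (by norm_num) h.le_base 3
  have hb8 : 0 < b ^ 8 := pow_pos h.base_pos 8
  calc 32 * b ^ 8 ≤ b ^ 3 * b ^ 8 := by
        gcongr
        linarith
    _ = b ^ 11 := by ring

lemma D₂_le_mul (h : IsSubcritical b n D₂ Dinf) : D₂ ≤ 1 / 1000000 * n * b := by
  have hn := h.size_pos
  have hlog : Real.log b ≤ b := (Real.log_le_sub_one_of_pos h.base_pos).trans (by linarith)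
  exact h.D₂_le.trans (by gcongr)

lemma three_mul_size_div_le (h : IsSubcritical b n D₂ Dinf) : 3 * (n / D₂) ≤ 1 := by
  rw [← mul_div_assoc, div_le_one h.D₂_pos]
  linarith [h.size_pos, h.le_Dinf, h.Dinf_le]

lemma le_size_sq_div (h : IsSubcritical b n D₂ Dinf) : 1000000 * b ^ 15 ≤ n ^ 2 / D₂ := by
  have hb := h.base_pos
  rw [le_div_iff₀ h.D₂_pos]
  calc 1000000 * b ^ 15 * D₂ ≤ 1000000 * b ^ 15 * (1 / 1000000 * n * b) := by
        gcongr
        exact h.D₂_le_mul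
    _ = n ^ 2 := by
        rw [h.size_eq]
        ring

lemma one_div_le_exp (h : IsSubcritical b n D₂ Dinf) :
    1 / (4 * b) ≤ 1 / 4 * Real.exp (-(884736 / (n / D₂))) := by
  have hb := h.base_pos
  have hlogb : 0 ≤ Real.log b := Real.log_nonneg (by linarith [h.le_base])
  have hlog : 884736 / (n / D₂) ≤ Real.log b := by
    rw [div_div_eq_mul_div, div_le_iff₀ h.size_pos]
    linarith [h.D₂_le, mul_nonneg h.size_pos.le hlogb]
  calc 1 / (4 * b) = 1 / 4 * Real.exp (-Real.log b) := by
        rw [Real.exp_neg, Real.exp_log hb]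
        field_simp
    _ ≤ 1 / 4 * Real.exp (-(884736 / (n / D₂))) := by gcongr

lemma size_sq_div_le (h : IsSubcritical b n D₂ Dinf) :
    n ^ 2 / D₂ ≤ (n / D₂ / 12288 * Dinf) ^ 2 / (2 * n) := by
  have hn := h.size_pos
  have hD₂ := h.D₂_pos
  have hsq : 2 * 12288 ^ 2 * D₂ * n ≤ Dinf ^ 2 := by
    linarith [h.le_Dinf_sq, mul_pos hD₂ hn]
  calc n ^ 2 / D₂ = n / (2 * 12288 ^ 2 * D₂ ^ 2) * (2 * 12288 ^ 2 * D₂ * n) := by field_simp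
    _ ≤ n / (2 * 12288 ^ 2 * D₂ ^ 2) * Dinf ^ 2 := by gcongr
    _ = (n / D₂ / 12288 * Dinf) ^ 2 / (2 * n) := by field_simp

lemma exp_neg_mul_Dinf_le (h : IsSubcritical b n D₂ Dinf) :
    Real.exp (-(n ^ 2 / D₂)) * Dinf ≤ Real.exp (-(2 * b ^ 8)) := by
  have hb := h.base_pos
  have hb1 : 1 ≤ b := by linarith [h.le_base]
  have hDinf : Dinf ≤ Real.exp (17 * b) :=
    calc Dinf ≤ 1 / 1000000 * n * b := h.Dinf_le.trans h.D₂_le_mul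
      _ = 1 / 1000000 * b ^ 17 := by
          rw [h.size_eq]
          ring
      _ ≤ b ^ 17 := by linarith [pow_pos hb 17]
      _ ≤ Real.exp b ^ 17 := by
          gcongr
          linarith [Real.add_one_le_exp b]
      _ = Real.exp (17 * b) := by
          rw [← Real.exp_nat_mul]
          norm_num
  have hb15 : b ≤ b ^ 15 := le_self_pow₀ hb1 (by norm_num)
  have hb8 : b ^ 8 ≤ b ^ 15 := pow_le_pow_right₀ hb1 (by norm_num)
  calc Real.exp (-(n ^ 2 / D₂)) * Dinf ≤ Real.exp (-(n ^ 2 / D₂)) * Real.exp (17 * b) := by gcongr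
    _ = Real.exp (-(n ^ 2 / D₂) + 17 * b) := (Real.exp_add _ _).symm
    _ ≤ Real.exp (-(2 * b ^ 8)) := by
        gcongr
        linarith [h.le_size_sq_div]

variable {m : ℕ}

lemma two_mul_pow_eight_le (h : IsSubcritical b n D₂ Dinf) (hm : b ^ 12 ≤ m) :
    2 * b ^ 8 ≤ 1 / (4 * b) * m / 4 := by
  have hb := h.base_pos
  calc 2 * b ^ 8 ≤ b ^ 11 / 16 := by linarith [h.mul_pow_eight_le]
    _ = 1 / (4 * b) * b ^ 12 / 4 := by
        field_simp
        norm_num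
    _ ≤ 1 / (4 * b) * m / 4 := by gcongr

lemma mul_lt_Dinf_mul (h : IsSubcritical b n D₂ Dinf) (hm : (m : ℝ) ≤ 2 * b ^ 12) :
    139264 * (m : ℝ) < Dinf * (1 / (4 * b) / 4) := by
  have hb := h.base_pos
  have hb15 : 256 * b ^ 12 ≤ b ^ 15 :=
    calc 256 * b ^ 12 ≤ b ^ 3 * b ^ 12 := by
          gcongr
          exact h.le_base.trans (le_self_pow₀ (by linarith [h.le_base]) (by norm_num))
      _ = b ^ 15 := by ring
  calc 139264 * (m : ℝ) ≤ 139264 * (2 * b ^ 12) := by gcongr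
    _ < 1000000000 * b ^ 15 / 16 := by linarith [pow_pos hb 12]
    _ = 1000000000 * n * (1 / (4 * b) / 4) := by
        rw [h.size_eq]
        field_simp
        norm_num
    _ ≤ Dinf * (1 / (4 * b) / 4) := by
        gcongr
        exact h.le_Dinf

lemma sum_failure_le (h : IsSubcritical b n D₂ Dinf) {N : ℕ} (hN : (N : ℝ) = n)
    (hm : b ^ 12 ≤ m) {S₁ S₂ V₁ V₂ : ℝ} (hV₁ : 0 < V₁) (hV₂ : 0 < V₂) (hS₁ : S₁ / V₁ = Dinf)
    (hS₂ : S₂ / V₂ = Dinf ^ 2 / D₂) :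
    25 ^ N * (4 * Real.exp (-((1 / 400) ^ 2 * S₁ / (1024 * V₁)))) +
      25 ^ N * (4 * Real.exp (-((1 / 400) ^ 2 * S₂ / (1024 * V₂)))) +
      2 * Real.exp (-(n ^ 2 / D₂)) * (S₁ / V₁) + Real.exp (-(1 / (4 * b) * m / 4)) +
      2 ^ m * Real.exp (-(4 * m)) + 8 ^ m * Real.exp (-(4 * m)) ≤ Real.exp (-b ^ 8) := by
  have hb1 : 1 ≤ b := by linarith [h.le_base]
  have hpow := h.mul_pow_eight_le
  have hb16 : 2 * b ^ 8 ≤ 2 * (N : ℝ) := by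
    rw [hN, h.size_eq]
    gcongr
    norm_num
  have hgram : 4 * Real.exp (-(2 * N)) ≤ 4 * Real.exp (-(2 * b ^ 8)) := by gcongr
  have h₁ := gram_failure_le hV₁ (N := N) (by rw [hS₁, hN]; exact h.le_Dinf)
  have h₂ := gram_failure_le hV₂ (N := N) (by
    rw [hS₂, le_div_iff₀ h.D₂_pos, hN]
    linarith [h.le_Dinf_sq, mul_pos h.D₂_pos h.size_pos])
  have h₃ := h.exp_neg_mul_Dinf_le
  have h₄ : Real.exp (-(1 / (4 * b) * m / 4)) ≤ Real.exp (-(2 * b ^ 8)) := by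
    gcongr
    exact h.two_mul_pow_eight_le hm
  have h₅ : (8 : ℝ) ^ m * Real.exp (-(4 * m)) ≤ Real.exp (-(2 * b ^ 8)) := by
    refine (pow_mul_exp_neg_le (by norm_num) eight_le_exp_three m _).trans (Real.exp_le_exp.2 ?_)
    linarith [pow_le_pow_right₀ hb1 (show 11 ≤ 12 by norm_num), pow_nonneg h.base_pos.le 8]
  have h₆ : (2 : ℝ) ^ m * Real.exp (-(4 * m)) ≤ 8 ^ m * Real.exp (-(4 * m)) := by
    gcongr
    norm_num
  have hsixteen : 16 * Real.exp (-(2 * b ^ 8)) ≤ Real.exp (-b ^ 8) := by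
    have hb8 : b ≤ b ^ 8 := le_self_pow₀ hb1 (by norm_num)
    calc 16 * Real.exp (-(2 * b ^ 8)) ≤ Real.exp (b ^ 8) * Real.exp (-(2 * b ^ 8)) := by
          gcongr
          linarith [Real.add_one_le_exp (b ^ 8), h.le_base]
      _ = Real.exp (-b ^ 8) := by
          rw [← Real.exp_add]
          congr 1
          ring
  rw [hS₁]
  linarith [Real.exp_pos (-(2 * b ^ 8))]

end IsSubcritical

end Parameters

section Labels

lemma HasNonnegDual.submatrix_equiv {ι ι' κ : Type*} [Fintype ι] [Fintype ι'] [Fintype κ]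
    {X : Matrix ι κ ℝ} (h : HasNonnegDual X) (e : ι' ≃ ι) :
    HasNonnegDual (X.submatrix e id) := by
  obtain ⟨β, hβ, hX⟩ := h
  refine ⟨β ∘ e, fun i => hβ (e i), ?_⟩
  rw [submatrix_vecMul_equiv, Function.comp_assoc, e.self_comp_symm, Function.comp_id]
  exact funext fun i => congrFun hX (e i)

lemma IsTypical.not_svpholds {T A : Type*} [Fintype T] [Fintype A] [DecidableEq T] [DecidableEq A]
    {n d : ℕ} {lam : Fin d → ℝ} {M p : ℝ} {Z : Matrix (Fin n) (Fin d) ℝ} {y : Fin n → ℝ}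
    {e : T ⊕ A ≃ Fin n}
    (h : IsTypical lam M p ((diagonal y * Z).submatrix e id)) (hlam : ∀ j, 0 ≤ lam j)
    (hL : 0 < ∑ j, lam j) (hM0 : 0 ≤ M) (hp : 1 ≤ p * Fintype.card A / 4)
    (hMp : 139264 * M * (Fintype.card A : ℝ) ^ 2 < (∑ j, lam j) * (p * Fintype.card A / 4)) :
    ¬ SVPholds (scaled lam Z) y := fun hsvp => by
  have hscaled : diagonal y * scaled lam Z = scaled lam (diagonal y * Z) :=
    (Matrix.mul_assoc _ _ _).symm
  have hdual : HasNonnegDual (diagonal y * scaled lam Z) := by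
    refine hasNonnegDual_of_svpholds hsvp fun x hx => ?_
    have hxe : (x ∘ e) ᵥ* scaled lam ((diagonal y * Z).submatrix e id) = 0 := by
      change (x ∘ e) ᵥ* (scaled lam (diagonal y * Z)).submatrix e id = 0
      rw [← hscaled, submatrix_vecMul_equiv, Function.comp_assoc, e.self_comp_symm,
        Function.comp_id, Function.comp_id, hx]
    have hzero := h.gramConcentrated.eq_zero_of_vecMul_scaled_eq_zero (by norm_num) hlam hL hxe
    exact funext fun i => by simpa using congrFun hzero (e.symm i)
  rw [hscaled] at hdual
  exact h.not_hasNonnegDual hlam hL hM0 hp hMp (hdual.submatrix_equiv e)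

end Labels

section DimensionProxies

variable {d : ℕ} {lam : Fin d → ℝ}

lemma sum_pos_and_iSup_pos_of_dimInf_pos (hlam : ∀ j, 0 ≤ lam j) (h : 0 < dimInf lam) :
    0 < ∑ j, lam j ∧ 0 < ⨆ j, lam j :=
  (div_pos_iff.1 h).resolve_right fun hneg =>
    (Finset.sum_nonneg fun j _ => hlam j).not_gt hneg.1

lemma dimInf_le_dim2 (hlam : ∀ j, 0 < lam j) : dimInf lam ≤ dim2 lam := by
  rcases isEmpty_or_nonempty (Fin d) with hd | ⟨⟨j₀⟩⟩
  · simp [dimInf, dim2]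
  have hsup (j : Fin d) : lam j ≤ ⨆ j, lam j := le_ciSup (Set.finite_range _).bddAbove j
  have hsum : 0 < ∑ j, lam j := Finset.sum_pos (fun j _ => hlam j) ⟨j₀, Finset.mem_univ _⟩
  have hsq : 0 < ∑ j, lam j ^ 2 :=
    Finset.sum_pos (fun j _ => pow_pos (hlam j) 2) ⟨j₀, Finset.mem_univ _⟩
  rw [dimInf, dim2, div_le_div_iff₀ ((hlam j₀).trans_le (hsup j₀)) hsq, sq, mul_assoc]
  gcongr
  rw [Finset.sum_mul]
  refine Finset.sum_le_sum fun j _ => ?_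
  rw [sq]
  exact mul_le_mul_of_nonneg_left (hsup j) (hlam j).le

lemma exists_isSubcritical {δ n D₂ Dinf : ℝ} (hδ0 : 0 < δ) (hδ : δ < 1 / 2)
    (hn : 2 ^ 130 * Real.log (1 / δ) ^ 2 ≤ n) (hle : Dinf ≤ D₂)
    (hD₂ : D₂ ≤ 1 / 16000000 * n * Real.log n) (hDinf : 2000000000 * n * Real.log (1 / δ) ≤ Dinf)
    (hsq : 2000000000 * D₂ * n ≤ Dinf ^ 2) :
    ∃ b, IsSubcritical b n D₂ Dinf ∧ Real.exp (-b ^ 8) ≤ δ := by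
  have hlog : 1 / 2 < Real.log (1 / δ) :=
    calc (1 / 2 : ℝ) < Real.log 2 := by linarith [Real.log_two_gt_d9]
      _ ≤ Real.log (1 / δ) := by
          gcongr
          rw [le_div_iff₀ hδ0]
          linarith
  have hn₁ : (256 : ℝ) ^ 16 ≤ n :=
    calc (256 : ℝ) ^ 16 = 2 ^ 130 * (1 / 2) ^ 2 := by norm_num
      _ ≤ 2 ^ 130 * Real.log (1 / δ) ^ 2 := by gcongr
      _ ≤ n := hn
  have hn0 : 0 < n := lt_of_lt_of_le (by norm_num) hn₁
  obtain ⟨b, hb0, hbn⟩ : ∃ b : ℝ, 0 < b ∧ b ^ 16 = n :=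
    ⟨n ^ ((16 : ℕ) : ℝ)⁻¹, Real.rpow_pos_of_pos hn0 _,
      Real.rpow_inv_natCast_pow hn0.le (by norm_num)⟩
  refine ⟨b, ⟨?_, hbn.symm, hle, ?_, ?_, hsq⟩, ?_⟩
  · exact le_of_pow_le_pow_left₀ (by norm_num) hb0.le (hn₁.trans_eq hbn.symm)
  · have hlogn : Real.log n = 16 * Real.log b := by
      rw [← hbn, Real.log_pow]
      norm_num
    rw [hlogn] at hD₂
    linarith
  · refine le_trans ?_ hDinf
    nlinarith
  · have hδb : Real.log (1 / δ) ≤ b ^ 8 := by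
      refine le_of_pow_le_pow_left₀ two_ne_zero (pow_nonneg hb0.le 8) ?_
      rw [← pow_mul, hbn]
      linarith [sq_nonneg (Real.log (1 / δ))]
    rw [one_div, Real.log_inv] at hδb
    exact (Real.le_log_iff_exp_le hδ0).1 (by linarith)

end DimensionProxies

section SupportVectorProliferation

variable {Ω : Type*} [MeasurableSpace Ω] {μ : Measure Ω} {n d : ℕ} {lam : Fin d → ℝ} {b : ℝ}

lemma IsSubcritical.measureReal_not_isTypical_le {T A : Type*} [Fintype T] [Fintype A]
    [DecidableEq T] [DecidableEq A] {Z : Ω → Matrix (T ⊕ A) (Fin d) ℝ}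
    (h : IsSubcritical b n (dim2 lam) (dimInf lam)) (hZ : IsStdSubgaussianMatrix Z μ)
    (hlam : ∀ j, 0 < lam j) (hcard : Fintype.card (T ⊕ A) = n)
    (hA₁ : b ^ 12 ≤ Fintype.card A) (hA₂ : (Fintype.card A : ℝ) ≤ n / 2) :
    μ.real {ω | ¬ IsTypical lam (⨆ j, lam j) (1 / (4 * b)) (Z ω)} ≤ Real.exp (-b ^ 8) := by
  have hn : (0 : ℝ) < n := h.size_pos
  have hD₂ := h.D₂_pos
  obtain ⟨hL, hM0⟩ := sum_pos_and_iSup_pos_of_dimInf_pos (fun j => (hlam j).le)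
    (by linarith [h.le_Dinf] : 0 < dimInf lam)
  have hS : 0 < ∑ j, lam j ^ 2 := (div_pos_iff_of_pos_left (pow_pos hL 2)).1 hD₂
  have hM (j : Fin d) : lam j ≤ ⨆ j, lam j := le_ciSup (Set.finite_range _).bddAbove j
  have hT : (Fintype.card T : ℝ) + Fintype.card A = n := by
    rw [← hcard, Fintype.card_sum, Nat.cast_add]
  have hTn : (Fintype.card T : ℝ) ≤ n := by linarith [pow_pos h.base_pos 12]
  have hTpos : (0 : ℝ) < Fintype.card T := by linarith
  have hdiv : (Fintype.card T : ℝ) * (∑ j, lam j ^ 2) / (∑ j, lam j) ^ 2 =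
      Fintype.card T / dim2 lam := by
    rw [dim2, div_div_eq_mul_div]
  have hL_eq : ∑ j, lam j = dimInf lam * ⨆ j, lam j := (div_mul_cancel₀ _ hM0.ne').symm
  have hQ : (n : ℝ) ^ 2 / dim2 lam ≤ (n / dim2 lam / 12288 * ∑ j, lam j) ^ 2 /
      (2 * Fintype.card T * (⨆ j, lam j) ^ 2) :=
    calc (n : ℝ) ^ 2 / dim2 lam ≤ (n / dim2 lam / 12288 * dimInf lam) ^ 2 / (2 * n) :=
          h.size_sq_div_le
      _ ≤ (n / dim2 lam / 12288 * dimInf lam) ^ 2 / (2 * Fintype.card T) := by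
          gcongr
      _ = _ := by
          rw [hL_eq]
          field_simp
  refine (hZ.measureReal_not_isTypical_le hlam hL hM0 hM (div_pos hn hD₂) h.three_mul_size_div_le
    ?_ ?_ h.one_div_le_exp (h.le_size_sq_div.trans' ?_) hQ).trans ?_
  · rw [hdiv, div_right_comm]
    gcongr
    linarith
  · rw [hdiv]
    gcongr
  · have := one_le_pow₀ (n := 15) (by linarith [h.le_base] : 1 ≤ b)
    linarith
  · exact h.sum_failure_le (by rw [hcard]) hA₁ hM0 (pow_pos hM0 2) rfl (by
      rw [dim2, dimInf]
      field_simp)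

lemma IsSubcritical.exists_card_test {D₂ Dinf : ℝ} (h : IsSubcritical b n D₂ Dinf) :
    ∃ n' m : ℕ, n' + m = n ∧ b ^ 12 ≤ m ∧ (m : ℝ) ≤ 2 * b ^ 12 ∧ (m : ℝ) ≤ n / 2 := by
  have hb12 : 1 ≤ b ^ 12 := one_le_pow₀ (by linarith [h.le_base])
  have hm : (⌈b ^ 12⌉₊ : ℝ) ≤ 2 * b ^ 12 := by
    linarith [Nat.ceil_lt_add_one (zero_le_one.trans hb12)]
  have hn : 4 * b ^ 12 ≤ (n : ℝ) :=
    calc 4 * b ^ 12 ≤ b ^ 4 * b ^ 12 := by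
          gcongr
          linarith [h.le_base.trans (le_self_pow₀ (by linarith [h.le_base]) four_ne_zero)]
      _ = (n : ℝ) := by
          rw [h.size_eq]
          ring
  have hmn : ⌈b ^ 12⌉₊ ≤ n := by
    rw [Nat.ceil_le]
    linarith
  exact ⟨n - ⌈b ^ 12⌉₊, ⌈b ^ 12⌉₊, Nat.sub_add_cancel hmn, Nat.le_ceil _, hm, by linarith⟩

lemma IsSubcritical.measureReal_svpholds_le {Z : Ω → Matrix (Fin n) (Fin d) ℝ} {y : Fin n → ℝ}
    (h : IsSubcritical b n (dim2 lam) (dimInf lam)) (hZ : IsStdSubgaussianMatrix Z μ)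
    (hlam : ∀ j, 0 < lam j) (hy : ∀ i, y i = 1 ∨ y i = -1) :
    μ.real {ω | SVPholds (scaled lam (Z ω)) y} ≤ Real.exp (-b ^ 8) := by
  have := hZ.isProbabilityMeasure
  have hb := h.base_pos
  obtain ⟨n', m, hn, hm₁, hm₂, hmn⟩ := h.exists_card_test
  let e : Fin n' ⊕ Fin m ≃ Fin n := finSumFinEquiv.trans (finCongr hn)
  have hZ' : IsStdSubgaussianMatrix (fun ω => (diagonal y * Z ω).submatrix e id) μ := by
    have hinj : Function.Injective (Prod.map e (id : Fin d → Fin d)) :=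
      e.injective.prodMap Function.injective_id
    simpa [IsStdSubgaussianMatrix, diagonal_mul] using
      (hZ.sign_mul (s := fun p => y p.1) fun p => hy p.1).precomp hinj
  obtain ⟨hL, hM0⟩ := sum_pos_and_iSup_pos_of_dimInf_pos (fun j => (hlam j).le)
    (by linarith [h.le_Dinf, h.size_pos] : 0 < dimInf lam)
  have hm0 : (0 : ℝ) < m := (pow_pos hb 12).trans_le hm₁
  have hMp : 139264 * (⨆ j, lam j) * (m : ℝ) ^ 2 < (∑ j, lam j) * (1 / (4 * b) * m / 4) :=
    calc 139264 * (⨆ j, lam j) * (m : ℝ) ^ 2 = 139264 * m * ((⨆ j, lam j) * m) := by ring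
      _ < dimInf lam * (1 / (4 * b) / 4) * ((⨆ j, lam j) * m) :=
          mul_lt_mul_of_pos_right (h.mul_lt_Dinf_mul hm₂) (mul_pos hM0 hm0)
      _ = (∑ j, lam j) * (1 / (4 * b) * m / 4) := by
          rw [dimInf]
          field_simp
  have hp : 1 ≤ 1 / (4 * b) * m / 4 := by
    linarith [h.two_mul_pow_eight_le hm₁, one_le_pow₀ (n := 8) (by linarith [h.le_base] : 1 ≤ b)]
  refine (measureReal_mono fun ω hω htyp => ?_).trans
    (h.measureReal_not_isTypical_le hZ' hlam (by simp [hn]) (by simpa) (by simpa))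
  exact htyp.not_svpholds (fun j => (hlam j).le) hL hM0.le (by rwa [Fintype.card_fin])
    (by rwa [Fintype.card_fin]) hω

lemma isStdSubgaussianMatrix_of_isAnisoSample {Z X : Ω → Matrix (Fin n) (Fin d) ℝ}
    {y : Fin n → ℝ} (h : IsAnisoSample μ lam Z X y) : IsStdSubgaussianMatrix Z μ where
  measurable p := h.meas p.1 p.2
  iIndepFun := h.indep
  integral_eq_zero p := h.mean_zero p.1 p.2
  integral_sq_eq_one p := h.var_one p.1 p.2
  hasSubgaussianMGF p := ⟨h.subg_int p.1 p.2, fun t => by simpa [mgf] using h.subg p.1 p.2 t⟩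

lemma eq_scaled_of_isAnisoSample {Z X : Ω → Matrix (Fin n) (Fin d) ℝ} {y : Fin n → ℝ}
    (h : IsAnisoSample μ lam Z X y) (ω : Ω) : X ω = scaled lam (Z ω) := by
  ext i j
  rw [h.X_eq, scaled, mul_diagonal, mul_comm]

end SupportVectorProliferation

end SVProliferation

/-- Theorem 3: lower bound on the SVP threshold for anisotropic subgaussian samples. -/
theorem stmt9 :
    ∃ C₁ > (0 : ℝ), ∃ C₂ > (0 : ℝ), ∃ C₃ > (0 : ℝ), ∃ C₄ > (0 : ℝ),
      ∀ (Ω : Type*) (_ : MeasurableSpace Ω) (μ : Measure Ω), IsProbabilityMeasure μ →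
      ∀ (n d : ℕ), 0 < n → 0 < d →
      ∀ (lam : Fin d → ℝ) (Z X : Ω → Matrix (Fin n) (Fin d) ℝ) (y : Fin n → ℝ),
        IsAnisoSample μ lam Z X y →
      ∀ δ : ℝ, 0 < δ → δ < 1 / 2 →
        C₁ * (Real.log (1 / δ)) ^ 2 ≤ n →
        dim2 lam ≤ C₂ * n * Real.log n →
        C₃ * n * Real.log (1 / δ) ≤ dimInf lam →
        C₄ * dim2 lam * n ≤ (dimInf lam) ^ 2 →
        μ {ω | SVPholds (X ω) y} ≤ ENNReal.ofReal δ := by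
  refine ⟨2 ^ 130, by norm_num, 1 / 16000000, by norm_num, 2000000000, by norm_num,
    2000000000, by norm_num, ?_⟩
  intro Ω _ μ _ n d _ _ lam Z X y hsample δ hδ0 hδ hn hdim2 hdimInf hsq
  obtain ⟨b, hsub, hbδ⟩ := SVProliferation.exists_isSubcritical hδ0 hδ hn
    (SVProliferation.dimInf_le_dim2 hsample.lam_pos) hdim2 hdimInf hsq
  have hZ := SVProliferation.isStdSubgaussianMatrix_of_isAnisoSample hsample
  rw [← ofReal_measureReal]
  refine ENNReal.ofReal_le_ofReal (le_trans ?_ hbδ)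
  simp_rw [SVProliferation.eq_scaled_of_isAnisoSample hsample]
  exact hsub.measureReal_svpholds_le hZ hsample.lam_pos hsample.labels

end
end
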